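/- For all real x ≥ exp(2000), |ψ(x) − x| / x ≤ 1.570·10^{−12}. -/

import Mathlib

/-- The Chebyshev function `ψ(x) = ∑_{n ≤ x} Λ(n)`. -/
noncomputable def psi (x : ℝ) : ℝ := ∑ n ∈ Finset.Icc 1 ⌊x⌋₊, ArithmeticFunction.vonMangoldt n


namespace PsiEps
open Complex Filter Topology

lemma exists_div_pow {f : ℂ → ℂ} (hf : Differentiable ℂ f) (h0 : f 0 ≠ 0) (a : ℂ) :
    ∃ g : ℂ → ℂ, Differentiable ℂ g ∧ g a ≠ 0 ∧
      ∀ z, f z = (z - a) ^ (analyticOrderNatAt f a) * g z := by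
  have han : AnalyticAt ℂ f a := hf.analyticAt a
  have hne : analyticOrderAt f a ≠ ⊤ := by
    rw [Ne, AnalyticOnNhd.analyticOrderAt_eq_top_iff_eq_zero a (fun z => hf.analyticAt z)]
    intro h; exact h0 (by rw [h]; rfl)
  obtain ⟨g0, hg0, hg0a, hloc⟩ := (han.analyticOrderNatAt_eq_iff hne).1 rfl
  set m := analyticOrderNatAt f a
  refine ⟨Function.update (fun z => f z / (z - a) ^ m) a (g0 a), ?_, by simpa using hg0a, ?_⟩
  · intro z
    by_cases hz : z = a
    · subst hz
      have : Function.update (fun w => f w / (w - z) ^ m) z (g0 z) =ᶠ[𝓝 z] g0 := by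
        filter_upwards [hloc] with w hw
        by_cases hwz : w = z
        · subst hwz; simp
        · rw [Function.update_of_ne hwz, hw, smul_eq_mul]
          have : (w - z) ^ m ≠ 0 := pow_ne_zero _ (sub_ne_zero.2 hwz)
          field_simp
      exact (this.differentiableAt_iff).2 hg0.differentiableAt
    · have : Function.update (fun w => f w / (w - a) ^ m) a (g0 a) =ᶠ[𝓝 z]
          fun w => f w / (w - a) ^ m := by
        filter_upwards [isOpen_ne.mem_nhds hz] with w hw
        rw [Function.update_of_ne hw]
      refine (this.differentiableAt_iff).2 ?_
      have hh : (z - a) ^ m ≠ 0 := pow_ne_zero _ (sub_ne_zero.2 hz)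
      exact (hf z).div (by fun_prop) hh
  · intro z
    by_cases hz : z = a
    · subst hz
      have := hloc.self_of_nhds
      simpa using this
    · rw [Function.update_of_ne hz]
      have hh : (z - a) ^ m ≠ 0 := pow_ne_zero _ (sub_ne_zero.2 hz)
      field_simp

lemma exists_factor {f : ℂ → ℂ} (hf : Differentiable ℂ f) (h0 : f 0 ≠ 0) (S : Finset ℂ)
    (hS : ∀ a ∈ S, f a = 0) :
    ∃ g : ℂ → ℂ, Differentiable ℂ g ∧ (∀ a ∈ S, g a ≠ 0) ∧
      ∀ z, f z = (∏ a ∈ S, (1 - z / a) ^ (analyticOrderNatAt f a)) * g z := by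
  classical
  induction S using Finset.induction_on with
  | empty => exact ⟨f, hf, by simp, by simp⟩
  | insert b S hb ih =>
    obtain ⟨g, hg, hgS, hfac⟩ := ih (fun a ha => hS a (Finset.mem_insert_of_mem ha))
    have hb0 : b ≠ 0 := by
      rintro rfl; exact h0 (hS 0 (Finset.mem_insert_self _ _))
    have hS0 : ∀ a ∈ S, a ≠ 0 := by
      rintro a ha rfl; exact h0 (hS 0 (Finset.mem_insert_of_mem ha))
    have hg0 : g 0 ≠ 0 := by
      intro h; apply h0; rw [hfac, h, mul_zero]
    obtain ⟨g1, hg1, hg1b, hfac1⟩ := exists_div_pow hg hg0 b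
    have hord : analyticOrderNatAt f b = analyticOrderNatAt g b := by
      have hfe : f = (fun z => ∏ a ∈ S, (1 - z / a) ^ (analyticOrderNatAt f a)) * g := by
        funext z; exact hfac z
      have hd : Differentiable ℂ (fun z => ∏ a ∈ S, (1 - z / a) ^ (analyticOrderNatAt f a)) := by
        fun_prop
      have hne : (∏ a ∈ S, (1 - b / a) ^ (analyticOrderNatAt f a)) ≠ 0 := by
        rw [Finset.prod_ne_zero_iff]
        intro a ha
        apply pow_ne_zero
        rw [sub_ne_zero]
        intro h
        have : b = a := by
          field_simp [hS0 a ha] at h; exact h.symm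
        exact hb (this ▸ ha)
      unfold analyticOrderNatAt
      conv_lhs => rw [hfe]
      rw [analyticOrderAt_mul (hd.analyticAt b) (hg.analyticAt b),
        ((hd.analyticAt b).analyticOrderAt_eq_zero).2 hne, zero_add]
    refine ⟨fun z => (-b) ^ (analyticOrderNatAt f b) * g1 z, by fun_prop, ?_, ?_⟩
    · intro a ha
      have hbb : (-b) ^ (analyticOrderNatAt f b) ≠ 0 := pow_ne_zero _ (neg_ne_zero.2 hb0)
      apply mul_ne_zero hbb
      rcases Finset.mem_insert.1 ha with rfl | ha
      · exact hg1b
      · intro h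
        apply hgS a ha
        rw [hfac1, h, mul_zero]
    · intro z
      rw [Finset.prod_insert hb]
      conv_lhs => rw [hfac z, hfac1 z, ← hord]
      have : (z - b) = (1 - z / b) * (-b) := by field_simp; ring
      rw [this, mul_pow]
      ring

lemma zeros_finite {f : ℂ → ℂ} (hf : Differentiable ℂ f) (h0 : f 0 ≠ 0) (R : ℝ) :
    {a : ℂ | f a = 0 ∧ ‖a‖ ≤ R}.Finite := by
  by_contra hinf
  obtain ⟨x, -, hx⟩ := Set.Infinite.exists_accPt_of_subset_isCompact (s := {a : ℂ | f a = 0 ∧ ‖a‖ ≤ R})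
    (K := Metric.closedBall 0 R) hinf (isCompact_closedBall 0 R)
    (fun a ha => by simpa using ha.2)
  have hfr : ∃ᶠ z in 𝓝[≠] x, f z = 0 := by
    rw [accPt_iff_frequently_nhdsNE] at hx
    exact hx.mono (fun z hz => hz.1)
  have := AnalyticOnNhd.eqOn_zero_of_preconnected_of_frequently_eq_zero
    (f := f) (U := Set.univ) (fun z _ => hf.analyticAt z) isPreconnected_univ (Set.mem_univ x) hfr
  exact h0 (this (Set.mem_univ 0))

lemma partial_frac_bound {f : ℂ → ℂ} (hf : Differentiable ℂ f) (h0 : f 0 ≠ 0) {R M0 : ℝ}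
    (hR : 0 < R) (hM0 : ∀ z : ℂ, ‖z‖ = 2 * R → ‖f z‖ ≤ Real.exp M0) (S : Finset ℂ)
    (hS : ∀ a, a ∈ S ↔ f a = 0 ∧ ‖a‖ ≤ R) {z : ℂ} (hz : ‖z‖ < R / 4) (hfz : f z ≠ 0) :
    ‖logDeriv f z - logDeriv f 0 -
      ∑ a ∈ S, (analyticOrderNatAt f a : ℂ) * (1 / (z - a) + 1 / a)‖ ≤
      64 * (|M0| + |Real.log ‖f 0‖| + 1) / R ^ 2 * ‖z‖ := by
  obtain ⟨g, hg, hgS, hfac⟩ := exists_factor hf h0 S (fun a ha => ((hS a).1 ha).1)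
  have hS0 : ∀ a ∈ S, a ≠ 0 := by
    rintro a ha rfl; exact h0 ((hS 0).1 ha).1
  have hg0 : g 0 = f 0 := by rw [hfac 0]; simp
  have hgball : ∀ w : ℂ, ‖w‖ ≤ R → g w ≠ 0 := by
    intro w hw hgw
    have hfw : f w = 0 := by rw [hfac, hgw, mul_zero]
    exact hgS w ((hS w).2 ⟨hfw, hw⟩) hgw
  have hgb : ∀ w ∈ closure (Metric.ball (0:ℂ) (2 * R)), ‖g w‖ ≤ Real.exp M0 := by
    intro w hw
    refine Complex.norm_le_of_forall_mem_frontier_norm_le Metric.isBounded_ball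
      hg.diffContOnCl (fun v hv => ?_) hw
    rw [frontier_ball _ (by positivity)] at hv
    have hv' : ‖v‖ = 2 * R := by simpa using hv
    have h1 := hM0 v hv'
    rw [hfac v, norm_mul] at h1
    have h2 : 1 ≤ ‖∏ a ∈ S, (1 - v / a) ^ (analyticOrderNatAt f a)‖ := by
      rw [norm_prod]
      apply Finset.one_le_prod
      intro a ha
      rw [norm_pow]
      apply one_le_pow₀
      have ha0 := hS0 a ha
      have haR := ((hS a).1 ha).2
      have hap : 0 < ‖a‖ := norm_pos_iff.2 ha0
      have h3 : 2 ≤ ‖v / a‖ := by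
        rw [norm_div, le_div_iff₀ hap, hv']; linarith
      have h4 : ‖v / a‖ - ‖(1:ℂ)‖ ≤ ‖1 - v / a‖ := by
        rw [norm_sub_rev]; exact norm_sub_norm_le _ _
      rw [norm_one] at h4; linarith
    nlinarith [norm_nonneg (g v)]
  -- logarithm
  have hq : DifferentiableOn ℂ (logDeriv g) (Metric.ball 0 R) := by
    have : logDeriv g = fun w => deriv g w / g w := by funext w; rfl
    rw [this]
    have hdg : Differentiable ℂ (deriv g) := fun w => (hg.analyticAt w).deriv.differentiableAt
    exact fun w hw => ((hdg w).div (hg w)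
      (hgball w (by have := mem_ball_zero_iff.1 hw; linarith))).differentiableWithinAt
  obtain ⟨H, hH0, hH⟩ := (DifferentiableOn.isExactOn_ball hq).with_val_at 0 0
  set M := |M0| + |Real.log ‖f 0‖| + 1 with hMdef
  have hMpos : 0 < M := by positivity
  have hexp : ∀ w ∈ Metric.ball (0:ℂ) R, g w = g 0 * exp (H w) := by
    intro w hw
    have hconst : ∀ w ∈ Metric.ball (0:ℂ) R, HasDerivAt (fun w => g w * exp (-H w)) 0 w := by
      intro w hw
      have hgw := hgball w (by have := mem_ball_zero_iff.1 hw; linarith)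
      have h1 := ((hg w).hasDerivAt).mul ((hH w hw).neg.cexp)
      have h3 : deriv g w * cexp ((-H) w) + g w * (cexp ((-H) w) * -logDeriv g w) = 0 := by
        rw [logDeriv_apply]; field_simp; ring
      rw [h3] at h1
      exact h1
    have h2 := (convex_ball (0:ℂ) R).is_const_of_fderivWithin_eq_zero (𝕜 := ℂ)
      (f := fun w => g w * exp (-H w))
      (fun v hv => (hconst v hv).differentiableAt.differentiableWithinAt)
      (fun v hv => by
        rw [fderivWithin_of_isOpen Metric.isOpen_ball hv]
        ext; simp [(hconst v hv).deriv]) hw (Metric.mem_ball_self hR)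
    simp only [hH0, neg_zero, exp_zero, mul_one] at h2
    rw [← h2, mul_assoc, ← exp_add]; simp
  have hre : Set.MapsTo H (Metric.ball 0 R) {z | z.re ≤ M} := by
    intro w hw
    have h1 := hgb w (subset_closure (Metric.ball_subset_ball (by linarith) hw))
    rw [hexp w hw, norm_mul, norm_exp, hg0] at h1
    have hpos : 0 < ‖f 0‖ := norm_pos_iff.2 h0
    have h2 := Real.log_le_log (by positivity) h1
    rw [Real.log_mul hpos.ne' (Real.exp_ne_zero _), Real.log_exp, Real.log_exp] at h2
    change (H w).re ≤ M
    have := le_abs_self M0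
    have := neg_abs_le (Real.log ‖f 0‖)
    linarith
  have hHd : DifferentiableOn ℂ H (Metric.ball 0 R) :=
    fun w hw => (hH w hw).differentiableAt.differentiableWithinAt
  have hHb : ∀ w : ℂ, ‖w‖ ≤ R / 2 → ‖H w‖ ≤ 2 * M := by
    intro w hw
    have h1 := Complex.borelCaratheodory_zero hMpos hHd hre hR
      (z := w) (mem_ball_zero_iff.2 (by linarith)) hH0
    refine h1.trans ?_
    rw [div_le_iff₀ (by linarith)]
    nlinarith
  have hqb : ∀ w : ℂ, ‖w‖ < R / 4 → ‖logDeriv g w‖ ≤ 8 * M / R := by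
    intro w hw
    rw [← (hH w (mem_ball_zero_iff.2 (by linarith))).deriv]
    have := Complex.norm_deriv_le_of_forall_mem_sphere_norm_le (c := w) (R := R / 4) (C := 2 * M)
      (f := H) (by positivity) ?_ ?_
    · refine this.trans (le_of_eq ?_); field_simp; norm_num
    · apply DifferentiableOn.diffContOnCl
      rw [closure_ball _ (by positivity)]
      apply hHd.mono
      intro v hv
      rw [mem_closedBall_iff_norm] at hv
      rw [mem_ball_zero_iff]
      have := norm_le_norm_add_norm_sub' v w
      linarith
    · intro v hv
      apply hHb
      rw [mem_sphere_iff_norm] at hv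
      have := norm_le_norm_add_norm_sub' v w
      linarith
  have hmain : dist (logDeriv g z) (logDeriv g 0) ≤ (16 * M / R) / (R / 4) * dist z 0 := by
    apply Complex.dist_le_div_mul_dist_of_mapsTo_ball
    · exact hq.mono (Metric.ball_subset_ball (by linarith))
    · intro w hw
      rw [mem_closedBall_iff_norm]
      have h1 := hqb w (mem_ball_zero_iff.1 hw)
      have h2 := hqb 0 (by simpa using hR)
      calc _ ≤ ‖logDeriv g w‖ + ‖logDeriv g 0‖ := norm_sub_le _ _
        _ ≤ 8 * M / R + 8 * M / R := by linarith
        _ = 16 * M / R := by ring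
    · exact mem_ball_zero_iff.2 hz
  have hlog : ∀ w, f w ≠ 0 → logDeriv f w =
      (∑ a ∈ S, (analyticOrderNatAt f a : ℂ) * (1 / (w - a))) + logDeriv g w := by
    intro w hw
    have hfe : f = (fun z => (∏ a ∈ S, (1 - z / a) ^ (analyticOrderNatAt f a)) * g z) := by
      funext z; exact hfac z
    have hgw : g w ≠ 0 := by intro h; apply hw; rw [hfac, h, mul_zero]
    have hpw : (∏ a ∈ S, (1 - w / a) ^ (analyticOrderNatAt f a)) ≠ 0 := by
      intro h; apply hw; rw [hfac, h, zero_mul]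
    have hne : ∀ a ∈ S, (1 - w / a) ≠ 0 := by
      intro a ha h
      have ha0 := hS0 a ha
      have : w = a := by
        rw [sub_eq_zero, eq_div_iff ha0, one_mul] at h; exact h.symm
      exact hw (this ▸ ((hS a).1 ha).1)
    conv_lhs => rw [hfe]
    rw [logDeriv_mul w hpw hgw (by fun_prop) (hg w)]
    congr 1
    rw [logDeriv_prod (f := fun a z => (1 - z / a) ^ (analyticOrderNatAt f a))
      (fun a ha => pow_ne_zero _ (hne a ha)) (fun a ha => by fun_prop)]
    apply Finset.sum_congr rfl
    intro a ha
    have ha0 := hS0 a ha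
    rw [logDeriv_fun_pow (by fun_prop)]
    congr 1
    rw [logDeriv_apply]
    have hd : deriv (fun z : ℂ => 1 - z / a) w = -(1 / a) := by
      have : HasDerivAt (fun z : ℂ => 1 - z / a) (-(1 / a)) w := by
        simpa using ((hasDerivAt_id w).div_const a).const_sub 1
      exact this.deriv
    rw [hd]
    have := hne a ha
    have hwa : w - a ≠ 0 := by
      intro h; apply this; rw [sub_eq_zero.1 h, div_self ha0, sub_self]
    have hwa' : a - w ≠ 0 := by rwa [← neg_sub, neg_ne_zero]
    have e : 1 - w / a = (a - w) / a := by field_simp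
    rw [e]
    field_simp
    ring
  have hid : logDeriv f z - logDeriv f 0 -
      ∑ a ∈ S, (analyticOrderNatAt f a : ℂ) * (1 / (z - a) + 1 / a) =
      logDeriv g z - logDeriv g 0 := by
    rw [hlog z hfz, hlog 0 h0]
    have : ∑ a ∈ S, (analyticOrderNatAt f a : ℂ) * (1 / (z - a) + 1 / a) =
      ∑ a ∈ S, (analyticOrderNatAt f a : ℂ) * (1 / (z - a)) -
        ∑ a ∈ S, (analyticOrderNatAt f a : ℂ) * (1 / (0 - a)) := by
      rw [← Finset.sum_sub_distrib]
      apply Finset.sum_congr rfl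
      intro a ha
      rw [zero_sub, one_div_neg_eq_neg_one_div]; ring
    rw [this]; ring
  rw [hid, ← dist_eq_norm]
  refine hmain.trans (le_of_eq ?_)
  rw [dist_zero_right]
  field_simp
  norm_num
  ring

end PsiEps


namespace PsiEps
open Complex Filter Topology MeasureTheory
open scoped ComplexConjugate

noncomputable def xi (s : ℂ) : ℂ := s * (s - 1) * completedRiemannZeta₀ s + 1

lemma xi_diff : Differentiable ℂ xi := by
  unfold xi
  have := differentiable_completedZeta₀
  fun_prop

lemma xi_zero : xi 0 = 1 := by simp [xi]
lemma xi_one : xi 1 = 1 := by simp [xi]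

lemma xi_one_sub (s : ℂ) : xi (1 - s) = xi s := by
  simp only [xi, completedRiemannZeta₀_one_sub]; ring

lemma xi_eq {s : ℂ} (h0 : s ≠ 0) (h1 : s ≠ 1) : xi s = s * (s - 1) * completedRiemannZeta s := by
  rw [xi, completedRiemannZeta_eq]
  have : 1 - s ≠ 0 := sub_ne_zero.2 (Ne.symm h1)
  field_simp
  ring

lemma xi_eq_zeta {s : ℂ} (hs : 1 < s.re) :
    xi s = s * (s - 1) * ((Real.pi : ℂ) ^ (-s / 2) * Gamma (s / 2)) * riemannZeta s := by
  have h0 : s ≠ 0 := by rintro rfl; simp at hs; linarith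
  have h1 : s ≠ 1 := by rintro rfl; simp at hs
  rw [xi_eq h0 h1, completedZeta_eq_tsum_of_one_lt_re hs, zeta_eq_tsum_one_div_nat_cpow hs]
  ring

lemma xi_ne_zero_of_one_le_re {s : ℂ} (hs : 1 ≤ s.re) : xi s ≠ 0 := by
  by_cases h1 : s = 1
  · rw [h1, xi_one]; exact one_ne_zero
  have h0 : s ≠ 0 := by rintro rfl; simp at hs; linarith
  have hz := riemannZeta_ne_zero_of_one_le_re hs
  rw [riemannZeta_def_of_ne_zero h0] at hz
  rw [xi_eq h0 h1]
  exact mul_ne_zero (mul_ne_zero h0 (sub_ne_zero.2 h1)) (fun h => hz (by rw [h, zero_div]))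

lemma xi_zero_re {s : ℂ} (hs : xi s = 0) : 0 < s.re ∧ s.re < 1 := by
  constructor
  · by_contra h
    apply xi_ne_zero_of_one_le_re (s := 1 - s) (by simp; linarith)
    rw [xi_one_sub, hs]
  · by_contra h
    exact xi_ne_zero_of_one_le_re (s := s) (by linarith) hs

lemma xi_conj (s : ℂ) : xi (conj s) = conj (xi s) := by
  have hg : Differentiable ℂ (fun z => conj (xi (conj z))) := fun z =>
    differentiableAt_conj_conj_iff.mpr (xi_diff _)
  have heq : Set.EqOn (fun z => conj (xi (conj z))) xi Set.univ := by
    apply AnalyticOnNhd.eqOn_of_preconnected_of_eventuallyEq (z₀ := 2)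
      (fun z _ => hg.analyticAt z) (fun z _ => xi_diff.analyticAt z) isPreconnected_univ trivial
    refine eventuallyEq_of_mem
          ((isOpen_lt continuous_const continuous_re).mem_nhds (x := (2:ℂ)) (s := {z : ℂ | 1 < z.re})
            (by norm_num)) ?_
    intro z hz
    have hz' : 1 < z.re := hz
    change conj (xi (conj z)) = xi z
    rw [xi_eq_zeta (by simpa using hz'), xi_eq_zeta hz', riemannZeta_conj]
    have e1 : Gamma (conj z / 2) = conj (Gamma (z / 2)) := by
      rw [← Gamma_conj, map_div₀, map_ofNat]
    have e2 : (Real.pi : ℂ) ^ (-conj z / 2) = conj ((Real.pi : ℂ) ^ (-z / 2)) := by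
      have h := cpow_conj (Real.pi : ℂ) (-z / 2) ?_
      · rw [conj_ofReal] at h
        rw [← h, map_div₀, map_neg, map_ofNat]
      · rw [arg_ofReal_of_nonneg Real.pi_pos.le]; exact Real.pi_pos.ne
    rw [e1, e2]
    simp
  have := congrArg (starRingEnd ℂ) (heq (Set.mem_univ s))
  simpa using this

lemma lambda0_bound : ∃ K : ℝ, 0 ≤ K ∧ ∀ s : ℂ, -3 ≤ s.re → s.re ≤ 4 →
    ‖completedRiemannZeta₀ s‖ ≤ K := by
  let P := HurwitzZeta.hurwitzEvenFEPair 0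
  have hconv : ∀ s : ℂ, MellinConvergent P.f_modif s := fun s =>
    (P.isStrongFEPair_toStrongFEPair.hasMellin s).1
  have hN : ∀ s : ℂ, IntegrableOn (fun t : ℝ => t ^ (s.re - 1) * ‖P.f_modif t‖) (Set.Ioi 0) := by
    intro s
    refine (hconv s).norm.congr ?_
    filter_upwards [ae_restrict_mem measurableSet_Ioi] with t ht
    rw [norm_smul, norm_cpow_eq_rpow_re_of_pos ht]; simp
  let a : ℂ := ((-3/2 : ℝ) : ℂ)
  let b : ℂ := ((2 : ℝ) : ℂ)
  let K := ∫ t in Set.Ioi (0:ℝ), (t ^ (a.re - 1) * ‖P.f_modif t‖ + t ^ (b.re - 1) * ‖P.f_modif t‖)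
  have hK : 0 ≤ K := by
    apply setIntegral_nonneg measurableSet_Ioi
    intro t ht
    have : (0:ℝ) < t := ht
    positivity
  refine ⟨K, hK, ?_⟩
  intro s h1 h2
  have : completedRiemannZeta₀ s = mellin P.f_modif (s / 2) / 2 := rfl
  rw [this, norm_div]
  have hb : ‖mellin P.f_modif (s / 2)‖ ≤ K := by
    unfold mellin
    refine norm_integral_le_of_norm_le ((hN a).add (hN b)) ?_
    filter_upwards [ae_restrict_mem measurableSet_Ioi] with t ht
    have ht0 : (0:ℝ) < t := ht
    rw [norm_smul, norm_cpow_eq_rpow_re_of_pos ht]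
    rw [← add_mul]
    gcongr
    have e : (s / 2 - 1).re = s.re / 2 - 1 := by simp
    rw [e]
    have ea : a.re = -3/2 := ofReal_re _
    have eb : b.re = 2 := ofReal_re _
    rw [ea, eb]
    rcases le_total t 1 with h | h
    · have : t ^ (s.re / 2 - 1) ≤ t ^ ((-3/2 : ℝ) - 1) :=
        Real.rpow_le_rpow_of_exponent_ge ht0 h (by linarith)
      exact this.trans (le_add_of_nonneg_right (by positivity))
    · have : t ^ (s.re / 2 - 1) ≤ t ^ ((2 : ℝ) - 1) :=
        Real.rpow_le_rpow_of_exponent_le h (by linarith)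
      exact this.trans (le_add_of_nonneg_left (by positivity))
  have : ‖(2:ℂ)‖ = 2 := by simp
  rw [this]
  linarith

lemma norm_Gamma_le {s : ℂ} (hs : 0 < s.re) : ‖Gamma s‖ ≤ Real.Gamma s.re := by
  rw [Complex.Gamma_eq_integral hs, Real.Gamma_eq_integral hs, Complex.GammaIntegral]
  refine norm_integral_le_of_norm_le (Real.GammaIntegral_convergent hs) ?_
  filter_upwards [ae_restrict_mem measurableSet_Ioi] with t ht
  rw [norm_mul, norm_cpow_eq_rpow_re_of_pos ht]
  have : ‖cexp (-(t:ℂ))‖ = Real.exp (-t) := by rw [norm_exp]; simp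
  rw [← this]; simp

lemma norm_zeta_le {s : ℂ} (hs : 2 ≤ s.re) : ‖riemannZeta s‖ ≤ ∑' n : ℕ, 1 / (n:ℝ) ^ 2 := by
  rw [zeta_eq_tsum_one_div_nat_cpow (by linarith)]
  refine tsum_of_norm_bounded (f := fun n : ℕ => 1 / (n:ℂ) ^ s)
    (Real.summable_one_div_nat_pow.2 (by norm_num : 1 < 2)).hasSum ?_
  intro n
  rcases Nat.eq_zero_or_pos n with rfl | hn
  · have : s ≠ 0 := by rintro rfl; simp at hs; linarith
    simp [zero_cpow this]
  · rw [norm_div, norm_one, norm_natCast_cpow_of_pos hn]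
    have : (1:ℝ) ≤ n := by exact_mod_cast hn
    apply one_div_le_one_div_of_le (by positivity)
    rw [← Real.rpow_natCast]
    exact Real.rpow_le_rpow_of_exponent_le this (by exact_mod_cast hs)

lemma xi_growth : ∃ C : ℝ, 0 ≤ C ∧ ∀ s : ℂ,
    ‖xi s‖ ≤ Real.exp (C * ((1 + ‖s‖) * √(1 + ‖s‖))) := by
  obtain ⟨K, hK, hb⟩ := lambda0_bound
  set Z := ∑' n : ℕ, 1 / (n:ℝ) ^ 2
  have hZ : 0 ≤ Z := tsum_nonneg (fun n => by positivity)
  have key : ∀ s : ℂ, -3 ≤ s.re → ‖xi s‖ ≤ Real.exp ((K + Z + 4) * ((1 + ‖s‖) * √(1 + ‖s‖))) := by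
    intro s hs
    set r := 1 + ‖s‖ with hr
    have hr1 : 1 ≤ r := by linarith [norm_nonneg s]
    have hsq : 1 ≤ √r := Real.one_le_sqrt.2 hr1
    have hrr : r ≤ r * √r := le_mul_of_one_le_right (by linarith) hsq
    have hlogr : Real.log r ≤ 2 * √r := by
      have h1 : Real.log (√r) = Real.log r / 2 := Real.log_sqrt (by linarith)
      have := Real.log_le_sub_one_of_pos (x := √r) (by positivity)
      linarith
    have hr2 : r ^ 2 ≤ Real.exp (2 * r) := by
      have : r ≤ Real.exp r := by linarith [Real.add_one_le_exp r]
      calc r ^ 2 ≤ (Real.exp r) ^ 2 := by gcongr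
        _ = Real.exp (2 * r) := by rw [← Real.exp_nat_mul]; norm_num
    have hss : ‖s * (s - 1)‖ ≤ r ^ 2 := by
      rw [norm_mul, sq]
      have h1 : ‖s - 1‖ ≤ r := by
        calc _ ≤ ‖s‖ + ‖(1:ℂ)‖ := norm_sub_le _ _
          _ = r := by rw [norm_one]; ring
      have h2 : ‖s‖ ≤ r := by linarith
      gcongr
    rcases le_total s.re 4 with h4 | h4
    · have h1 := hb s hs h4
      have h2 : ‖xi s‖ ≤ r ^ 2 * K + 1 := by
        unfold xi
        calc _ ≤ ‖s * (s - 1) * completedRiemannZeta₀ s‖ + ‖(1:ℂ)‖ := norm_add_le _ _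
          _ ≤ _ := by rw [norm_mul, norm_one]; gcongr
      calc ‖xi s‖ ≤ r ^ 2 * K + 1 := h2
        _ ≤ r ^ 2 * (K + 1) := by nlinarith
        _ ≤ Real.exp (2 * r) * Real.exp K := by gcongr; exact Real.add_one_le_exp K
        _ = Real.exp (2 * r + K) := by rw [Real.exp_add]
        _ ≤ _ := by
          apply Real.exp_le_exp.2
          nlinarith
    · rw [xi_eq_zeta (by linarith), norm_mul, norm_mul, norm_mul (_ ^ _)]
      have hzeta := norm_zeta_le (s := s) (by linarith)
      have hpi : ‖(Real.pi : ℂ) ^ (-s / 2)‖ ≤ 1 := by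
        rw [norm_cpow_eq_rpow_re_of_pos Real.pi_pos]
        apply Real.rpow_le_one_of_one_le_of_nonpos (by linarith [Real.pi_gt_three])
        simp; linarith
      have hG : ‖Gamma (s / 2)‖ ≤ Real.exp (2 * (r * √r)) := by
        have hre : (s / 2).re = s.re / 2 := by simp
        have h1 := norm_Gamma_le (s := s / 2) (by rw [hre]; linarith)
        rw [hre] at h1
        set n := ⌈s.re / 2⌉₊
        have hn1 : s.re / 2 ≤ n := Nat.le_ceil _
        have hn2 : (n:ℝ) < s.re / 2 + 1 := Nat.ceil_lt_add_one (by linarith)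
        have hsr : s.re ≤ ‖s‖ := re_le_norm s
        have hnr : (n:ℝ) ≤ r := by linarith
        have h2 : Real.Gamma (s.re / 2) ≤ Real.Gamma (n + 1) :=
          Real.Gamma_strictMonoOn_Ici.monotoneOn (by simp; linarith) (by simp; linarith)
            (by linarith)
        rw [Real.Gamma_nat_eq_factorial] at h2
        have h3 : (n.factorial : ℝ) ≤ (n:ℝ) ^ n := by exact_mod_cast Nat.factorial_le_pow n
        have h4 : (n:ℝ) ^ n ≤ r ^ n := by gcongr
        have h5 : r ^ n ≤ Real.exp (2 * (r * √r)) := by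
          have : r ^ n = Real.exp (n * Real.log r) := by
            rw [Real.exp_nat_mul, Real.exp_log (by linarith)]
          rw [this]
          apply Real.exp_le_exp.2
          have hl : 0 ≤ Real.log r := Real.log_nonneg hr1
          calc (n:ℝ) * Real.log r ≤ r * (2 * √r) := by gcongr
            _ = _ := by ring
        linarith
      calc ‖s * (s - 1)‖ * (‖(Real.pi : ℂ) ^ (-s / 2)‖ * ‖Gamma (s / 2)‖) * ‖riemannZeta s‖
          ≤ r ^ 2 * (1 * Real.exp (2 * (r * √r))) * Z := by gcongr
        _ ≤ Real.exp (2 * r) * (1 * Real.exp (2 * (r * √r))) * Real.exp Z := by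
          gcongr
          linarith [Real.add_one_le_exp Z]
        _ = Real.exp (2 * r + 2 * (r * √r) + Z) := by rw [Real.exp_add, Real.exp_add]; ring
        _ ≤ _ := by
          apply Real.exp_le_exp.2
          nlinarith
  refine ⟨4 * (K + Z + 4), by positivity, ?_⟩
  intro s
  rcases le_total (-3) s.re with h | h
  · refine (key s h).trans (Real.exp_le_exp.2 ?_)
    have : 0 ≤ (1 + ‖s‖) * √(1 + ‖s‖) := by positivity
    nlinarith
  · rw [← xi_one_sub]
    refine (key (1 - s) (by simp; linarith)).trans (Real.exp_le_exp.2 ?_)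
    have h1 : 1 + ‖1 - s‖ ≤ 4 * (1 + ‖s‖) := by
      have : ‖1 - s‖ ≤ ‖(1:ℂ)‖ + ‖s‖ := norm_sub_le _ _
      rw [norm_one] at this
      linarith [norm_nonneg s]
    have h1' : 1 + ‖1 - s‖ ≤ 2 * (1 + ‖s‖) := by
      have : ‖1 - s‖ ≤ ‖(1:ℂ)‖ + ‖s‖ := norm_sub_le _ _
      rw [norm_one] at this
      linarith [norm_nonneg s]
    have h2 : √(1 + ‖1 - s‖) ≤ 2 * √(1 + ‖s‖) := by
      calc √(1 + ‖1 - s‖) ≤ √(2 ^ 2 * (1 + ‖s‖)) := Real.sqrt_le_sqrt (by linarith)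
        _ = 2 * √(1 + ‖s‖) := by
          rw [Real.sqrt_mul (by norm_num), Real.sqrt_sq (by norm_num)]
    have h3 : (1 + ‖1 - s‖) * √(1 + ‖1 - s‖) ≤ (2 * (1 + ‖s‖)) * (2 * √(1 + ‖s‖)) := by gcongr
    calc (K + Z + 4) * ((1 + ‖1 - s‖) * √(1 + ‖1 - s‖))
        ≤ (K + Z + 4) * ((2 * (1 + ‖s‖)) * (2 * √(1 + ‖s‖))) := by gcongr
      _ = _ := by ring

lemma order_of_factor {f g : ℂ → ℂ} (hf : Differentiable ℂ f) (hg : Differentiable ℂ g) {a : ℂ}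
    {n : ℕ} (hga : g a ≠ 0) (h : ∀ z, f z = (z - a) ^ n * g z) : analyticOrderNatAt f a = n := by
  have : analyticOrderAt f a = n :=
    ((hf.analyticAt a).analyticOrderAt_eq_natCast).2
      ⟨g, hg.analyticAt a, hga, Eventually.of_forall h⟩
  unfold analyticOrderNatAt
  rw [this]; rfl

/-- multiplicity of a zero -/
noncomputable def mul (a : ℂ) : ℕ := analyticOrderNatAt xi a

lemma mul_one_sub (a : ℂ) : mul (1 - a) = mul a := by
  obtain ⟨g, hg, hga, h⟩ := exists_div_pow xi_diff (by rw [xi_zero]; exact one_ne_zero) a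
  refine order_of_factor xi_diff (g := fun z => (-1) ^ (mul a) * g (1 - z)) (by fun_prop) ?_ ?_
  · simpa using hga
  · intro z
    rw [← xi_one_sub, h (1 - z), ← mul_assoc, ← mul_pow]
    congr 2
    ring

lemma mul_conj (a : ℂ) : mul (conj a) = mul a := by
  obtain ⟨g, hg, hga, h⟩ := exists_div_pow xi_diff (by rw [xi_zero]; exact one_ne_zero) a
  refine order_of_factor xi_diff (g := fun z => conj (g (conj z)))
    (fun z => differentiableAt_conj_conj_iff.mpr (hg _)) ?_ ?_
  · simpa using hga
  · intro z
    have : xi z = conj (xi (conj z)) := by rw [xi_conj]; simp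
    rw [this, h (conj z)]
    simp [mul]

lemma mul_pos {a : ℂ} (ha : xi a = 0) : 1 ≤ mul a := by
  obtain ⟨g, hg, hga, h⟩ := exists_div_pow xi_diff (by rw [xi_zero]; exact one_ne_zero) a
  by_contra hlt
  have h0 : mul a = 0 := by omega
  have := h a
  unfold mul at h0
  rw [h0, pow_zero, one_mul, ha] at this
  exact hga this.symm

end PsiEps


namespace PsiEps
open Complex Filter Topology MeasureTheory
open scoped ComplexConjugate

lemma mul_eq_zero {a : ℂ} (ha : xi a ≠ 0) : mul a = 0 := by
  unfold mul analyticOrderNatAt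
  rw [((xi_diff.analyticAt a).analyticOrderAt_eq_zero).2 ha]; rfl

lemma xi_zero_ne : xi 0 ≠ 0 := by rw [xi_zero]; exact one_ne_zero

noncomputable def ZR (R : ℝ) : Finset ℂ := (zeros_finite xi_diff xi_zero_ne R).toFinset

lemma mem_ZR {R : ℝ} {a : ℂ} : a ∈ ZR R ↔ xi a = 0 ∧ ‖a‖ ≤ R := by simp [ZR]

lemma partial_tendsto {z : ℂ} (hz : xi z ≠ 0) :
    Tendsto (fun R => ∑ a ∈ ZR R, (mul a : ℂ) * (1 / (z - a) + 1 / a)) atTop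
      (𝓝 (logDeriv xi z - logDeriv xi 0)) := by
  obtain ⟨C, hC, hg⟩ := xi_growth
  rw [tendsto_iff_norm_sub_tendsto_zero]
  have hb : ∀ᶠ R : ℝ in atTop, ‖(∑ a ∈ ZR R, (mul a : ℂ) * (1 / (z - a) + 1 / a)) -
      (logDeriv xi z - logDeriv xi 0)‖ ≤ 64 * ‖z‖ * (6 * C + 1) * (1 / √R) := by
    filter_upwards [eventually_ge_atTop 1, eventually_gt_atTop (4 * ‖z‖)] with R hR1 hR2
    have h := partial_frac_bound xi_diff xi_zero_ne (R := R)
      (M0 := C * ((1 + 2 * R) * √(1 + 2 * R))) (by linarith)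
      (fun w hw => by have := hg w; rwa [hw] at this) (ZR R) (fun a => mem_ZR) (z := z)
      (by linarith) hz
    rw [norm_sub_rev]
    refine h.trans ?_
    rw [xi_zero, norm_one, Real.log_one, abs_zero, abs_of_nonneg (by positivity)]
    have hs : √(1 + 2 * R) ≤ 2 * √R := by
      calc √(1 + 2 * R) ≤ √(2 ^ 2 * R) := Real.sqrt_le_sqrt (by linarith)
        _ = 2 * √R := by rw [Real.sqrt_mul (by norm_num), Real.sqrt_sq (by norm_num)]
    have hR0 : 0 < √R := Real.sqrt_pos.2 (by linarith)
    have hsq : √R ^ 2 = R := Real.sq_sqrt (by linarith)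
    have h1 : 1 ≤ R * √R := by
      have : 1 ≤ √R := Real.one_le_sqrt.2 hR1
      nlinarith
    have h2 : C * ((1 + 2 * R) * √(1 + 2 * R)) + 0 + 1 ≤ (6 * C + 1) * (R * √R) := by
      have : (1 + 2 * R) * √(1 + 2 * R) ≤ (3 * R) * (2 * √R) := by gcongr; linarith
      nlinarith
    calc 64 * (C * ((1 + 2 * R) * √(1 + 2 * R)) + 0 + 1) / R ^ 2 * ‖z‖
        ≤ 64 * ((6 * C + 1) * (R * √R)) / R ^ 2 * ‖z‖ := by gcongr
      _ = 64 * ‖z‖ * (6 * C + 1) * (1 / √R) := by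
        have hR0' : R ≠ 0 := by linarith
        field_simp
        rw [hsq]
  refine squeeze_zero' (Eventually.of_forall fun _ => norm_nonneg _) hb ?_
  have : Tendsto (fun R : ℝ => 1 / √R) atTop (𝓝 0) := by
    have := tendsto_inv_atTop_zero.comp Real.tendsto_sqrt_atTop
    simpa [Function.comp_def] using this
  simpa using this.const_mul (64 * ‖z‖ * (6 * C + 1))

lemma re_inv (w : ℂ) : (1 / w).re = w.re / ‖w‖ ^ 2 := by
  rw [one_div, inv_re, normSq_eq_norm_sq]

lemma re_inv_nonneg {w : ℂ} (h : 0 ≤ w.re) : 0 ≤ (1 / w).re := by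
  rw [re_inv]; positivity

lemma summable_base : Summable (fun a : ℂ => (mul a : ℝ) * (1 / ‖2 - a‖ ^ 2)) := by
  have h2 : xi 2 ≠ 0 := xi_ne_zero_of_one_le_re (by norm_num)
  have ht := (Complex.continuous_re.tendsto _).comp (partial_tendsto h2)
  have hbd := ht.isBoundedUnder_le
  obtain ⟨c, hc⟩ := hbd
  rw [eventually_map] at hc
  refine summable_of_sum_le (c := c) (fun a => by positivity) ?_
  intro u
  have hev : ∀ᶠ R : ℝ in atTop, ∀ a ∈ u, ‖a‖ ≤ R := by
    rw [Filter.eventually_all_finset]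
    intro a _; exact eventually_ge_atTop _
  obtain ⟨R, hR1, hR2⟩ := (hc.and hev).exists
  have hfil : ∑ a ∈ u, (mul a : ℝ) * (1 / ‖2 - a‖ ^ 2) =
      ∑ a ∈ u with xi a = 0, (mul a : ℝ) * (1 / ‖2 - a‖ ^ 2) := by
    classical
    rw [Finset.sum_filter_of_ne]
    intro a _ h
    by_contra hx
    exact h (by rw [mul_eq_zero hx]; simp)
  rw [hfil]
  simp only [Function.comp_apply, re_sum] at hR1
  refine le_trans ?_ hR1
  refine (Finset.sum_le_sum_of_subset_of_nonneg (t := ZR R) ?_ (fun _ _ _ => by positivity)).trans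
    (Finset.sum_le_sum ?_)
  · intro a ha
    rw [Finset.mem_filter] at ha
    exact mem_ZR.2 ⟨ha.2, hR2 a ha.1⟩
  · intro a ha
    have hx := xi_zero_re (mem_ZR.1 ha).1
    rw [← ofReal_natCast, re_ofReal_mul, add_re]
    have h3 := re_inv_nonneg (w := a) hx.1.le
    have h4 : 1 / ‖2 - a‖ ^ 2 ≤ (1 / (2 - a)).re := by
      rw [re_inv]
      gcongr
      simp; linarith
    gcongr
    linarith

lemma summable_of_le {g : ℂ → ℝ} (R K : ℝ) (h : ∀ a, xi a = 0 → R < ‖a‖ → |g a| ≤ K / ‖a‖ ^ 2) :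
    Summable (fun a : ℂ => (mul a : ℝ) * g a) := by
  refine Summable.of_norm_bounded_eventually (summable_base.mul_left (16 * |K|)) ?_
  rw [Filter.eventually_cofinite]
  refine (ZR (max R 1)).finite_toSet.subset ?_
  intro a ha
  simp only [Set.mem_ofPred_eq] at ha
  simp only [Finset.mem_coe]
  have hx : xi a = 0 := by
    by_contra hx
    apply ha
    rw [mul_eq_zero hx]; simp
  rw [mem_ZR]
  refine ⟨hx, ?_⟩
  by_contra hlt
  apply ha
  rw [not_le, max_lt_iff] at hlt
  have h1 := h a hx hlt.1
  rw [Real.norm_eq_abs, abs_mul, abs_of_nonneg (Nat.cast_nonneg _), mul_left_comm]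
  gcongr
  refine h1.trans ?_
  have h2 : ‖2 - a‖ ≤ 4 * ‖a‖ := by
    calc _ ≤ ‖(2:ℂ)‖ + ‖a‖ := norm_sub_le _ _
      _ ≤ _ := by simp; linarith
  have ha0 : 0 < ‖a‖ := by linarith
  have h3 : 0 < ‖2 - a‖ := by
    rw [norm_pos_iff, sub_ne_zero]
    rintro rfl
    have := (xi_zero_re hx).2
    norm_num at this
  rw [mul_one_div, div_le_div_iff₀ (by positivity) (by positivity)]
  have h4 : ‖2 - a‖ ^ 2 ≤ 16 * ‖a‖ ^ 2 := by nlinarith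
  calc K * ‖2 - a‖ ^ 2 ≤ |K| * ‖2 - a‖ ^ 2 := by gcongr; exact le_abs_self K
    _ ≤ |K| * (16 * ‖a‖ ^ 2) := by gcongr
    _ = _ := by ring

lemma summable_of_le' {g : ℂ → ℂ} (R K : ℝ) (h : ∀ a, xi a = 0 → R < ‖a‖ → ‖g a‖ ≤ K / ‖a‖ ^ 2) :
    Summable (fun a : ℂ => (mul a : ℂ) * g a) := by
  apply Summable.of_norm
  have := summable_of_le (g := fun a => ‖g a‖) R K (fun a ha hr => by
    rw [abs_of_nonneg (norm_nonneg _)]; exact h a ha hr)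
  simpa using this

lemma tendsto_ZR {f : ℂ → ℂ} (hf : Summable (fun a => (mul a : ℂ) * f a)) :
    Tendsto (fun R => ∑ a ∈ ZR R, (mul a : ℂ) * f a) atTop (𝓝 (∑' a, (mul a : ℂ) * f a)) := by
  have h1 : ∀ R, ∑ a ∈ ZR R, (mul a : ℂ) * f a =
      ∑' a, (ZR R : Set ℂ).indicator (fun a => (mul a : ℂ) * f a) a := fun R => by
    exact sum_eq_tsum_indicator _ _
  simp_rw [h1]
  refine tendsto_tsum_of_dominated_convergence hf.norm ?_ ?_
  · intro a
    refine tendsto_const_nhds.congr' ?_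
    filter_upwards [eventually_ge_atTop ‖a‖] with R hR
    by_cases hx : xi a = 0
    · rw [Set.indicator_of_mem]; exact Finset.mem_coe.2 (mem_ZR.2 ⟨hx, hR⟩)
    · rw [mul_eq_zero hx]; simp [Set.indicator, mul_eq_zero hx]
  · refine Eventually.of_forall fun R a => norm_indicator_le_norm_self _ _

lemma summable_pf (z : ℂ) : Summable (fun a : ℂ => (mul a : ℂ) * (1 / (z - a) + 1 / a)) := by
  refine summable_of_le' (2 * ‖z‖) (2 * ‖z‖) ?_
  intro a ha hr
  have ha0 : a ≠ 0 := by rintro rfl; exact xi_zero_ne ha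
  have hap : 0 < ‖a‖ := norm_pos_iff.2 ha0
  have h1 : ‖a‖ / 2 ≤ ‖z - a‖ := by
    have := norm_sub_norm_le a z
    rw [norm_sub_rev] at this
    linarith
  have hza : z - a ≠ 0 := by
    intro h; rw [h, norm_zero] at h1; linarith
  have : 1 / (z - a) + 1 / a = z / ((z - a) * a) := by field_simp; ring
  rw [this, norm_div, norm_mul, div_le_div_iff₀ (by positivity) (by positivity)]
  nlinarith [mul_nonneg (norm_nonneg z) hap.le]

lemma logDeriv_xi {z : ℂ} (hz : xi z ≠ 0) :
    logDeriv xi z = logDeriv xi 0 + ∑' a, (mul a : ℂ) * (1 / (z - a) + 1 / a) := by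
  have := tendsto_nhds_unique (partial_tendsto hz) (tendsto_ZR (summable_pf z))
  rw [← this]; ring

/-- reflection `a ↦ 1 - conj a`. -/
noncomputable def refl' : ℂ ≃ ℂ where
  toFun a := 1 - conj a
  invFun a := 1 - conj a
  left_inv a := by simp
  right_inv a := by simp

lemma tsum_refl (g : ℂ → ℝ) : ∑' a, (mul a : ℝ) * g (1 - conj a) = ∑' a, (mul a : ℝ) * g a := by
  rw [← refl'.tsum_eq (fun a => (mul a : ℝ) * g a)]
  apply tsum_congr
  intro a
  change _ = (mul (1 - conj a) : ℝ) * g (1 - conj a)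
  rw [mul_one_sub, mul_conj]

lemma summable_refl {g : ℂ → ℝ} (h : Summable (fun a => (mul a : ℝ) * g a)) :
    Summable (fun a => (mul a : ℝ) * g (1 - conj a)) := by
  have := (refl'.summable_iff (f := fun a => (mul a : ℝ) * g a)).2 h
  refine this.congr ?_
  intro a
  change (mul (1 - conj a) : ℝ) * g (1 - conj a) = _
  rw [mul_one_sub, mul_conj]

lemma summable_re (z : ℂ) : Summable (fun a : ℂ => (mul a : ℝ) * (1 / (z - a)).re) := by
  refine summable_of_le (2 * ‖z‖) (4 * (‖z‖ + 1)) ?_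
  intro a ha hr
  have ha0 : a ≠ 0 := by rintro rfl; exact xi_zero_ne ha
  have hap : 0 < ‖a‖ := norm_pos_iff.2 ha0
  have h1 : ‖a‖ / 2 ≤ ‖z - a‖ := by
    have := norm_sub_norm_le a z
    rw [norm_sub_rev] at this
    linarith
  have hzp : 0 < ‖z - a‖ := by linarith
  rw [re_inv, abs_div, abs_of_nonneg (sq_nonneg ‖z - a‖), div_le_div_iff₀ (by positivity)
    (by positivity)]
  have h2 : |(z - a).re| ≤ ‖z‖ + 1 := by
    have h3 := abs_le.1 (abs_re_le_norm z)
    have h4 := xi_zero_re ha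
    rw [sub_re, abs_le]
    constructor <;> linarith [h3.1, h3.2, h4.1, h4.2]
  have h5 : ‖a‖ ^ 2 ≤ 4 * ‖z - a‖ ^ 2 := by nlinarith
  calc |(z - a).re| * ‖a‖ ^ 2 ≤ (‖z‖ + 1) * (4 * ‖z - a‖ ^ 2) := by gcongr
    _ = _ := by ring

lemma logDeriv_xi_one_sub (z : ℂ) : logDeriv xi (1 - z) = - logDeriv xi z := by
  have h : HasDerivAt xi (-(deriv xi (1 - z))) z := by
    have h1 : HasDerivAt xi (deriv xi (1 - z)) (1 - z) := (xi_diff _).hasDerivAt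
    have h2 : HasDerivAt (fun w : ℂ => 1 - w) (-1) z := by
      simpa using (hasDerivAt_id z).const_sub 1
    have h3 := h1.comp z h2
    have h4 : xi ∘ (fun w : ℂ => 1 - w) = xi := by funext w; exact xi_one_sub w
    rw [h4] at h3
    simpa using h3
  rw [logDeriv_apply, logDeriv_apply, xi_one_sub, h.deriv]; ring

lemma re_logDeriv_xi {z : ℂ} (hz : xi z ≠ 0) :
    (logDeriv xi z).re = ∑' a, (mul a : ℝ) * (1 / (z - a)).re := by
  have key : ∀ z : ℂ, xi z ≠ 0 → (logDeriv xi z).re =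
      (logDeriv xi 0).re + ∑' a, (mul a : ℝ) * (1 / (z - a)).re
        - ∑' a, (mul a : ℝ) * (1 / (0 - a)).re := by
    intro z hz
    rw [logDeriv_xi hz, add_re, re_tsum (summable_pf z), add_sub_assoc,
      ← (summable_re z).tsum_sub (summable_re 0)]
    congr 1
    apply tsum_congr
    intro a
    rw [← ofReal_natCast, re_ofReal_mul, add_re, zero_sub, one_div_neg_eq_neg_one_div, neg_re]
    ring
  have h1 := key 1 (by rw [xi_one]; exact one_ne_zero)
  have h2 : logDeriv xi 1 = - logDeriv xi 0 := by
    have := logDeriv_xi_one_sub 0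
    simpa using this
  have h3 : ∑' a, (mul a : ℝ) * (1 / (1 - a)).re = - ∑' a, (mul a : ℝ) * (1 / (0 - a)).re := by
    rw [← tsum_refl, ← tsum_neg]
    apply tsum_congr
    intro a
    have : 1 - (1 - conj a) = conj a := by ring
    rw [this, zero_sub, re_inv, re_inv]
    simp [neg_div]
  rw [h2, neg_re, h3] at h1
  rw [key z hz]
  linarith

lemma re_logDeriv_xi_nonneg_term {z : ℂ} (hz : 1 ≤ z.re) (a : ℂ) :
    0 ≤ (mul a : ℝ) * (1 / (z - a)).re := by
  by_cases hx : xi a = 0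
  · apply mul_nonneg (Nat.cast_nonneg _)
    apply re_inv_nonneg
    rw [sub_re]; linarith [(xi_zero_re hx).2]
  · rw [mul_eq_zero hx]; simp

end PsiEps


namespace PsiEps
open Complex Filter Topology
open scoped ComplexConjugate Nat

noncomputable def uu (k : ℕ) (z : ℂ) : ℂ :=
  z * (Real.log (1 + 1 / ((k:ℝ) + 1)) : ℂ) - log (1 + z / ((k:ℂ) + 1))

noncomputable def uu' (k : ℕ) (z : ℂ) : ℂ :=
  (Real.log (1 + 1 / ((k:ℝ) + 1)) : ℂ) - 1 / ((k:ℂ) + 1 + z)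

lemma kp (k : ℕ) : ((k:ℂ) + 1) ≠ 0 := by exact_mod_cast Nat.succ_ne_zero k

lemma kz_ne (k : ℕ) {z : ℂ} (hz : 0 < z.re) : (k:ℂ) + 1 + z ≠ 0 := by
  intro h
  have := congrArg re h
  simp at this
  have : (0:ℝ) ≤ k := Nat.cast_nonneg k
  linarith

lemma hasDerivAt_uu (k : ℕ) {z : ℂ} (hz : 0 < z.re) : HasDerivAt (uu k) (uu' k z) z := by
  have h1 : HasDerivAt (fun z : ℂ => 1 + z / ((k:ℂ) + 1)) (1 / ((k:ℂ) + 1)) z := by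
    simpa using ((hasDerivAt_id z).div_const ((k:ℂ)+1)).const_add 1
  have hs : 1 + z / ((k:ℂ) + 1) ∈ slitPlane := by
    left
    have : (z / ((k:ℂ) + 1)).re = z.re / ((k:ℝ) + 1) := by
      have : ((k:ℂ) + 1) = (((k:ℝ) + 1 : ℝ) : ℂ) := by push_cast; rfl
      rw [this, div_ofReal_re]
    rw [add_re, one_re, this]
    positivity
  have h2 := ((hasDerivAt_id z).mul_const (Real.log (1 + 1 / ((k:ℝ) + 1)) : ℂ)).sub (h1.clog hs)
  have e : uu' k z = 1 * (Real.log (1 + 1 / ((k:ℝ) + 1)) : ℂ) -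
      1 / ((k:ℂ) + 1) / (1 + z / ((k:ℂ) + 1)) := by
    unfold uu'
    have := kp k
    have := kz_ne k hz
    have h3 : 1 + z / ((k:ℂ) + 1) = ((k:ℂ) + 1 + z) / ((k:ℂ) + 1) := by field_simp
    rw [h3]
    field_simp
  rw [e]
  exact h2

lemma log_one_add_inv_bounds {w : ℝ} (hw : 0 < w) :
    1 / (w + 1) ≤ Real.log (1 + 1 / w) ∧ Real.log (1 + 1 / w) ≤ 1 / w := by
  constructor
  · have := Real.one_sub_inv_le_log_of_pos (x := 1 + 1 / w) (by positivity)
    refine le_trans (le_of_eq ?_) this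
    field_simp; ring
  · have := Real.log_le_sub_one_of_pos (x := 1 + 1 / w) (by positivity)
    linarith

lemma norm_uu'_le (k : ℕ) {z : ℂ} (hz : 0 < z.re) :
    ‖uu' k z‖ ≤ (1 + ‖z‖) * (1 / ((k:ℝ) + 1) ^ 2) := by
  have hk0 : (0:ℝ) < (k:ℝ) + 1 := by positivity
  have e : uu' k z = ((Real.log (1 + 1 / ((k:ℝ) + 1)) - 1 / ((k:ℝ) + 1) : ℝ) : ℂ) +
      z / (((k:ℂ) + 1) * ((k:ℂ) + 1 + z)) := by
    unfold uu'
    have := kp k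
    have := kz_ne k hz
    push_cast
    field_simp
    ring
  rw [e]
  have h1 : ‖((Real.log (1 + 1 / ((k:ℝ) + 1)) - 1 / ((k:ℝ) + 1) : ℝ) : ℂ)‖ ≤
      1 / ((k:ℝ) + 1) ^ 2 := by
    rw [norm_real, Real.norm_eq_abs, abs_le]
    obtain ⟨h2, h3⟩ := log_one_add_inv_bounds hk0
    constructor
    · have : 1 / ((k:ℝ) + 1) - 1 / ((k:ℝ) + 1 + 1) ≤ 1 / ((k:ℝ) + 1) ^ 2 := by
        rw [div_sub_div _ _ (by positivity) (by positivity), div_le_div_iff₀ (by positivity)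
          (by positivity)]
        nlinarith
      linarith
    · have : 0 ≤ 1 / ((k:ℝ) + 1) ^ 2 := by positivity
      linarith
  have h2 : ‖z / (((k:ℂ) + 1) * ((k:ℂ) + 1 + z))‖ ≤ ‖z‖ * (1 / ((k:ℝ) + 1) ^ 2) := by
    rw [norm_div, norm_mul, mul_one_div]
    have h3 : ‖(k:ℂ) + 1‖ = (k:ℝ) + 1 := by
      have : ((k:ℂ) + 1) = (((k:ℝ) + 1 : ℝ) : ℂ) := by push_cast; rfl
      rw [this, norm_real, Real.norm_eq_abs, abs_of_pos hk0]
    have h4 : (k:ℝ) + 1 ≤ ‖(k:ℂ) + 1 + z‖ := by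
      refine le_trans ?_ (re_le_norm _)
      simp; linarith
    rw [h3, sq]
    gcongr
  calc _ ≤ _ := norm_add_le _ _
    _ ≤ _ := by rw [add_mul 1 ‖z‖, one_mul]; exact add_le_add h1 h2

lemma summable_sq_inv : Summable (fun k : ℕ => 1 / ((k:ℝ) + 1) ^ 2) := by
  have := (summable_nat_add_iff 1).2 (Real.summable_one_div_nat_pow.2 (by norm_num : 1 < 2))
  simpa using this

lemma uu_at_one (k : ℕ) : uu k 1 = 0 := by
  unfold uu
  rw [one_mul, ofReal_log (by positivity)]
  push_cast
  ring

lemma gamma_region (R : ℝ) : IsOpen {z : ℂ | 0 < z.re ∧ ‖z‖ < R} ∧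
    IsPreconnected {z : ℂ | 0 < z.re ∧ ‖z‖ < R} := by
  have e : {z : ℂ | 0 < z.re ∧ ‖z‖ < R} = {z : ℂ | 0 < z.re} ∩ Metric.ball 0 R := by
    ext z; simp
  constructor
  · rw [e]
    exact (isOpen_lt continuous_const continuous_re).inter Metric.isOpen_ball
  · rw [e]
    exact ((convex_halfSpace_re_gt 0).inter (convex_ball 0 R)).isPreconnected

lemma summable_uu {z : ℂ} (hz : 0 < z.re) : Summable (fun k => uu k z) := by
  obtain ⟨ho, hp⟩ := gamma_region (‖z‖ + 2)
  exact summable_of_summable_hasDerivAt_of_isPreconnected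
    (summable_sq_inv.mul_left (1 + (‖z‖ + 2))) ho hp (fun k y hy => hasDerivAt_uu k hy.1)
    (fun k y hy => (norm_uu'_le k hy.1).trans (by have := hy.2; gcongr)) (y₀ := 1)
    (by constructor <;> simp; linarith [norm_nonneg z]) (by simp [uu_at_one, summable_zero])
    (⟨hz, by linarith⟩)

lemma hasDerivAt_sum_uu {z : ℂ} (hz : 0 < z.re) :
    HasDerivAt (fun z => ∑' k, uu k z) (∑' k, uu' k z) z := by
  obtain ⟨ho, hp⟩ := gamma_region (‖z‖ + 2)
  exact hasDerivAt_tsum_of_isPreconnected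
    (summable_sq_inv.mul_left (1 + (‖z‖ + 2))) ho hp (fun k y hy => hasDerivAt_uu k hy.1)
    (fun k y hy => (norm_uu'_le k hy.1).trans (by have := hy.2; gcongr)) (y₀ := 1)
    (by constructor <;> simp; linarith [norm_nonneg z]) (by simp [uu_at_one, summable_zero])
    (⟨hz, by linarith⟩)

lemma summable_uu' {z : ℂ} (hz : 0 < z.re) : Summable (fun k => uu' k z) :=
  Summable.of_norm_bounded (summable_sq_inv.mul_left (1 + ‖z‖)) (fun k => norm_uu'_le k hz)

lemma exp_partial {z : ℂ} (hz : 0 < z.re) (n : ℕ) :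
    exp (-log z + ∑ k ∈ Finset.range n, uu k z) =
      GammaSeq z (n + 1) * (1 + z * (1 / ((n:ℂ) + 1))) := by
  have hz0 : z ≠ 0 := by rintro rfl; simp at hz
  induction n with
  | zero =>
    simp only [Finset.range_zero, Finset.sum_empty, add_zero, exp_neg, exp_log hz0, GammaSeq]
    have : z + 1 ≠ 0 := by have := kz_ne 0 hz; simpa [add_comm] using this
    simp [Finset.prod_range_succ]
    field_simp
    ring
  | succ n ih =>
    rw [Finset.sum_range_succ, ← add_assoc, exp_add, ih]
    have h1 := kp n
    have h2 := kz_ne n hz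
    have h2' := kz_ne (n+1) hz
    have h1' := kp (n+1)
    push_cast at h1' h2' ⊢
    have hprod : ∏ j ∈ Finset.range (n + 1), (z + (j:ℂ)) ≠ 0 := by
      rw [Finset.prod_ne_zero_iff]
      intro j _ h
      have := congrArg re h
      simp at this
      have : (0:ℝ) ≤ j := Nat.cast_nonneg j
      linarith
    have e1 : exp (uu n z) = exp (z * (Real.log (1 + 1 / ((n:ℝ) + 1)) : ℂ)) /
        (1 + z / ((n:ℂ) + 1)) := by
      unfold uu
      rw [exp_sub, exp_log]
      intro h
      apply h2
      field_simp at h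
      simpa using h
    have e2 : (((n + 1 + 1 : ℕ)) : ℂ) ^ z =
        (((n + 1 : ℕ)) : ℂ) ^ z * exp (z * (Real.log (1 + 1 / ((n:ℝ) + 1)) : ℂ)) := by
      rw [cpow_def_of_ne_zero (Nat.cast_ne_zero.2 (Nat.succ_ne_zero (n+1))),
        cpow_def_of_ne_zero (Nat.cast_ne_zero.2 (Nat.succ_ne_zero n)), ← exp_add]
      congr 1
      rw [← natCast_log, ← natCast_log]
      have : (1 + 1 / ((n:ℝ) + 1)) = ((n + 1 + 1 : ℕ) : ℝ) / ((n + 1 : ℕ) : ℝ) := by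
        push_cast; field_simp
      rw [this, Real.log_div (by positivity) (by positivity)]
      push_cast
      ring
    unfold GammaSeq
    rw [e1, e2, Finset.prod_range_succ _ (n + 1 + 1), Finset.prod_range_succ _ (n + 1),
      Nat.factorial_succ (n+1)]
    push_cast
    have h3 : z + ((n:ℂ) + 1) ≠ 0 := by rwa [add_comm]
    have h4 : z + ((n:ℂ) + 1 + 1) ≠ 0 := by rwa [add_comm]
    have h5 : 1 + z / ((n:ℂ) + 1) = (z + (n + 1)) / ((n:ℂ) + 1) := by field_simp; ring
    have h6 : 1 + z * (1 / ((n:ℂ) + 1)) = (z + (n + 1)) / ((n:ℂ) + 1) := by field_simp; ring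
    have h7 : 1 + z * (1 / ((n:ℂ) + 1 + 1)) = (z + (n + 1 + 1)) / ((n:ℂ) + 1 + 1) := by
      field_simp; ring
    rw [h5, h6, h7]
    field_simp

lemma Gamma_eq_exp {z : ℂ} (hz : 0 < z.re) : Gamma z = exp (-log z + ∑' k, uu k z) := by
  have h1 : Tendsto (fun n => exp (-log z + ∑ k ∈ Finset.range n, uu k z)) atTop
      (𝓝 (exp (-log z + ∑' k, uu k z))) := by
    apply (continuous_exp.tendsto _).comp
    exact (summable_uu hz).hasSum.tendsto_sum_nat.const_add _
  have h2 : Tendsto (fun n : ℕ => GammaSeq z (n + 1) * (1 + z * (1 / ((n:ℂ) + 1)))) atTop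
      (𝓝 (Gamma z * (1 + z * 0))) := by
    apply Tendsto.mul
    · exact (GammaSeq_tendsto_Gamma z).comp (tendsto_add_atTop_nat 1)
    · exact (tendsto_one_div_add_atTop_nhds_zero_nat.const_mul z).const_add 1
  simp only [mul_zero, add_zero, mul_one] at h2
  simp_rw [exp_partial hz] at h1
  exact tendsto_nhds_unique h2 h1

lemma digamma_series {z : ℂ} (hz : 0 < z.re) : digamma z = -(1 / z) + ∑' k, uu' k z := by
  have hz0 : z ≠ 0 := by rintro rfl; simp at hz
  have h1 : HasDerivAt (fun z => exp (-log z + ∑' k, uu k z))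
      (exp (-log z + ∑' k, uu k z) * (-(1/z) + ∑' k, uu' k z)) z := by
    refine HasDerivAt.cexp (HasDerivAt.add ?_ (hasDerivAt_sum_uu hz))
    have := (hasDerivAt_log (Or.inl hz)).neg
    rw [one_div]
    exact this
  have h2 : Gamma =ᶠ[𝓝 z] (fun z => exp (-log z + ∑' k, uu k z)) :=
    eventuallyEq_of_mem ((isOpen_lt continuous_const continuous_re).mem_nhds hz)
      (fun w hw => Gamma_eq_exp hw)
  have h3 := h1.congr_of_eventuallyEq h2
  rw [digamma_def, logDeriv_apply, h3.deriv, Gamma_eq_exp hz]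
  field_simp [exp_ne_zero]

/-- real part as a limit of partial sums -/
lemma digamma_re_limit {z : ℂ} (hz : 0 < z.re) :
    Tendsto (fun n : ℕ => ∑ k ∈ Finset.range (n + 1),
      (Real.log ‖1 + 1 / (z + k)‖ - (1 / (z + k)).re)) atTop
      (𝓝 ((digamma z).re - Real.log ‖z‖)) := by
  have hzk : ∀ k : ℕ, z + k ≠ 0 := by
    intro k h
    have := congrArg re h
    simp at this
    have : (0:ℝ) ≤ k := Nat.cast_nonneg k
    linarith
  have h1 : Tendsto (fun n => (-(1 / z) + ∑ k ∈ Finset.range n, uu' k z).re) atTop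
      (𝓝 ((digamma z).re)) := by
    rw [digamma_series hz]
    apply (continuous_re.tendsto _).comp
    exact (summable_uu' hz).hasSum.tendsto_sum_nat.const_add _
  have h2 : ∀ n : ℕ, (-(1 / z) + ∑ k ∈ Finset.range n, uu' k z).re =
      Real.log (n + 1) - ∑ k ∈ Finset.range (n + 1), (1 / (z + k)).re := by
    intro n
    induction n with
    | zero => simp
    | succ n ih =>
      rw [Finset.sum_range_succ, ← add_assoc, add_re, ih, Finset.sum_range_succ _ (n+1)]
      unfold uu'
      have : (n:ℝ) + 1 ≠ 0 := by positivity
      have e : (1 + 1 / ((n:ℝ) + 1)) = ((n:ℝ) + 1 + 1) / ((n:ℝ) + 1) := by field_simp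
      rw [e, Real.log_div (by positivity) (by positivity)]
      have e2 : z + ((n + 1 : ℕ) : ℂ) = (n:ℂ) + 1 + z := by push_cast; ring
      rw [e2, sub_re, ofReal_re]
      push_cast
      ring
  have h3 : ∀ n : ℕ, ∑ k ∈ Finset.range (n + 1), Real.log ‖1 + 1 / (z + k)‖ =
      Real.log ‖z + (n + 1 : ℕ)‖ - Real.log ‖z‖ := by
    intro n
    rw [← Nat.cast_zero (R := ℂ) |> fun h => show Real.log ‖z + ((0:ℕ):ℂ)‖ = Real.log ‖z‖ by simp,
      ← Finset.sum_range_sub (fun k : ℕ => Real.log ‖z + (k:ℂ)‖)]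
    apply Finset.sum_congr rfl
    intro k _
    have e : 1 + 1 / (z + k) = (z + (k + 1 : ℕ)) / (z + k) := by
      have := hzk k
      push_cast; field_simp; ring
    rw [e, norm_div, Real.log_div (norm_ne_zero_iff.2 (hzk _)) (norm_ne_zero_iff.2 (hzk _))]
  have h4 : Tendsto (fun n : ℕ => Real.log ‖z + (n + 1 : ℕ)‖ - Real.log (n + 1)) atTop (𝓝 0) := by
    have : Tendsto (fun n : ℕ => Real.log ‖z * (1 / ((n:ℂ) + 1)) + 1‖) atTop
        (𝓝 (Real.log ‖z * 0 + 1‖)) := by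
      apply Tendsto.log _ (by simp)
      exact ((tendsto_one_div_add_atTop_nhds_zero_nat.const_mul z).add_const 1).norm
    simp only [mul_zero, zero_add, norm_one, Real.log_one] at this
    refine this.congr ?_
    intro n
    have e : z * (1 / ((n:ℂ) + 1)) + 1 = (z + (n + 1 : ℕ)) / (((n:ℝ) + 1 : ℝ) : ℂ) := by
      have := kp n
      push_cast; field_simp
    have h0 : (0:ℝ) < (n:ℝ) + 1 := by positivity
    rw [e, norm_div, norm_real, Real.norm_eq_abs, abs_of_pos h0,
      Real.log_div (norm_ne_zero_iff.2 (hzk _)) h0.ne']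
  have h5 := (h1.add h4).sub_const (Real.log ‖z‖)
  rw [add_zero] at h5
  refine h5.congr ?_
  intro n
  rw [h2, Finset.sum_sub_distrib, h3]
  ring

lemma hterm_bound {w : ℂ} (hw : 1 < ‖w‖) :
    |Real.log ‖1 + 1 / w‖ - (1 / w).re| ≤ 1 / (2 * (‖w‖ * (‖w‖ - 1))) := by
  have hu : ‖1 / w‖ < 1 := by
    rw [norm_div, norm_one, div_lt_one (by linarith)]; exact hw
  have h := norm_log_one_add_sub_self_le hu
  have h2 : Real.log ‖1 + 1 / w‖ - (1 / w).re = (log (1 + 1 / w) - 1 / w).re := by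
    rw [sub_re, log_re]
  rw [h2]
  refine (abs_re_le_norm _).trans (h.trans (le_of_eq ?_))
  rw [norm_div, norm_one]
  have : ‖w‖ - 1 ≠ 0 := by linarith
  have : ‖w‖ ≠ 0 := by linarith
  have e : 1 - 1 / ‖w‖ = (‖w‖ - 1) / ‖w‖ := by field_simp
  rw [e]
  field_simp

lemma tele (b : ℝ) (hb : 0 < b) (n : ℕ) :
    ∑ k ∈ Finset.range n, (1 / (b + k) - 1 / (b + k + 1)) ≤ 1 / b := by
  have : ∑ k ∈ Finset.range n, (1 / (b + k) - 1 / (b + k + 1)) = 1 / b - 1 / (b + n) := by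
    induction n with
    | zero => simp
    | succ n ih => rw [Finset.sum_range_succ, ih]; push_cast; ring
  rw [this]
  have : 0 ≤ 1 / (b + n) := by positivity
  linarith

lemma abs_le_of_limit {f : ℕ → ℝ} {l B : ℝ} (h : Tendsto f atTop (𝓝 l)) (hb : ∀ n, |f n| ≤ B) :
    |l| ≤ B :=
  le_of_tendsto h.abs (Eventually.of_forall hb)

lemma digamma_bound1 {z : ℂ} (hz : 3 / 2 ≤ z.re) : |(digamma z).re - Real.log ‖z‖| ≤ 1 := by
  refine abs_le_of_limit (digamma_re_limit (by linarith)) ?_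
  intro n
  have hb : 1 / (2 * (z.re - 1)) ≤ 1 := by
    rw [div_le_one (by linarith)]; linarith
  refine le_trans (Finset.abs_sum_le_sum_abs _ _) (le_trans (Finset.sum_le_sum
    (g := fun k : ℕ => 1 / 2 * (1 / (z.re - 1 + k) - 1 / (z.re - 1 + k + 1))) ?_) ?_)
  · intro k _
    have hk : (0:ℝ) ≤ k := Nat.cast_nonneg k
    have hw : z.re + k ≤ ‖z + k‖ := by
      refine le_trans (le_of_eq ?_) (re_le_norm _); simp
    refine (hterm_bound (by linarith)).trans ?_
    have h1 : 0 < z.re - 1 + k := by linarith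
    have h2 : 0 < z.re - 1 + k + 1 := by linarith
    have : 1 / 2 * (1 / (z.re - 1 + k) - 1 / (z.re - 1 + k + 1)) =
      1 / (2 * ((z.re - 1 + k + 1) * (z.re - 1 + k))) := by field_simp; ring
    rw [this]
    apply one_div_le_one_div_of_le (by positivity)
    gcongr <;> linarith
  · rw [← Finset.mul_sum]
    have := tele (z.re - 1) (by linarith) (n + 1)
    have e : 1 / (2 * (z.re - 1)) = 1 / 2 * (1 / (z.re - 1)) := by
      have : z.re - 1 ≠ 0 := by linarith
      field_simp
    linarith

lemma digamma_bound2 {z : ℂ} (hz : 3 / 2 ≤ z.re) (hy : 2 ≤ |z.im|) :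
    |(digamma z).re - Real.log ‖z‖| ≤ 5 / 3 / |z.im| := by
  refine abs_le_of_limit (digamma_re_limit (by linarith)) ?_
  intro n
  refine le_trans (Finset.abs_sum_le_sum_abs _ _) (le_trans (Finset.sum_le_sum
    (g := fun k : ℕ => 5 / 3 * (1 / (|z.im| + k) - 1 / (|z.im| + k + 1))) ?_) ?_)
  · intro k _
    have hk : (0:ℝ) ≤ k := Nat.cast_nonneg k
    have hsq : ‖z + k‖ ^ 2 = (z.re + k) ^ 2 + |z.im| ^ 2 := by
      rw [← normSq_eq_norm_sq, normSq_apply, sq_abs]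
      simp; ring
    have h25 : 5 / 2 ≤ ‖z + k‖ := by
      by_contra h
      have : ‖z + k‖ ^ 2 < (5/2) ^ 2 := by
        have := norm_nonneg (z + k); nlinarith
      nlinarith
    refine (hterm_bound (by linarith)).trans ?_
    have h1 : 0 < |z.im| + k := by linarith
    have h2 : 0 < |z.im| + k + 1 := by linarith
    have : 5 / 3 * (1 / (|z.im| + k) - 1 / (|z.im| + k + 1)) =
      1 / (2 * (3 / 5 * ((|z.im| + k) * (|z.im| + k + 1)) / 2)) := by field_simp; ring
    rw [this]
    apply one_div_le_one_div_of_le (by positivity)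
    have h3 : 3 / 5 * ‖z + k‖ ^ 2 ≤ ‖z + k‖ * (‖z + k‖ - 1) := by nlinarith
    have h4 : ((|z.im| + k) * (|z.im| + k + 1)) / 2 ≤ ‖z + k‖ ^ 2 := by
      rw [hsq]; nlinarith [sq_nonneg (z.re + k - |z.im|)]
    nlinarith
  · rw [← Finset.mul_sum]
    have := tele (|z.im|) (by linarith) (n + 1)
    have e : 5 / 3 / |z.im| = 5 / 3 * (1 / |z.im|) := by ring
    linarith

lemma digamma_real {x : ℝ} (hx : 0 < x) :
    Real.log x - 1 / x ≤ (digamma (x:ℂ)).re ∧ (digamma (x:ℂ)).re ≤ Real.log x := by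
  have h := digamma_re_limit (z := (x:ℂ)) (by simpa using hx)
  have hn : ‖(x:ℂ)‖ = x := by rw [norm_real, Real.norm_eq_abs, abs_of_pos hx]
  rw [hn] at h
  have ht : ∀ k : ℕ, Real.log ‖1 + 1 / ((x:ℂ) + k)‖ - (1 / ((x:ℂ) + k)).re =
      Real.log (1 + 1 / (x + k)) - 1 / (x + k) := by
    intro k
    have e : (1 / ((x:ℂ) + k)) = ((1 / (x + k) : ℝ) : ℂ) := by push_cast; rfl
    have e2 : 1 + 1 / ((x:ℂ) + k) = ((1 + 1 / (x + k) : ℝ) : ℂ) := by push_cast; rfl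
    rw [e2, e, ofReal_re, norm_real, Real.norm_eq_abs, abs_of_pos (by positivity)]
  simp_rw [ht] at h
  constructor
  · have : -(1 / x) ≤ (digamma (x:ℂ)).re - Real.log x := by
      refine ge_of_tendsto' h ?_
      intro n
      have h1 := tele x hx (n + 1)
      have : -∑ k ∈ Finset.range (n+1), (1 / (x + k) - 1 / (x + k + 1)) ≤
          ∑ k ∈ Finset.range (n + 1), (Real.log (1 + 1 / (x + k)) - 1 / (x + k)) := by
        rw [← Finset.sum_neg_distrib]
        apply Finset.sum_le_sum
        intro k _
        have := (log_one_add_inv_bounds (w := x + k) (by positivity)).1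
        linarith
      linarith
    linarith
  · have : (digamma (x:ℂ)).re - Real.log x ≤ 0 := by
      refine le_of_tendsto' h ?_
      intro n
      apply Finset.sum_nonpos
      intro k _
      have := (log_one_add_inv_bounds (w := x + k) (by positivity)).2
      linarith
    linarith

lemma digamma_real_upper {x : ℝ} (hx : 0 < x) :
    (digamma (x:ℂ)).re ≤ Real.log (x + 1) - 1 / x := by
  have h := digamma_apply_add_one (x:ℂ) (by
    intro m h
    have := congrArg re h
    simp at this
    have : (0:ℝ) ≤ m := Nat.cast_nonneg m
    linarith)
  have h2 := (digamma_real (x := x + 1) (by linarith)).2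
  push_cast at h2
  rw [h, add_re] at h2
  have e : ((x:ℂ)⁻¹).re = 1 / x := by rw [← ofReal_inv, ofReal_re, one_div]
  simp only [one_div, e] at h2 ⊢
  linarith

end PsiEps


namespace PsiEps
open Complex Filter Topology
open scoped ComplexConjugate Nat Real

lemma xi_eq' {s : ℂ} (hs : 1 < s.re) :
    xi s = 2 * ((s - 1) * ((π : ℂ) ^ (-s / 2) * (Gamma (s / 2 + 1) * riemannZeta s))) := by
  have h0 : s / 2 ≠ 0 := by
    intro h
    have : s = 0 := by
      have := congrArg (fun x => x * 2) h
      simpa using this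
    rw [this] at hs; simp at hs; linarith
  rw [xi_eq_zeta hs, Gamma_add_one _ h0]
  ring

lemma neg_logDeriv_zeta {z : ℂ} (hz : 1 < z.re) :
    -deriv riemannZeta z / riemannZeta z = 1 / (z - 1) - (Real.log π : ℂ) / 2 +
      digamma (z / 2 + 1) / 2 - logDeriv xi z := by
  have hz1 : z - 1 ≠ 0 := by
    intro h
    rw [sub_eq_zero.1 h] at hz; simp at hz
  have hz1' : z ≠ 1 := sub_ne_zero.1 hz1
  have hre : 0 < (z / 2 + 1).re := by
    have : (z / 2 + 1).re = z.re / 2 + 1 := by simp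
    rw [this]; linarith
  have hG : Gamma (z / 2 + 1) ≠ 0 := Gamma_ne_zero_of_re_pos hre
  have hdG : DifferentiableAt ℂ Gamma (z / 2 + 1) := by
    apply differentiableAt_Gamma
    intro m h
    rw [h] at hre
    simp at hre
    have : (0:ℝ) ≤ m := Nat.cast_nonneg m
    linarith
  have hzeta : riemannZeta z ≠ 0 := riemannZeta_ne_zero_of_one_lt_re hz
  have hdz : HasDerivAt riemannZeta (deriv riemannZeta z) z :=
    (differentiableAt_riemannZeta hz1').hasDerivAt
  have hpi : (π : ℂ) ≠ 0 := by exact_mod_cast Real.pi_ne_zero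
  have hpz : (π : ℂ) ^ (-z / 2) ≠ 0 := by rw [Ne, cpow_eq_zero_iff]; tauto
  have h1 : HasDerivAt (fun s : ℂ => s - 1) 1 z := (hasDerivAt_id z).sub_const 1
  have h2a : HasDerivAt (fun s : ℂ => -s / 2) (-1 / 2) z := ((hasDerivAt_id z).neg).div_const 2
  have h2 : HasDerivAt (fun s : ℂ => (π : ℂ) ^ (-s / 2)) ((π : ℂ) ^ (-z / 2) * log π * (-1 / 2)) z :=
    h2a.const_cpow (Or.inl hpi)
  have h3a : HasDerivAt (fun s : ℂ => s / 2 + 1) (1 / 2) z :=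
    ((hasDerivAt_id z).div_const 2).add_const 1
  have h3 : HasDerivAt (fun s : ℂ => Gamma (s / 2 + 1)) (deriv Gamma (z / 2 + 1) * (1 / 2)) z :=
    HasDerivAt.comp z hdG.hasDerivAt h3a
  have h4 := (h1.mul (h2.mul (h3.mul hdz))).const_mul 2
  have h5 : xi =ᶠ[𝓝 z] fun s => 2 * ((s - 1) * ((π : ℂ) ^ (-s / 2) * (Gamma (s / 2 + 1) * riemannZeta s))) :=
    eventuallyEq_of_mem ((isOpen_lt continuous_const continuous_re).mem_nhds hz)
      (fun w hw => xi_eq' hw)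
  have h6 := h4.congr_of_eventuallyEq h5
  rw [logDeriv_apply, h6.deriv, xi_eq' hz, digamma_def, logDeriv_apply, ofReal_log Real.pi_pos.le]
  simp only [Pi.mul_apply]
  generalize Gamma (z / 2 + 1) = G at *
  generalize deriv Gamma (z / 2 + 1) = G' at *
  generalize (π : ℂ) ^ (-z / 2) = E at *
  clear h1 h2a h2 h3a h3 h4 h5 h6
  field_simp
  ring

/-- real part of minus the log derivative of zeta -/
noncomputable def Zr (z : ℂ) : ℝ := (-deriv riemannZeta z / riemannZeta z).re

lemma Zr_eq {z : ℂ} (hz : 1 < z.re) :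
    Zr z = (1 / (z - 1)).re - Real.log π / 2 + (digamma (z / 2 + 1)).re / 2 - (logDeriv xi z).re := by
  unfold Zr
  rw [neg_logDeriv_zeta hz]
  have h1 : ((Real.log π : ℂ) / 2).re = Real.log π / 2 := by
    rw [← ofReal_ofNat, div_ofReal_re, ofReal_re]
  have h2 : (digamma (z / 2 + 1) / 2).re = (digamma (z / 2 + 1)).re / 2 := by
    rw [← ofReal_ofNat, div_ofReal_re]
  simp only [sub_re, add_re, h1, h2]

noncomputable def lam (n : ℕ) : ℝ := ArithmeticFunction.vonMangoldt n

lemma lam_nonneg (n : ℕ) : 0 ≤ lam n := ArithmeticFunction.vonMangoldt_nonneg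

lemma term_re (σ v : ℝ) (n : ℕ) :
    (LSeries.term (fun n => (ArithmeticFunction.vonMangoldt n : ℂ)) ((σ:ℂ) + v * I) n).re =
      lam n * (n:ℝ) ^ (-σ) * Real.cos (v * Real.log n) := by
  rcases Nat.eq_zero_or_pos n with rfl | hn
  · simp [lam]
  · rw [LSeries.term_of_ne_zero hn.ne']
    have hn' : (0:ℝ) < n := by exact_mod_cast hn
    have e : ((n:ℂ) ^ ((σ:ℂ) + v * I))⁻¹ = (((n:ℝ) ^ (-σ) : ℝ) : ℂ) * exp (((-(v * Real.log n) : ℝ) : ℂ) * I) := by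
      rw [← cpow_neg, cpow_def_of_ne_zero (by exact_mod_cast hn.ne'), Real.rpow_def_of_pos hn',
        ofReal_exp, ← exp_add, ← natCast_log]
      congr 1
      push_cast
      ring
    rw [div_eq_mul_inv, e, ← mul_assoc]
    rw [← ofReal_mul, re_ofReal_mul, exp_ofReal_mul_I_re, Real.cos_neg]
    rfl

lemma Zr_hasSum {σ : ℝ} (hσ : 1 < σ) (v : ℝ) :
    HasSum (fun n : ℕ => lam n * (n:ℝ) ^ (-σ) * Real.cos (v * Real.log n)) (Zr ((σ:ℂ) + v * I)) := by
  have hre : 1 < ((σ:ℂ) + v * I).re := by simpa using hσ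
  have h1 := ArithmeticFunction.LSeriesSummable_vonMangoldt hre
  have h2 := (LSeriesSummable.LSeriesHasSum h1)
  rw [ArithmeticFunction.LSeries_vonMangoldt_eq_deriv_riemannZeta_div hre] at h2
  have h3 := hasSum_re h2
  have e : (fun n : ℕ => lam n * (n:ℝ) ^ (-σ) * Real.cos (v * Real.log n)) = fun n =>
      (LSeries.term (fun n => (ArithmeticFunction.vonMangoldt n : ℂ)) ((σ:ℂ) + v * I) n).re :=
    funext fun n => (term_re σ v n).symm
  rw [e]
  exact h3

end PsiEps


namespace PsiEps
open Complex Filter Topology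
open scoped ComplexConjugate Nat Real

noncomputable def pk (a v : ℝ) : ℝ := a / (a ^ 2 + v ^ 2)

lemma pk_nonneg {a : ℝ} (ha : 0 ≤ a) (v : ℝ) : 0 ≤ pk a v := by unfold pk; positivity

lemma re_inv_pk (w : ℂ) : (1 / w).re = pk w.re w.im := by
  rw [re_inv, pk, ← normSq_eq_norm_sq, normSq_apply]
  congr 1; ring

noncomputable def F (s v : ℝ) : ℝ :=
  Zr (((1 + s : ℝ) : ℂ) + v * I) - 223 / 500 * Zr (((81 / 50 : ℝ) : ℂ) + v * I)

noncomputable def cf (s : ℝ) (n : ℕ) : ℝ :=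
  lam n * ((n:ℝ) ^ (-(1 + s)) - 223 / 500 * (n:ℝ) ^ (-(81/50 : ℝ)))

lemma cf_nonneg {s : ℝ} (hs : s ≤ 31/50) (n : ℕ) : 0 ≤ cf s n := by
  unfold cf
  rcases Nat.eq_zero_or_pos n with rfl | hn
  · simp [lam]
  · apply mul_nonneg (lam_nonneg n)
    have hn' : (1:ℝ) ≤ n := by exact_mod_cast hn
    have h1 : (n:ℝ) ^ (-(81/50 : ℝ)) ≤ (n:ℝ) ^ (-(1 + s)) :=
      Real.rpow_le_rpow_of_exponent_le hn' (by linarith)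
    have h2 : 0 ≤ (n:ℝ) ^ (-(81/50 : ℝ)) := by positivity
    linarith

lemma F_hasSum {s : ℝ} (hs : 0 < s) (v : ℝ) :
    HasSum (fun n : ℕ => cf s n * Real.cos (v * Real.log n)) (F s v) := by
  have h1 := Zr_hasSum (σ := 1 + s) (by linarith) v
  have h2 := (Zr_hasSum (σ := 81/50) (by norm_num) v).mul_left (223/500)
  have h3 := h1.sub h2
  have e : (fun n : ℕ => cf s n * Real.cos (v * Real.log n)) = fun n : ℕ =>
      lam n * (n:ℝ) ^ (-(1 + s)) * Real.cos (v * Real.log n) -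
      223/500 * (lam n * (n:ℝ) ^ (-(81/50:ℝ)) * Real.cos (v * Real.log n)) := by
    funext n; unfold cf; ring
  rw [e]
  exact h3

lemma stechkin_c1 {t w : ℝ} (ht : 0 < t) (ht2 : t ≤ 1/10) (hw0 : 0 < w) :
    (1.0044 + w) * (1 + 4 * t - 2 * (t + w)) + (t + w) ^ 2 ≤
      ((t + w) * (2.24 ^ 2 - 2 * (1.0044 + w)) + (1.0044 + w) ^ 2) := by
  have h1 : t * w ≤ 1/10 * w := by gcongr
  have h2 : t * t ≤ 1/10 * t := by gcongr
  have e : ((t + w) * (2.24 ^ 2 - 2 * (1.0044 + w)) + (1.0044 + w) ^ 2) -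
    ((1.0044 + w) * (1 + 4 * t - 2 * (t + w)) + (t + w) ^ 2) =
    0.00441936 + t + 6.0264 * w - 6 * (t * w) - t * t := by ring
  linarith

lemma stechkin_poly {s w V : ℝ} (hs : 0 < s) (hs2 : s ≤ 7/100) (hw0 : 0 < w) (hw1 : w ≤ 1/4)
    (hV : 0 ≤ V) :
    223/500 * 2.24 * ((1.0044 + w + V) * ((s * (1 + s) + w) ^ 2 +
      ((1 + 2 * s) ^ 2 - 2 * (s * (1 + s) + w)) * V + V ^ 2)) ≤
    (1 + 2 * s) * ((s * (1 + s) + w + V) * ((1.0044 + w) ^ 2 +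
      (2.24 ^ 2 - 2 * (1.0044 + w)) * V + V ^ 2)) := by
  obtain ⟨t, htd⟩ : ∃ t, t = s * (1 + s) := ⟨_, rfl⟩
  have e : (1 + 2 * s) ^ 2 = 1 + 4 * t := by rw [htd]; ring
  rw [e, ← htd]
  have ht : 0 < t := by rw [htd]; positivity
  have ht2 : t ≤ 1/10 := by rw [htd]; nlinarith
  have key : (1.0044 + w + V) * ((t + w) ^ 2 + (1 + 4 * t - 2 * (t + w)) * V + V ^ 2) ≤
     (t + w + V) * ((1.0044 + w) ^ 2 + (2.24 ^ 2 - 2 * (1.0044 + w)) * V + V ^ 2) := by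
    have c0 : (1.0044 + w) * (t + w) ^ 2 ≤ (t + w) * (1.0044 + w) ^ 2 := by
      have : (1.0044 + w) * (t + w) * (t + w) ≤ (1.0044 + w) * (t + w) * (1.0044 + w) := by
        gcongr; linarith
      nlinarith
    have c1 := mul_le_mul_of_nonneg_right (stechkin_c1 ht ht2 hw0) hV
    have c2 : (1.0044 + w) + (1 + 4 * t - 2 * (t + w)) ≤ t + w + (2.24 ^ 2 - 2 * (1.0044 + w)) := by
      norm_num; linarith
    have c2' := mul_le_mul_of_nonneg_right c2 (sq_nonneg V)
    linarith
  have pos : 0 ≤ (t + w + V) * ((1.0044 + w) ^ 2 + (2.24 ^ 2 - 2 * (1.0044 + w)) * V + V ^ 2) := by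
    have : 0 ≤ (2.24:ℝ) ^ 2 - 2 * (1.0044 + w) := by norm_num; linarith
    positivity
  calc _ ≤ 223/500 * 2.24 * ((t + w + V) * ((1.0044 + w) ^ 2 +
        (2.24 ^ 2 - 2 * (1.0044 + w)) * V + V ^ 2)) := by gcongr
    _ ≤ _ := by gcongr; norm_num; linarith

lemma stechkin {s β v : ℝ} (hs : 0 < s) (hs2 : s ≤ 7/100) (hb0 : 0 < β) (hb1 : β < 1) :
    223/500 * (pk (81/50 - β) v + pk (81/50 - 1 + β) v) ≤ pk (1 + s - β) v + pk (1 + s - 1 + β) v := by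
  have gen : ∀ a b : ℝ, 0 < a → 0 < b → pk a v + pk b v =
      (a + b) * (a * b + v ^ 2) / ((a * b) ^ 2 + ((a + b) ^ 2 - 2 * (a * b)) * v ^ 2 + (v^2) ^ 2) := by
    intro a b ha hb
    unfold pk
    have e : (a * b) ^ 2 + ((a + b) ^ 2 - 2 * (a * b)) * v ^ 2 + (v^2) ^ 2 =
        (a ^ 2 + v ^ 2) * (b ^ 2 + v ^ 2) := by ring
    rw [e]
    have : a ^ 2 + v ^ 2 ≠ 0 := by positivity
    have : b ^ 2 + v ^ 2 ≠ 0 := by positivity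
    field_simp
    ring
  rw [gen _ _ (by linarith) (by linarith), gen _ _ (by linarith) (by linarith)]
  have e1 : (81/50 - β) * (81/50 - 1 + β) = 1.0044 + β * (1 - β) := by ring
  have e2 : (1 + s - β) * (1 + s - 1 + β) = s * (1 + s) + β * (1 - β) := by ring
  have e3 : (81/50 - β) + (81/50 - 1 + β) = 2.24 := by ring
  have e4 : (1 + s - β) + (1 + s - 1 + β) = 1 + 2 * s := by ring
  rw [e1, e2, e3, e4]
  have hw0 : 0 < β * (1 - β) := _root_.mul_pos hb0 (by linarith)
  have hw1 : β * (1 - β) ≤ 1 / 4 := by nlinarith [sq_nonneg (β - 1/2)]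
  generalize β * (1 - β) = w at *
  have hV : 0 ≤ v ^ 2 := sq_nonneg v
  generalize v ^ 2 = V at *
  have p1 : 0 < (1.0044 + w) ^ 2 + (2.24 ^ 2 - 2 * (1.0044 + w)) * V + V ^ 2 := by
    have : 0 ≤ (2.24 ^ 2 - 2 * (1.0044 + w)) * V := mul_nonneg (by norm_num; linarith) hV
    positivity
  have p2 : 0 < (s * (1 + s) + w) ^ 2 + ((1 + 2 * s) ^ 2 - 2 * (s * (1 + s) + w)) * V + V ^ 2 := by
    have : 0 ≤ ((1 + 2 * s) ^ 2 - 2 * (s * (1 + s) + w)) * V :=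
      mul_nonneg (by nlinarith) hV
    positivity
  rw [← mul_div_assoc, div_le_div_iff₀ p1 p2]
  have := stechkin_poly hs hs2 hw0 hw1 hV
  linarith
end PsiEps


namespace PsiEps
open Complex Filter Topology
open scoped ComplexConjugate Nat Real

/-- the point `1 + s + i v` -/
noncomputable def pt (s v : ℝ) : ℂ := ((1 + s : ℝ) : ℂ) + v * I

lemma pt_re (s v : ℝ) : (pt s v).re = 1 + s := by simp [pt]
lemma pt_im (s v : ℝ) : (pt s v).im = v := by simp [pt]

/-- contribution of the point `a` to the real part of the log derivative of xi at `1 + s + i v` -/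
noncomputable def gz (s v : ℝ) (a : ℂ) : ℝ := pk (1 + s - a.re) (v - a.im)

lemma gz_eq (s v : ℝ) (a : ℂ) : (1 / (pt s v - a)).re = gz s v a := by
  rw [re_inv_pk, sub_re, sub_im, pt_re, pt_im, gz]

lemma summable_gz (s v : ℝ) : Summable (fun a : ℂ => (mul a : ℝ) * gz s v a) := by
  have := summable_re (pt s v)
  simpa only [gz_eq] using this

lemma gz_nonneg {s : ℝ} (hs : 0 ≤ s) (v : ℝ) (a : ℂ) : 0 ≤ (mul a : ℝ) * gz s v a := by
  have := re_logDeriv_xi_nonneg_term (z := pt s v) (by rw [pt_re]; linarith) a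
  rwa [gz_eq] at this

lemma logDeriv_xi_pt {s : ℝ} (hs : 0 ≤ s) (v : ℝ) :
    (logDeriv xi (pt s v)).re = ∑' a, (mul a : ℝ) * gz s v a := by
  rw [re_logDeriv_xi (xi_ne_zero_of_one_le_re (by rw [pt_re]; linarith))]
  simp only [gz_eq]

lemma Zr_pt {s : ℝ} (hs : 0 < s) (v : ℝ) :
    Zr (pt s v) = pk s v - Real.log π / 2 + (digamma (pt s v / 2 + 1)).re / 2 -
      ∑' a, (mul a : ℝ) * gz s v a := by
  rw [Zr_eq (by rw [pt_re]; linarith), logDeriv_xi_pt hs.le, re_inv_pk, sub_re, sub_im, pt_re, pt_im]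
  simp

/-- the archimedean part -/
noncomputable def dg (s v : ℝ) : ℝ := (digamma (pt s v / 2 + 1)).re

noncomputable def gF (s v : ℝ) (a : ℂ) : ℝ := gz s v a - 223/500 * gz (31/50) v a

lemma summable_gF (s v : ℝ) : Summable (fun a : ℂ => (mul a : ℝ) * gF s v a) := by
  have := (summable_gz s v).sub ((summable_gz (31/50) v).mul_left (223/500))
  refine this.congr ?_
  intro a; unfold gF; ring

lemma F_eq {s : ℝ} (hs : 0 < s) (v : ℝ) :
    F s v = pk s v - 223/500 * pk (31/50) v - 277/1000 * Real.log π +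
      (dg s v / 2 - 223/1000 * dg (31/50) v) - ∑' a, (mul a : ℝ) * gF s v a := by
  have e1 : F s v = Zr (pt s v) - 223/500 * Zr (pt (31/50) v) := by
    unfold F pt
    norm_num
  have e2 : ∑' a, (mul a : ℝ) * gF s v a = ∑' a, (mul a : ℝ) * gz s v a -
      223/500 * ∑' a, (mul a : ℝ) * gz (31/50) v a := by
    rw [← tsum_mul_left, ← (summable_gz s v).tsum_sub ((summable_gz (31/50) v).mul_left (223/500))]
    apply tsum_congr
    intro a; unfold gF; ring
  rw [e1, e2, Zr_pt hs, Zr_pt (by norm_num)]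
  unfold dg
  ring

noncomputable def hF (s v : ℝ) (a : ℂ) : ℝ := gF s v a + gF s v (1 - conj a)

lemma tsum_gF (s v : ℝ) :
    ∑' a, (mul a : ℝ) * gF s v a = ∑' a, (mul a : ℝ) * (hF s v a / 2) := by
  have h1 := tsum_refl (gF s v)
  have h2 := (summable_gF s v).tsum_add (summable_refl (summable_gF s v))
  have h3 : ∑' a, (mul a : ℝ) * (hF s v a / 2) =
      (∑' a, ((mul a : ℝ) * gF s v a + (mul a : ℝ) * gF s v (1 - conj a))) / 2 := by
    rw [← tsum_div_const]
    apply tsum_congr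
    intro a; unfold hF; ring
  rw [h3, h2, h1]; ring

lemma summable_hF (s v : ℝ) : Summable (fun a : ℂ => (mul a : ℝ) * (hF s v a / 2)) := by
  have := ((summable_gF s v).add (summable_refl (summable_gF s v))).div_const 2
  refine this.congr ?_
  intro a; unfold hF; ring

lemma hF_nonneg {s : ℝ} (hs : 0 < s) (hs2 : s ≤ 7/100) (v : ℝ) {a : ℂ} (ha : xi a = 0) :
    0 ≤ hF s v a := by
  obtain ⟨h0, h1⟩ := xi_zero_re ha
  have := stechkin (v := v - a.im) hs hs2 h0 h1
  unfold hF gF gz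
  simp only [sub_re, one_re, conj_re, sub_im, one_im, conj_im, zero_sub, neg_neg]
  have e1 : 1 + s - (1 - a.re) = 1 + s - 1 + a.re := by ring
  have e2 : (1:ℝ) + 31/50 - (1 - a.re) = 81/50 - 1 + a.re := by ring
  have e3 : (1:ℝ) + 31/50 - a.re = 81/50 - a.re := by ring
  rw [e1, e2, e3]
  linarith

lemma hF_term_nonneg {s : ℝ} (hs : 0 < s) (hs2 : s ≤ 7/100) (v : ℝ) (a : ℂ) :
    0 ≤ (mul a : ℝ) * (hF s v a / 2) := by
  by_cases ha : xi a = 0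
  · have := hF_nonneg hs hs2 v ha
    positivity
  · simp [mul_eq_zero ha]

lemma sum_gF_nonneg {s : ℝ} (hs : 0 < s) (hs2 : s ≤ 7/100) (v : ℝ) :
    0 ≤ ∑' a, (mul a : ℝ) * gF s v a := by
  rw [tsum_gF]
  exact tsum_nonneg (hF_term_nonneg hs hs2 v)

lemma hF_at_zero {s : ℝ} (hs : 0 < s) (hs2 : s ≤ 7/100) {a : ℂ} (ha : xi a = 0) :
    1 / (s + (1 - a.re)) - s ≤ hF s a.im a ∧ hF s a.im (1 - conj a) = hF s a.im a := by
  obtain ⟨h0, h1⟩ := xi_zero_re ha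
  constructor
  · unfold hF gF gz pk
    simp only [sub_re, one_re, conj_re, sub_im, one_im, conj_im, zero_sub, neg_neg, sub_self]
    have p : ∀ x : ℝ, 0 < x → x / (x ^ 2 + 0 ^ 2) = 1 / x := by
      intro x hx; field_simp; ring
    rw [p _ (by linarith), p _ (by linarith), p _ (by linarith), p _ (by linarith)]
    have e : 1 / (1 + 31/50 - a.re) + 1 / (1 + 31/50 - (1 - a.re)) = 2.24 / (1.0044 + a.re * (1 - a.re)) := by
      have q1 : (1 + 31/50 - a.re) ≠ 0 := by linarith
      have q2 : (1 + 31/50 - (1 - a.re)) ≠ 0 := by linarith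
      have q3 : 1.0044 + a.re * (1 - a.re) = (1 + 31/50 - a.re) * (1 + 31/50 - (1 - a.re)) := by ring
      rw [q3, div_add_div _ _ q1 q2]; congr 1; ring
    have hw : 0 < a.re * (1 - a.re) := _root_.mul_pos h0 (by linarith)
    have e2 : 2.24 / (1.0044 + a.re * (1 - a.re)) ≤ 2.24 := by
      rw [div_le_iff₀ (by linarith)]; nlinarith
    have e3 : 1 - s ≤ 1 / (1 + s - (1 - a.re)) := by
      rw [le_div_iff₀ (by linarith)]
      nlinarith [mul_nonneg (sub_nonneg.2 (hs2.trans (by norm_num : (7/100:ℝ) ≤ 1))) (sub_nonneg.2 h1.le)]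
    have e4 : s + (1 - a.re) = 1 + s - a.re := by ring
    rw [e4]
    linarith
  · unfold hF
    simp only [map_sub, map_one, conj_conj, sub_sub_cancel]
    ring

lemma sum_gF_at_zero {s : ℝ} (hs : 0 < s) (hs2 : s ≤ 7/100) {a : ℂ} (ha : xi a = 0)
    (hre : 1/2 < a.re) : 1 / (s + (1 - a.re)) - s ≤ ∑' b, (mul b : ℝ) * gF s a.im b := by
  rw [tsum_gF]
  have hne : a ≠ 1 - conj a := by
    intro h
    have := congrArg re h
    simp at this
    linarith
  have h1 := (summable_hF s a.im).sum_le_tsum {a, 1 - conj a} (fun b _ => hF_term_nonneg hs hs2 _ b)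
  rw [Finset.sum_pair hne, mul_one_sub, mul_conj] at h1
  obtain ⟨h2, h3⟩ := hF_at_zero hs hs2 ha
  rw [h3] at h1
  have h4 := hF_nonneg hs hs2 a.im ha
  have h5 : (1:ℝ) ≤ mul a := by exact_mod_cast mul_pos ha
  have h6 : 1 * hF s a.im a ≤ (mul a : ℝ) * hF s a.im a := by gcongr
  linarith

end PsiEps


namespace PsiEps
open Complex Filter Topology
open scoped ComplexConjugate Nat Real

lemma log_two_pi : 1.8378 ≤ Real.log (2 * π) := by
  have h1 : Real.log (25/4 * (6.283/6.25)) ≤ Real.log (2 * π) := by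
    apply Real.log_le_log (by norm_num)
    have := Real.pi_gt_d6
    norm_num at this ⊢
    linarith
  have h2 : Real.log (25/4) = 2 * Real.log 5 - 2 * Real.log 2 := by
    rw [Real.log_div (by norm_num) (by norm_num), show (25:ℝ) = 5 ^ 2 by norm_num,
      show (4:ℝ) = 2 ^ 2 by norm_num, Real.log_pow, Real.log_pow]
    norm_num
  have h3 := Real.one_sub_inv_le_log_of_pos (x := 6.283/6.25) (by norm_num)
  rw [Real.log_mul (by norm_num) (by norm_num), h2] at h1
  have := Real.log_two_lt_d9
  have := Real.log_five_gt_d9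
  norm_num at *
  linarith

lemma log_pi : 1.1446 ≤ Real.log π := by
  have h := log_two_pi
  rw [Real.log_mul (by norm_num) Real.pi_ne_zero] at h
  have := Real.log_two_lt_d9
  norm_num at *
  linarith

lemma hp_re (s v : ℝ) : (pt s v / 2 + 1).re = 3/2 + s/2 := by
  have : (pt s v / 2).re = (1 + s) / 2 := by
    rw [← ofReal_ofNat, div_ofReal_re, pt_re]
  rw [add_re, this, one_re]; ring

lemma hp_im (s v : ℝ) : (pt s v / 2 + 1).im = v / 2 := by
  have : (pt s v / 2).im = v / 2 := by
    rw [← ofReal_ofNat, div_ofReal_im, pt_im]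
  rw [add_im, this, one_im]; ring

lemma hp_norm (s v : ℝ) : ‖pt s v / 2 + 1‖ ^ 2 = (3/2 + s/2) ^ 2 + (v/2) ^ 2 := by
  rw [← normSq_eq_norm_sq, normSq_apply, hp_re, hp_im]; ring

lemma le_of_sq_le_sq' {a b : ℝ} (h : a ^ 2 ≤ b ^ 2) (hb : 0 ≤ b) : a ≤ b :=
  abs_le_of_sq_le_sq' h hb |>.2

lemma hp_norm_le {s : ℝ} (hs : 0 ≤ s) (hs2 : s ≤ 31/50) (v : ℝ) :
    ‖pt s v / 2 + 1‖ ≤ ‖pt (31/50) v / 2 + 1‖ := by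
  refine le_of_sq_le_sq' ?_ (norm_nonneg _)
  rw [hp_norm, hp_norm]
  nlinarith

lemma hp_norm_pos {s : ℝ} (hs : 0 ≤ s) (v : ℝ) : 1 ≤ ‖pt s v / 2 + 1‖ := by
  refine le_trans ?_ (re_le_norm _)
  rw [hp_re]; linarith

lemma hp_small {v : ℝ} (hv : |v| ≤ 100) : ‖pt (31/50) v / 2 + 1‖ ≤ 52 := by
  refine le_of_sq_le_sq' ?_ (by norm_num)
  rw [hp_norm]
  have : v ^ 2 ≤ 100 ^ 2 := by rw [← sq_abs]; gcongr
  nlinarith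

lemma hp_large {v : ℝ} (hv : 100 < |v|) : ‖pt (31/50) v / 2 + 1‖ ≤ |v| / 2 * 1.001 := by
  refine le_of_sq_le_sq' ?_ (by positivity)
  rw [hp_norm, mul_pow, div_pow, div_pow, sq_abs]
  have : 100 ^ 2 ≤ v ^ 2 := by rw [← sq_abs v]; gcongr
  norm_num at this ⊢
  linarith

lemma log144 : 2.66 ≤ Real.log 14.4 := by
  have : (14.4:ℝ) = 2 ^ 3 * 3 ^ 2 / 5 := by norm_num
  rw [this, Real.log_div (by norm_num) (by norm_num), Real.log_mul (by norm_num) (by norm_num),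
    Real.log_pow, Real.log_pow]
  have := Real.log_two_gt_d9
  have := Real.log_three_gt_d9
  have := Real.log_five_lt_d9
  norm_num at *
  linarith

lemma log_hp_small {v V : ℝ} (hV : 1500 ≤ V) (hv : |v| ≤ 100) :
    Real.log ‖pt (31/50) v / 2 + 1‖ ≤ Real.log (V / 2) - 2.66 := by
  have h1 : Real.log ‖pt (31/50) v / 2 + 1‖ ≤ Real.log (V / 2 / 14.4) := by
    apply Real.log_le_log
    · have := hp_norm_pos (s := 31/50) (by norm_num) v; linarith
    · refine (hp_small hv).trans ?_
      norm_num; linarith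
  rw [Real.log_div (by linarith) (by norm_num)] at h1
  linarith [log144]

lemma log_hp_large {v V : ℝ} (hv : 100 < |v|) (hvV : |v| ≤ V) :
    Real.log ‖pt (31/50) v / 2 + 1‖ ≤ Real.log (V / 2) + 0.001 := by
  have h1 : Real.log ‖pt (31/50) v / 2 + 1‖ ≤ Real.log (V / 2 * 1.001) := by
    apply Real.log_le_log
    · have := hp_norm_pos (s := 31/50) (by norm_num) v; linarith
    · refine (hp_large hv).trans ?_
      gcongr
  rw [Real.log_mul (by linarith) (by norm_num)] at h1
  have := Real.log_le_sub_one_of_pos (x := 1.001) (by norm_num)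
  linarith

lemma dg_bound2 {s v : ℝ} (hs : 0 ≤ s) (hv : 100 < |v|) :
    |dg s v - Real.log ‖pt s v / 2 + 1‖| ≤ 1 / 30 := by
  have h : |(pt s v / 2 + 1).im| = |v| / 2 := by rw [hp_im, abs_div]; norm_num
  refine (digamma_bound2 (by rw [hp_re]; linarith) (by rw [h]; linarith)).trans ?_
  rw [h, div_le_iff₀ (by linarith)]
  linarith

lemma dg_bound1 {s v : ℝ} (hs : 0 ≤ s) :
    |dg s v - Real.log ‖pt s v / 2 + 1‖| ≤ 1 :=
  digamma_bound1 (by rw [hp_re]; linarith)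

lemma dig_le {s v V : ℝ} (hs : 0 ≤ s) (hs2 : s ≤ 31/50) (hV : 1500 ≤ V) (hv : |v| ≤ V) :
    dg s v / 2 - 223/1000 * dg (31/50) v ≤ 277/1000 * Real.log (V / 2) + 0.025 := by
  have hl : Real.log ‖pt s v / 2 + 1‖ ≤ Real.log ‖pt (31/50) v / 2 + 1‖ :=
    Real.log_le_log (by linarith [hp_norm_pos hs v]) (hp_norm_le hs hs2 v)
  rcases le_or_gt (|v|) 100 with h | h
  · have h1 := abs_le.1 (dg_bound1 (s := s) (v := v) hs)
    have h2 := abs_le.1 (dg_bound1 (s := 31/50) (v := v) (by norm_num))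
    have := log_hp_small hV h
    norm_num at *
    linarith
  · have h1 := abs_le.1 (dg_bound2 (s := s) (v := v) hs h)
    have h2 := abs_le.1 (dg_bound2 (s := 31/50) (v := v) (by norm_num) h)
    have := log_hp_large h hv
    norm_num at *
    linarith

lemma dg_le {s v V : ℝ} (hs : 0 ≤ s) (hs2 : s ≤ 31/50) (hV : 1500 ≤ V) (hv : |v| ≤ V) :
    dg s v / 2 ≤ Real.log (V / 2) / 2 + 0.02 := by
  have hl : Real.log ‖pt s v / 2 + 1‖ ≤ Real.log ‖pt (31/50) v / 2 + 1‖ :=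
    Real.log_le_log (by linarith [hp_norm_pos hs v]) (hp_norm_le hs hs2 v)
  rcases le_or_gt (|v|) 100 with h | h
  · have h1 := abs_le.1 (dg_bound1 (s := s) (v := v) hs)
    have := log_hp_small hV h
    norm_num at *
    linarith
  · have h1 := abs_le.1 (dg_bound2 (s := s) (v := v) hs h)
    have := log_hp_large h hv
    norm_num at *
    linarith

lemma log_split {V : ℝ} (hV : 0 < V) : Real.log (V / 2) - Real.log π = Real.log (V / (2 * π)) := by
  rw [← Real.log_div (by positivity) Real.pi_ne_zero, div_div]

lemma F_le {s v V : ℝ} (hs : 0 < s) (hs2 : s ≤ 7/100) (hV : 1500 ≤ V) (hv : |v| ≤ V) :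
    F s v ≤ pk s v + 277/1000 * Real.log (V / (2 * π)) + 0.025 := by
  rw [F_eq hs, ← log_split (by linarith)]
  have h1 := dig_le hs.le (by linarith) hV hv
  have h2 := sum_gF_nonneg hs hs2 v
  have h3 := pk_nonneg (a := 31/50) (by norm_num) v
  linarith

lemma F_le_zero {s V : ℝ} (hs : 0 < s) (hs2 : s ≤ 7/100) (hV : 1500 ≤ V) {a : ℂ} (ha : xi a = 0)
    (hre : 1/2 < a.re) (hv : |a.im| ≤ V) :
    F s a.im ≤ pk s a.im + 277/1000 * Real.log (V / (2 * π)) + 0.025 - 1 / (s + (1 - a.re)) + s := by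
  rw [F_eq hs, ← log_split (by linarith)]
  have h1 := dig_le hs.le (by linarith) hV hv
  have h2 := sum_gF_at_zero hs hs2 ha hre
  have h3 := pk_nonneg (a := 31/50) (by norm_num) a.im
  linarith

lemma pk_zero {a : ℝ} (ha : 0 < a) : pk a 0 = 1 / a := by
  unfold pk; field_simp; ring

lemma dg_real (s : ℝ) : dg s 0 = (digamma ((3/2 + s/2 : ℝ) : ℂ)).re := by
  unfold dg pt
  congr 2
  push_cast
  ring

lemma dg_real_le {s : ℝ} (hs : 0 < s) (hs2 : s ≤ 7/100) : dg s 0 ≤ 0.2792 := by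
  rw [dg_real]
  refine (digamma_real_upper (by linarith)).trans ?_
  have h1 : Real.log (3/2 + s/2 + 1) ≤ Real.log (5/2 * 1.014) := by
    apply Real.log_le_log (by linarith)
    norm_num; linarith
  rw [Real.log_mul (by norm_num) (by norm_num), Real.log_div (by norm_num) (by norm_num)] at h1
  have h2 := Real.log_le_sub_one_of_pos (x := 1.014) (by norm_num)
  have h3 : (1:ℝ) / 1.535 ≤ 1 / (3/2 + s/2) := by
    apply one_div_le_one_div_of_le (by linarith)
    norm_num; linarith
  have := Real.log_two_gt_d9
  have := Real.log_five_lt_d9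
  norm_num at *
  linarith

lemma F_zero_le {s : ℝ} (hs : 0 < s) (hs2 : s ≤ 7/100) : F s 0 ≤ 1 / s - 0.9 := by
  rw [F_eq hs, pk_zero hs, pk_zero (by norm_num)]
  have h1 := dg_real_le hs hs2
  have h2 := sum_gF_nonneg hs hs2 0
  have h3 : 0.0352 ≤ dg (31/50) 0 := by
    rw [dg_real]
    refine le_trans ?_ (digamma_real (by norm_num)).1
    have h1 : Real.log (3 ^ 2 / 5) ≤ Real.log (3/2 + 31/50/2) := by
      apply Real.log_le_log (by norm_num)
      norm_num
    rw [Real.log_div (by norm_num) (by norm_num), Real.log_pow] at h1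
    have := Real.log_three_gt_d9
    have := Real.log_five_lt_d9
    norm_num at *
    linarith
  have := log_pi
  norm_num at *
  linarith

lemma Zr_real_le {s : ℝ} (hs : 0 < s) (hs2 : s ≤ 7/100) : Zr (pt s 0) ≤ 1 / s - 0.43 := by
  rw [Zr_pt hs, pk_zero hs]
  have h1 := dg_real_le hs hs2
  unfold dg at h1
  have h2 : 0 ≤ ∑' a, (mul a : ℝ) * gz s 0 a := tsum_nonneg (gz_nonneg hs.le 0)
  have := log_pi
  norm_num at *
  linarith

lemma Zr_neg_le {s : ℝ} (hs : 0 < s) (v : ℝ) : -Zr (pt s v) ≤ Zr (pt s 0) := by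
  have h1 := (Zr_hasSum (σ := 1 + s) (by linarith) v).neg
  have h2 := (Zr_hasSum (σ := 1 + s) (by linarith) 0)
  refine hasSum_le ?_ h1 h2
  intro n
  have : 0 ≤ lam n * (n:ℝ) ^ (-(1 + s)) := mul_nonneg (lam_nonneg n) (by positivity)
  have h3 := Real.neg_one_le_cos (v * Real.log n)
  simp only [zero_mul, Real.cos_zero]
  nlinarith

lemma sum_gz_le {s v V : ℝ} (hs : 0 < s) (hs2 : s ≤ 7/100) (hV : 1500 ≤ V) (hv : |v| ≤ V) :
    ∑' a, (mul a : ℝ) * gz s v a ≤ pk s v + 1 / s + Real.log (V / (2 * π)) / 2 - 0.41 := by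
  have h1 := Zr_pt hs v
  have h2 := Zr_neg_le hs v
  have h3 := Zr_real_le hs hs2
  have h4 := dg_le hs.le (by linarith) hV hv
  unfold dg at h4
  rw [← log_split (by linarith)]
  linarith

end PsiEps


namespace PsiEps
open Complex Filter Topology
open scoped ComplexConjugate Nat Real

lemma Zr_three : Real.log 2 / 8 ≤ Zr (pt 2 0) := by
  have h := Zr_hasSum (σ := 1 + 2) (by norm_num) 0
  have h2 := h.summable.sum_le_tsum {2} (fun n _ => by
    simp only [zero_mul, Real.cos_zero, mul_one]
    exact mul_nonneg (lam_nonneg n) (by positivity))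
  rw [h.tsum_eq] at h2
  refine le_trans (le_of_eq ?_) h2
  have h3 : lam 2 = Real.log 2 := by
    unfold lam
    exact_mod_cast ArithmeticFunction.vonMangoldt_apply_prime Nat.prime_two
  simp only [Finset.sum_singleton, h3, zero_mul, Real.cos_zero, mul_one, Nat.cast_ofNat]
  rw [show (-(1 + 2) : ℝ) = ((-3 : ℤ) : ℝ) by norm_num, Real.rpow_intCast]
  norm_num
  ring

lemma no_low_zero {a : ℂ} (ha : xi a = 0) : 1.3 ≤ |a.im| := by
  by_contra hc
  push Not at hc
  obtain ⟨h0, h1⟩ := xi_zero_re ha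
  have hZ := Zr_three
  rw [Zr_pt (by norm_num), pk_zero (by norm_num)] at hZ
  have hdg : dg 2 0 ≤ 0.8629 := by
    rw [dg_real]
    refine (digamma_real_upper (by norm_num)).trans ?_
    have h1 : Real.log (3/2 + 2/2 + 1) * 2 ≤ Real.log (5 ^ 2 / 2) := by
      have : Real.log (3/2 + 2/2 + 1) * 2 = Real.log ((3/2 + 2/2 + 1) ^ 2) := by
        rw [Real.log_pow]; push_cast; ring
      rw [this]
      apply Real.log_le_log (by norm_num)
      norm_num
    rw [Real.log_div (by norm_num) (by norm_num), Real.log_pow] at h1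
    have := Real.log_two_gt_d9
    have := Real.log_five_lt_d9
    norm_num at *
    linarith
  unfold dg at hdg
  have hsum := (summable_gz 2 0).sum_le_tsum {a} (fun b _ => gz_nonneg (by norm_num) 0 b)
  rw [Finset.sum_singleton] at hsum
  have hm : (1:ℝ) ≤ mul a := by exact_mod_cast mul_pos ha
  have hg : 0.28 ≤ gz 2 0 a := by
    unfold gz pk
    have hγ : a.im ^ 2 ≤ 1.69 := by
      rw [← sq_abs]; nlinarith [abs_nonneg a.im]
    have : (0:ℝ) < (1 + 2 - a.re) ^ 2 + (0 - a.im) ^ 2 := by nlinarith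
    rw [le_div_iff₀ this]
    nlinarith
  have hmg : gz 2 0 a ≤ (mul a : ℝ) * gz 2 0 a := by nlinarith
  have := log_pi
  have := Real.log_two_gt_d9
  norm_num at *
  linarith

/-- the counting kernel -/
noncomputable def ker (T : ℝ) (a : ℂ) : ℝ := T / (T ^ 2 + a.im ^ 2)

lemma ker_le {T : ℝ} (hT : 0 < T) {a : ℂ} (ha : xi a = 0) :
    ker T a ≤ (1 + 1/T) ^ 2 * gz T 0 a := by
  obtain ⟨h0, h1⟩ := xi_zero_re ha
  have hg : T / ((T + 1) ^ 2 + a.im ^ 2) ≤ gz T 0 a := by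
    unfold gz pk
    have : (0 - a.im) ^ 2 = a.im ^ 2 := by ring
    rw [this]
    have hp : (0:ℝ) < 1 + T - a.re := by linarith
    gcongr
    · linarith
    · linarith
  refine le_trans ?_ (mul_le_mul_of_nonneg_left hg (by positivity))
  unfold ker
  rw [← mul_div_assoc, div_le_div_iff₀ (by positivity) (by positivity)]
  have e : (1 + 1/T) ^ 2 * T * (T ^ 2 + a.im ^ 2) =
    T * ((T + 1) ^ 2 + (1 + 1/T) ^ 2 * a.im ^ 2) := by field_simp
  rw [e]
  gcongr
  have : (0:ℝ) ≤ 1 / T := by positivity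
  nlinarith [sq_nonneg a.im, mul_nonneg this (sq_nonneg a.im), mul_nonneg (sq_nonneg (1/T)) (sq_nonneg a.im)]

lemma ker_nonneg {T : ℝ} (hT : 0 < T) (a : ℂ) : 0 ≤ (mul a : ℝ) * ker T a := by
  unfold ker; positivity

lemma mul_ker_le {T : ℝ} (hT : 0 < T) (a : ℂ) :
    (mul a : ℝ) * ker T a ≤ (1 + 1/T) ^ 2 * ((mul a : ℝ) * gz T 0 a) := by
  by_cases ha : xi a = 0
  · have := mul_le_mul_of_nonneg_left (ker_le hT ha) (Nat.cast_nonneg (α := ℝ) (mul a))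
    linarith
  · simp [mul_eq_zero ha]

lemma summable_ker {T : ℝ} (hT : 0 < T) : Summable (fun a : ℂ => (mul a : ℝ) * ker T a) :=
  Summable.of_nonneg_of_le (ker_nonneg hT) (mul_ker_le hT) ((summable_gz T 0).mul_left _)

lemma log_le_div_e {y : ℝ} (hy : 0 < y) : Real.log y ≤ y / 2.7 := by
  have h := Real.log_le_sub_one_of_pos (x := y / Real.exp 1) (by positivity)
  rw [Real.log_div hy.ne' (Real.exp_ne_zero _), Real.log_exp] at h
  have h2 : y / Real.exp 1 ≤ y / 2.7 := by
    gcongr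
    have := Real.exp_one_gt_d9
    norm_num at *
    linarith
  linarith

lemma count_le {T : ℝ} (hT : 60 ≤ T) :
    ∑' a : ℂ, (mul a : ℝ) * ker T a ≤ Real.log (T / (2 * π)) / 2 + 0.13 := by
  have hT0 : 0 < T := by linarith
  have h1 : ∑' a : ℂ, (mul a : ℝ) * ker T a ≤ (1 + 1/T) ^ 2 * ∑' a, (mul a : ℝ) * gz T 0 a := by
    rw [← tsum_mul_left]
    exact (summable_ker hT0).tsum_le_tsum (mul_ker_le hT0) ((summable_gz T 0).mul_left _)
  have hZ : 0 ≤ Zr (pt T 0) := by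
    refine (Zr_hasSum (σ := 1 + T) (by linarith) 0).nonneg ?_
    intro n
    simp only [zero_mul, Real.cos_zero, mul_one]
    exact mul_nonneg (lam_nonneg n) (by positivity)
  rw [Zr_pt hT0, pk_zero hT0] at hZ
  have hdg : dg T 0 ≤ Real.log (T / 2) + 5 / T := by
    rw [dg_real]
    refine (digamma_real_upper (by linarith)).trans ?_
    have h3 : (0:ℝ) ≤ 1 / (3/2 + T/2) := by positivity
    have h4 : (3/2 + T/2 + 1) = T / 2 * (1 + 5 / T) := by field_simp; ring
    rw [h4, Real.log_mul (by positivity) (by positivity)]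
    have := Real.log_le_sub_one_of_pos (x := 1 + 5 / T) (by positivity)
    linarith
  unfold dg at hdg
  have hsp := log_split hT0
  set G := ∑' a, (mul a : ℝ) * gz T 0 a
  set u := 1 / T with hu
  have hu0 : 0 < u := by positivity
  have hu1 : u ≤ 1/60 := by rw [hu]; gcongr
  have h5 : 5 / T = 5 * u := by rw [hu]; ring
  have hG : G ≤ Real.log (T / (2 * π)) / 2 + 3.5 * u := by
    rw [h5] at hdg; norm_num; linarith
  set l := Real.log (T / (2 * π)) with hl
  have hl1 : l * u ≤ 0.059 := by
    have := log_le_div_e (y := T / (2 * π)) (by positivity)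
    have h6 : T / (2 * π) / 2.7 * u = 1 / (2 * π * 2.7) := by rw [hu]; field_simp
    calc l * u ≤ T / (2 * π) / 2.7 * u := by gcongr
      _ = 1 / (2 * π * 2.7) := h6
      _ ≤ 0.059 := by
        have := Real.pi_gt_d6
        rw [div_le_iff₀ (by positivity)]
        norm_num at *
        linarith
  have hl0 : 0 ≤ l := by
    apply Real.log_nonneg
    rw [le_div_iff₀ (by positivity)]
    have := Real.pi_lt_d2
    linarith
  have h2 : (1 + u) ^ 2 * G ≤ (1 + u) ^ 2 * (l / 2 + 3.5 * u) := by gcongr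
  have h7 : (1 + u) ^ 2 ≤ 1 + 2.02 * u := by nlinarith
  have h8 : (1 + u) ^ 2 * (l / 2 + 3.5 * u) ≤ (1 + 2.02 * u) * (l / 2 + 3.5 * u) := by gcongr
  have h9 : u * u ≤ 1/60 * (1/60) := by gcongr
  norm_num at *
  nlinarith

end PsiEps


namespace PsiEps
open Complex Filter Topology
open scoped ComplexConjugate Nat Real

lemma pk_le {s v : ℝ} (hs : 0 ≤ s) (hv : v ≠ 0) : pk s v ≤ s / v ^ 2 := by
  unfold pk
  gcongr
  nlinarith [sq_nonneg s]

lemma trig_sum {s : ℝ} (hs : 0 < s) (hs2 : s ≤ 7/100) (v : ℝ) :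
    0 ≤ 5 * F s 0 + 8 * F s v + 4 * F s (2 * v) + F s (3 * v) := by
  have h := (((F_hasSum hs 0).mul_left 5).add ((F_hasSum hs v).mul_left 8)).add
    ((F_hasSum hs (2 * v)).mul_left 4) |>.add (F_hasSum hs (3 * v))
  refine h.nonneg ?_
  intro n
  have hc := cf_nonneg (s := s) (by linarith) n
  have e2 : Real.cos (2 * v * Real.log n) = 2 * Real.cos (v * Real.log n) ^ 2 - 1 := by
    rw [mul_assoc, Real.cos_two_mul]
  have e3 : Real.cos (3 * v * Real.log n) =
      4 * Real.cos (v * Real.log n) ^ 3 - 3 * Real.cos (v * Real.log n) := by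
    rw [mul_assoc, Real.cos_three_mul]
  rw [zero_mul, Real.cos_zero, e2, e3]
  have h1 := Real.neg_one_le_cos (v * Real.log n)
  have e : 5 * (cf s n * 1) + 8 * (cf s n * Real.cos (v * Real.log n)) +
      4 * (cf s n * (2 * Real.cos (v * Real.log n) ^ 2 - 1)) +
      cf s n * (4 * Real.cos (v * Real.log n) ^ 3 - 3 * Real.cos (v * Real.log n)) =
      cf s n * ((1 + Real.cos (v * Real.log n)) * (1 + 2 * Real.cos (v * Real.log n)) ^ 2) := by
    ring
  rw [e]
  apply mul_nonneg hc
  apply mul_nonneg (by linarith) (sq_nonneg _)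

lemma zf_main {s T : ℝ} (hs : 0 < s) (hs2 : s ≤ 7/100) (hT : 1500 ≤ T) {a : ℂ} (ha : xi a = 0)
    (hre : 1/2 < a.re) (hv : |a.im| ≤ T) :
    8 / (s + (1 - a.re)) ≤ 5 / s + 3.601 * Real.log (T / (2 * π)) - 3.1 + 8 * s + 9.2 * s / a.im ^ 2 := by
  have hγ := no_low_zero ha
  have hg0 : a.im ≠ 0 := by
    intro h; rw [h, abs_zero] at hγ; norm_num at hγ
  have h0 := trig_sum hs hs2 a.im
  have h1 := F_zero_le hs hs2
  have h2 := F_le_zero hs hs2 hT ha hre hv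
  have h3 := F_le (v := 2 * a.im) (V := 2 * T) hs hs2 (by linarith) (by
    rw [abs_mul, abs_two]; linarith)
  have h4 := F_le (v := 3 * a.im) (V := 3 * T) hs hs2 (by linarith) (by
    rw [abs_mul, abs_of_pos (by norm_num : (0:ℝ) < 3)]; linarith)
  have p1 := pk_le hs.le hg0
  have p2 := pk_le (v := 2 * a.im) hs.le (by positivity)
  have p3 := pk_le (v := 3 * a.im) hs.le (by positivity)
  have e2 : s / (2 * a.im) ^ 2 = (s / a.im ^ 2) / 4 := by field_simp; ring
  have e3 : s / (3 * a.im) ^ 2 = (s / a.im ^ 2) / 9 := by field_simp; ring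
  have l2 : Real.log (2 * T / (2 * π)) = Real.log 2 + Real.log (T / (2 * π)) := by
    rw [mul_div_assoc, Real.log_mul (by norm_num) (by positivity)]
  have l3 : Real.log (3 * T / (2 * π)) = Real.log 3 + Real.log (T / (2 * π)) := by
    rw [mul_div_assoc, Real.log_mul (by norm_num) (by positivity)]
  rw [l2] at h3
  rw [l3] at h4
  rw [e2] at p2
  rw [e3] at p3
  have q : 0 ≤ s / a.im ^ 2 := by positivity
  have r1 : 8 / (s + (1 - a.re)) = 8 * (1 / (s + (1 - a.re))) := by ring
  have r2 : 5 / s = 5 * (1 / s) := by ring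
  have r3 : 9.2 * s / a.im ^ 2 = 9.2 * (s / a.im ^ 2) := by ring
  rw [r1, r2, r3]
  have := Real.log_two_lt_d9
  have := Real.log_three_lt_d9
  norm_num at *
  linarith

lemma log_exp_div (τ : ℝ) : Real.log (Real.exp τ / (2 * π)) ≤ τ - 1.8378 := by
  rw [Real.log_div (Real.exp_ne_zero _) (by positivity), Real.log_exp]
  linarith [log_two_pi]

lemma exp8 : 2900 ≤ Real.exp 8 := by
  have h : Real.exp 8 = Real.exp 1 ^ 8 := by rw [← Real.exp_nat_mul]; norm_num
  have := Real.exp_one_gt_d9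
  rw [h]
  calc (2900:ℝ) ≤ 2.718 ^ 8 := by norm_num
    _ ≤ _ := by gcongr; norm_num at *; linarith

lemma exp_ge {τ : ℝ} (h : 8 ≤ τ) : 2900 ≤ Real.exp τ := exp8.trans (Real.exp_le_exp.2 h)

/-- solving `8/(s+η) ≤ 5/s + A` with the choice `s = 1.32/A` -/
lemma zf_solve {A η : ℝ} (hA : 18 ≤ A) (hη : 0 < η)
    (h : 8 / (1.32 / A + η) ≤ 5 / (1.32 / A) + A) : 0.3508 / A ≤ η := by
  have hA0 : 0 < A := by linarith
  have e : 5 / (1.32 / A) = 5 / 1.32 * A := by field_simp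
  rw [e, div_le_iff₀ (by positivity)] at h
  rw [div_le_iff₀ hA0]
  have e2 : (5 / 1.32 * A + A) * (1.32 / A + η) = 6.32 + (5/1.32 + 1) * (A * η) := by
    field_simp; norm_num; ring
  rw [e2] at h
  norm_num at *
  nlinarith

lemma zero_free_low {a : ℂ} (ha : xi a = 0) (h8 : |a.im| ≤ Real.exp 8) : 0.01754 ≤ 1 - a.re := by
  obtain ⟨h0, h1⟩ := xi_zero_re ha
  rcases le_or_gt a.re (1/2) with hre | hre
  · norm_num; linarith
  have h := zf_main (s := 1.32/20) (by norm_num) (by norm_num) (by linarith [exp8]) ha hre h8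
  have hl := log_exp_div 8
  have hγ := no_low_zero ha
  have hq : 9.2 * (1.32/20) / a.im ^ 2 ≤ 0.36 := by
    have : (1.69:ℝ) ≤ a.im ^ 2 := by rw [← sq_abs]; nlinarith
    rw [div_le_iff₀ (by linarith)]
    norm_num at *; linarith
  have := zf_solve (A := 20) (η := 1 - a.re) (by norm_num) (by linarith) (by
    norm_num at *; linarith)
  norm_num at *; linarith

lemma zero_free_high {a : ℂ} {τ : ℝ} (ha : xi a = 0) (h8 : 8 ≤ τ) (hτ : |a.im| = Real.exp τ) :
    0.3508 / (3.601 * τ - 9.15) ≤ 1 - a.re := by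
  obtain ⟨h0, h1⟩ := xi_zero_re ha
  have hA : 19.658 ≤ 3.601 * τ - 9.15 := by norm_num at *; linarith
  have hA0 : 0 < 3.601 * τ - 9.15 := by linarith
  rcases le_or_gt a.re (1/2) with hre | hre
  · rw [div_le_iff₀ hA0]; norm_num at *; nlinarith
  have hs : 1.32 / (3.601 * τ - 9.15) ≤ 0.0672 := by
    rw [div_le_iff₀ hA0]; norm_num at *; linarith
  have hs0 : 0 < 1.32 / (3.601 * τ - 9.15) := by positivity
  have h := zf_main (s := 1.32 / (3.601 * τ - 9.15)) hs0 (by norm_num at *; linarith)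
    (by linarith [exp_ge h8]) ha hre hτ.le
  have hl := log_exp_div τ
  have hq : 9.2 * (1.32 / (3.601 * τ - 9.15)) / a.im ^ 2 ≤ 0.01 := by
    have : (2900:ℝ) ^ 2 ≤ a.im ^ 2 := by rw [← sq_abs a.im, hτ]; gcongr; exact exp_ge h8
    rw [div_le_iff₀ (by linarith)]
    norm_num at *; linarith
  exact zf_solve (A := 3.601 * τ - 9.15) (η := 1 - a.re) (by linarith) (by linarith) (by
    norm_num at *; linarith)

/-- the exponential-sum positivity for a finite set of ordinates -/
lemma quad_pos {s : ℝ} (hs : 0 < s) (hs2 : s ≤ 7/100) (S : Finset ℂ) (A : ℝ) :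
    0 ≤ A ^ 2 * F s 0 + 2 * A * ∑ a ∈ S, (mul a : ℝ) * F s a.im +
      ∑ a ∈ S, ∑ b ∈ S, (mul a : ℝ) * mul b * F s (a.im - b.im) := by
  have h1 := (F_hasSum hs 0).mul_left (A ^ 2)
  have h2 := (hasSum_sum (s := S) (fun a _ => (F_hasSum hs a.im).mul_left (mul a : ℝ))).mul_left (2 * A)
  have h3 := (hasSum_sum (s := S) (fun a _ => hasSum_sum (s := S)
    (fun b _ => (F_hasSum hs (a.im - b.im)).mul_left ((mul a : ℝ) * mul b))))
  refine ((h1.add h2).add h3).nonneg ?_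
  intro n
  have hc := cf_nonneg (s := s) (by linarith) n
  set L := Real.log n
  have e : A ^ 2 * (cf s n * Real.cos (0 * L)) +
      2 * A * ∑ a ∈ S, (mul a : ℝ) * (cf s n * Real.cos (a.im * L)) +
      ∑ a ∈ S, ∑ b ∈ S, (mul a : ℝ) * mul b * (cf s n * Real.cos ((a.im - b.im) * L)) =
      cf s n * ((A + ∑ a ∈ S, (mul a : ℝ) * Real.cos (a.im * L)) ^ 2 +
        (∑ a ∈ S, (mul a : ℝ) * Real.sin (a.im * L)) ^ 2) := by
    have e1 : ∑ a ∈ S, (mul a : ℝ) * (cf s n * Real.cos (a.im * L)) =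
        cf s n * ∑ a ∈ S, (mul a : ℝ) * Real.cos (a.im * L) := by
      rw [Finset.mul_sum]; apply Finset.sum_congr rfl; intros; ring
    have e2 : ∑ a ∈ S, ∑ b ∈ S, (mul a : ℝ) * mul b * (cf s n * Real.cos ((a.im - b.im) * L)) =
        cf s n * ((∑ a ∈ S, (mul a : ℝ) * Real.cos (a.im * L)) ^ 2 +
          (∑ a ∈ S, (mul a : ℝ) * Real.sin (a.im * L)) ^ 2) := by
      rw [sq, sq, Finset.sum_mul_sum, Finset.sum_mul_sum, ← Finset.sum_add_distrib, Finset.mul_sum]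
      apply Finset.sum_congr rfl; intro a _
      rw [← Finset.sum_add_distrib, Finset.mul_sum]
      apply Finset.sum_congr rfl; intro b _
      rw [sub_mul, Real.cos_sub]; ring
    rw [e1, e2, zero_mul, Real.cos_zero]; ring
  rw [e]
  apply mul_nonneg hc
  positivity

lemma pk_compare {s η η' v : ℝ} (hs : 0 < s) (hη : 0 ≤ η) (hη' : η ≤ η') :
    pk s v ≤ (s + η') / s * pk (s + η) v := by
  have h1 : pk s v ≤ (s + η) / s * pk (s + η) v := by
    unfold pk
    rw [div_mul_div_comm, div_le_div_iff₀ (by positivity) (by positivity)]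
    nlinarith [sq_nonneg v, mul_nonneg hη (sq_nonneg v), mul_nonneg hs.le hη,
      mul_nonneg (mul_nonneg hs.le hη) (sq_nonneg v), mul_nonneg (sq_nonneg η) (sq_nonneg v)]
  refine h1.trans ?_
  have := pk_nonneg (a := s + η) (by linarith) v
  gcongr

lemma density {s τ η X : ℝ} (hs : 0 < s) (hs2 : s ≤ 7/100) (hτ : 8 ≤ τ) (S : Finset ℂ)
    (hS : ∀ a ∈ S, xi a = 0 ∧ 1 - a.re ≤ η ∧ |a.im| ≤ Real.exp τ ∧ F s a.im ≤ -X) (hX : 0 ≤ X)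
    (hη : 0 ≤ η) :
    (∑ a ∈ S, (mul a : ℝ)) * (X ^ 2 / (1 / s - 0.9) - (277/1000 * (τ - 1.1446) + 0.025)) ≤
      (s + η) / s * (1 / s + (τ - 1.8378) / 2 - 0.36) := by
  set M := ∑ a ∈ S, (mul a : ℝ) with hM
  have hs' : 14 ≤ 1 / s := by rw [le_div_iff₀ hs]; linarith
  have hf : 0 < 1 / s - 0.9 := by norm_num at *; linarith
  have hD : 0 ≤ (s + η) / s * (1 / s + (τ - 1.8378) / 2 - 0.36) := by
    apply mul_nonneg (by positivity); norm_num at *; linarith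
  have hM0 : 0 ≤ M := Finset.sum_nonneg (fun a _ => Nat.cast_nonneg _)
  rcases hM0.eq_or_lt with h | h
  · rw [← h]; simpa using hD
  have hq := quad_pos hs hs2 S (M * X / (1 / s - 0.9))
  have hF0 := F_zero_le hs hs2
  have h1 : ∑ a ∈ S, (mul a : ℝ) * F s a.im ≤ -(M * X) := by
    have : -(M * X) = ∑ a ∈ S, (mul a : ℝ) * (-X) := by rw [hM, ← Finset.sum_mul]; ring
    rw [this]
    apply Finset.sum_le_sum
    intro a ha
    exact mul_le_mul_of_nonneg_left (hS a ha).2.2.2 (Nat.cast_nonneg _)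
  have hE := exp_ge hτ
  have hin : ∀ a ∈ S, ∑ b ∈ S, (mul b : ℝ) * pk s (a.im - b.im) ≤
      (s + η) / s * (1 / s + (τ - 1.8378) / 2 - 0.36) := by
    intro a ha
    obtain ⟨ha1, ha2, ha3, ha4⟩ := hS a ha
    have g1 : ∑ b ∈ S, (mul b : ℝ) * pk s (a.im - b.im) ≤
        ∑ b ∈ S, (s + η) / s * ((mul b : ℝ) * gz s a.im b) := by
      apply Finset.sum_le_sum
      intro b hb
      obtain ⟨hb1, hb2, hb3, hb4⟩ := hS b hb
      have := pk_compare (v := a.im - b.im) hs (by linarith [(xi_zero_re hb1).2]) hb2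
      have e : gz s a.im b = pk (s + (1 - b.re)) (a.im - b.im) := by
        unfold gz; congr 1; ring
      rw [e]
      have := mul_le_mul_of_nonneg_left this (Nat.cast_nonneg (α := ℝ) (mul b))
      linarith
    refine g1.trans ?_
    rw [← Finset.mul_sum]
    apply mul_le_mul_of_nonneg_left _ (by positivity)
    have g2 := (summable_gz s a.im).sum_le_tsum S (fun b _ => gz_nonneg hs.le a.im b)
    have g3 := sum_gz_le hs hs2 (by linarith) ha3
    have g4 := log_exp_div τ
    have hγ := no_low_zero ha1
    have hg0 : a.im ≠ 0 := by
      intro h; rw [h, abs_zero] at hγ; norm_num at hγ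
    have g5 := pk_le hs.le hg0
    have g6 : s / a.im ^ 2 ≤ 0.05 := by
      have : (1.69:ℝ) ≤ a.im ^ 2 := by rw [← sq_abs]; nlinarith
      rw [div_le_iff₀ (by linarith)]
      norm_num at *; linarith
    norm_num at *; linarith
  have h2 : ∑ a ∈ S, ∑ b ∈ S, (mul a : ℝ) * mul b * F s (a.im - b.im) ≤
      M * ((s + η) / s * (1 / s + (τ - 1.8378) / 2 - 0.36)) +
      M * M * (277/1000 * (τ - 1.1446) + 0.025) := by
    have k1 : ∑ a ∈ S, ∑ b ∈ S, (mul a : ℝ) * mul b * F s (a.im - b.im) ≤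
        ∑ a ∈ S, (mul a : ℝ) * ((s + η) / s * (1 / s + (τ - 1.8378) / 2 - 0.36) +
          M * (277/1000 * (τ - 1.1446) + 0.025)) := by
      apply Finset.sum_le_sum
      intro a ha
      have k2 : ∑ b ∈ S, (mul a : ℝ) * mul b * F s (a.im - b.im) =
          (mul a : ℝ) * ∑ b ∈ S, (mul b : ℝ) * F s (a.im - b.im) := by
        rw [Finset.mul_sum]; apply Finset.sum_congr rfl; intros; ring
      rw [k2]
      apply mul_le_mul_of_nonneg_left _ (Nat.cast_nonneg _)
      refine le_trans ?_ (add_le_add_left (hin a ha) _)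
      rw [hM, Finset.sum_mul, ← Finset.sum_add_distrib]
      apply Finset.sum_le_sum
      intro b hb
      rw [← mul_add]
      apply mul_le_mul_of_nonneg_left _ (Nat.cast_nonneg _)
      have k3 := F_le (v := a.im - b.im) (V := 2 * Real.exp τ) hs hs2 (by linarith) (by
        have := (abs_sub (a.im) (b.im)); linarith [(hS a ha).2.2.1, (hS b hb).2.2.1])
      have k4 : Real.log (2 * Real.exp τ / (2 * π)) ≤ τ - 1.1446 := by
        rw [mul_div_mul_left _ _ (by norm_num), Real.log_div (Real.exp_ne_zero _) Real.pi_ne_zero,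
          Real.log_exp]
        linarith [log_pi]
      norm_num at *; linarith
    refine k1.trans (le_of_eq ?_)
    rw [← Finset.sum_mul]; ring
  have h3 : (M * X / (1 / s - 0.9)) ^ 2 * F s 0 ≤ (M * X / (1 / s - 0.9)) ^ 2 * (1 / s - 0.9) := by
    gcongr
  have hA : 0 ≤ M * X / (1 / s - 0.9) := by positivity
  have h4 : 2 * (M * X / (1 / s - 0.9)) * ∑ a ∈ S, (mul a : ℝ) * F s a.im ≤
      2 * (M * X / (1 / s - 0.9)) * (-(M * X)) := by gcongr
  have h5 : (M * X / (1 / s - 0.9)) ^ 2 * (1 / s - 0.9) + 2 * (M * X / (1 / s - 0.9)) * (-(M * X)) =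
      - (M * (M * (X ^ 2 / (1 / s - 0.9)))) := by
    field_simp; ring
  have h6 : M * (M * (X ^ 2 / (1 / s - 0.9) - (277/1000 * (τ - 1.1446) + 0.025))) ≤
      M * ((s + η) / s * (1 / s + (τ - 1.8378) / 2 - 0.36)) := by
    linarith
  exact le_of_mul_le_mul_left h6 h

lemma F_zero_bound {s τ : ℝ} (hs : 0 < s) (hs2 : s ≤ 7/100) (hτ : 8 ≤ τ) {a : ℂ} (ha : xi a = 0)
    (hre : 1/2 < a.re) (hv : |a.im| ≤ Real.exp τ) (hv2 : Real.exp 8 ≤ |a.im|) :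
    F s a.im ≤ -(1 / (s + (1 - a.re)) - 277/1000 * (τ - 1.8378) - s - 0.0251) := by
  have h := F_le_zero hs hs2 (by linarith [exp_ge hτ]) ha hre hv
  have hl := log_exp_div τ
  have hE := exp8
  have hg0 : a.im ≠ 0 := by
    intro h; rw [h, abs_zero] at hv2; linarith
  have g5 := pk_le hs.le hg0
  have g6 : s / a.im ^ 2 ≤ 0.0001 := by
    have : (2900:ℝ) ^ 2 ≤ a.im ^ 2 := by rw [← sq_abs a.im]; gcongr; linarith
    rw [div_le_iff₀ (by linarith)]
    norm_num at *; linarith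
  norm_num at *; linarith

end PsiEps


namespace PsiEps
open Complex Filter Topology
open scoped ComplexConjugate Nat Real

lemma abs_im_pos {a : ℂ} (ha : xi a = 0) : 0 < |a.im| :=
  lt_of_lt_of_le (by norm_num) (no_low_zero ha)

lemma zf_log {a : ℂ} (ha : xi a = 0) (h8 : 8 ≤ Real.log |a.im|) :
    701.6 ≤ 2000 * (1 - a.re) * (3.601 * Real.log |a.im| - 9.15) := by
  have hpos : 0 < |a.im| := abs_im_pos ha
  have h := zero_free_high ha h8 (Real.exp_log hpos).symm
  have : 0 < 3.601 * Real.log |a.im| - 9.15 := by norm_num at *; linarith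
  rw [div_le_iff₀ this] at h
  norm_num at *
  linarith

lemma level_range {a : ℂ} {Y : ℝ} (ha : xi a = 0) (h8 : 8 ≤ Real.log |a.im|)
    (hY : 2000 * (1 - a.re) + Real.log |a.im| ≤ Y) :
    701.6 ≤ (Y - Real.log |a.im|) * (3.601 * Real.log |a.im| - 9.15) := by
  refine (zf_log ha h8).trans ?_
  apply mul_le_mul_of_nonneg_right (by linarith)
  norm_num at *; linarith

/-- every zero with height at least `exp 8` has level at least `30.44` -/
lemma level_min {a : ℂ} (ha : xi a = 0) (h8 : 8 ≤ Real.log |a.im|) :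
    30.44 ≤ 2000 * (1 - a.re) + Real.log |a.im| := by
  by_contra hc
  push Not at hc
  have h := level_range ha h8 hc.le
  generalize Real.log |a.im| = l at h
  norm_num at h
  nlinarith [sq_nonneg (l - 16.4999)]

lemma density_level {s Y lo hi X η : ℝ} (hs : 0 < s) (hs2 : s ≤ 7/100) (hhi : 8 ≤ hi)
    (hY : Y ≤ 100) (hX : 0 ≤ X) (hη : (Y - lo) / 2000 ≤ η) (hη0 : 0 ≤ η)
    (hr : ∀ l : ℝ, 8 ≤ l → 701.6 ≤ (Y - l) * (3.601 * l - 9.15) → lo ≤ l ∧ l ≤ hi)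
    (hXl : ∀ l : ℝ, lo ≤ l → l ≤ hi → l < Y →
      (s + (Y - l) / 2000) * (X + 277/1000 * (l - 1.8378) + s + 0.0251) ≤ 1)
    (S : Finset ℂ) (hS : ∀ a ∈ S, xi a = 0 ∧ 8 ≤ Real.log |a.im| ∧
      2000 * (1 - a.re) + Real.log |a.im| ≤ Y) :
    (∑ a ∈ S, (mul a : ℝ)) * (X ^ 2 / (1 / s - 0.9) - (277/1000 * (hi - 1.1446) + 0.025)) ≤
      (s + η) / s * (1 / s + (hi - 1.8378) / 2 - 0.36) := by
  apply density hs hs2 hhi S _ hX hη0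
  intro a haS
  obtain ⟨ha, h8, hl⟩ := hS a haS
  obtain ⟨hre0, hre1⟩ := xi_zero_re ha
  have hpos : 0 < |a.im| := abs_im_pos ha
  obtain ⟨hlo, hhi'⟩ := hr _ h8 (level_range ha h8 hl)
  have hexp := Real.exp_log hpos
  refine ⟨ha, by linarith, ?_, ?_⟩
  · rw [← hexp]; exact Real.exp_le_exp.2 hhi'
  have h := F_zero_bound hs hs2 h8 ha (by linarith) hexp.ge (by rw [← hexp]; exact Real.exp_le_exp.2 h8)
  refine h.trans ?_
  have h2 := hXl _ hlo hhi' (by linarith)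
  have hp : 0 < s + (Y - Real.log |a.im|) / 2000 := by
    have : 0 < Y - Real.log |a.im| := by linarith
    positivity
  have h3 : 1 / (s + (Y - Real.log |a.im|) / 2000) ≤ 1 / (s + (1 - a.re)) := by
    apply one_div_le_one_div_of_le (by linarith)
    linarith
  have h4 := (le_div_iff₀' hp).2 h2
  linarith

lemma density_A (S : Finset ℂ) (hS : ∀ a ∈ S, xi a = 0 ∧ 8 ≤ Real.log |a.im| ∧
      2000 * (1 - a.re) + Real.log |a.im| ≤ 34) : ∑ a ∈ S, (mul a : ℝ) ≤ 9 := by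
  have h := density_level (s := 0.028) (Y := 34) (lo := 11) (hi := 25.6) (X := 22.7) (η := 0.0115)
    (by norm_num) (by norm_num) (by norm_num) (by norm_num) (by norm_num) (by norm_num)
    (by norm_num) (by
      intro l hl h
      norm_num at *
      constructor <;> nlinarith) (by
      intro l hl h _
      norm_num at *
      nlinarith) S hS
  norm_num at h
  linarith

lemma density_B (S : Finset ℂ) (hS : ∀ a ∈ S, xi a = 0 ∧ 8 ≤ Real.log |a.im| ∧
      2000 * (1 - a.re) + Real.log |a.im| ≤ 42) : ∑ a ∈ S, (mul a : ℝ) ≤ 45 := by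
  have h := density_level (s := 0.024) (Y := 42) (lo := 8.3) (hi := 36.3) (X := 22.6) (η := 0.01685)
    (by norm_num) (by norm_num) (by norm_num) (by norm_num) (by norm_num) (by norm_num)
    (by norm_num) (by
      intro l hl h
      norm_num at *
      constructor <;> nlinarith) (by
      intro l hl h _
      norm_num at *
      nlinarith) S hS
  norm_num at h
  linarith

/-- the boundary of the exceptional region at height `exp (k+1)`, `y = k + 1 - 1.8378` -/
noncomputable def etak (k : ℕ) : ℝ := 0.5 / ((k:ℝ) - 0.8378) - 0.3 / ((k:ℝ) - 0.8378) ^ 2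

lemma density_E_num {M y t : ℝ} (hy7 : 7.16 ≤ y) (hy63 : y ≤ 63.17) (ht0 : 0 < t) (hM0 : 0 ≤ M)
    (h : M * ((0.913476 * y + 0.37) ^ 2 / (y / 0.34 - 0.9) -
      (277/1000 * (y + 1.8378 - 1.1446) + 0.025)) ≤ (0.34 * t + (0.5 * t - 0.3 * t ^ 2)) / (0.34 * t) *
      (y / 0.34 + (y + 1.8378 - 1.8378) / 2 - 0.36)) : M ≤ 1100 := by
  have hs0 : 0 < 0.34 * t := by positivity
  have hf : 0 < y / 0.34 - 0.9 := by norm_num at *; linarith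
  have l1 : 0.2837 * y + 0.307 ≤ (0.913476 * y + 0.37) ^ 2 / (y / 0.34 - 0.9) := by
    rw [le_div_iff₀ hf]
    clear h hf
    norm_num at *
    nlinarith
  have l2 : 0.0067 * y + 0.0899 ≤ (0.913476 * y + 0.37) ^ 2 / (y / 0.34 - 0.9) -
      (277/1000 * (y + 1.8378 - 1.1446) + 0.025) := by
    generalize (0.913476 * y + 0.37) ^ 2 / (y / 0.34 - 0.9) = Q at *
    clear h hf hs0
    norm_num at *; linarith
  have l3 : (0.34 * t + (0.5 * t - 0.3 * t ^ 2)) / (0.34 * t) ≤ 2.4706 := by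
    rw [div_le_iff₀ hs0]
    clear h hf hs0 l1 l2
    norm_num at *; nlinarith
  have l4 : (0.34 * t + (0.5 * t - 0.3 * t ^ 2)) / (0.34 * t) *
      (y / 0.34 + (y + 1.8378 - 1.8378) / 2 - 0.36) ≤ 2.4706 * (y / 0.34 + y / 2) := by
    clear h l1 l2 hs0 hf
    have e0 : 0 ≤ y / 0.34 + (y + 1.8378 - 1.8378) / 2 - 0.36 := by
      clear l3; norm_num at *; linarith
    refine (mul_le_mul_of_nonneg_right l3 e0).trans ?_
    clear l3
    norm_num at *
  have l5 := (mul_le_mul_of_nonneg_left l2 hM0).trans (h.trans l4)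
  by_contra hc
  push Not at hc
  have l6 : 1100 * (0.0067 * y + 0.0899) ≤ M * (0.0067 * y + 0.0899) := by gcongr
  clear h l4 l3 l2 l1 hf hs0 ht0
  norm_num at *
  linarith

lemma density_E {k : ℕ} (h8 : 8 ≤ k) (h64 : k ≤ 64) (S : Finset ℂ)
    (hS : ∀ a ∈ S, xi a = 0 ∧ (k:ℝ) ≤ Real.log |a.im| ∧ Real.log |a.im| ≤ k + 1 ∧
      1 - a.re ≤ etak k) : ∑ a ∈ S, (mul a : ℝ) ≤ 1100 := by
  have hk8 : (8:ℝ) ≤ k := by exact_mod_cast h8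
  have hk64 : (k:ℝ) ≤ 64 := by exact_mod_cast h64
  obtain ⟨y, hy⟩ : ∃ y : ℝ, y = (k:ℝ) - 0.8378 := ⟨_, rfl⟩
  have hy7 : 7.16 ≤ y := by rw [hy]; norm_num; linarith
  have hy63 : y ≤ 63.17 := by rw [hy]; norm_num; linarith
  have hy0 : 0 < y := by linarith
  obtain ⟨t, ht⟩ : ∃ t : ℝ, t = 1 / y := ⟨_, rfl⟩
  have ht0 : 0 < t := by rw [ht]; positivity
  have ht1 : t ≤ 0.14 := by
    rw [ht, div_le_iff₀ hy0]; norm_num at *; linarith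
  have hty : t * y = 1 := by rw [ht]; field_simp
  have hη : etak k = 0.5 * t - 0.3 * t ^ 2 := by
    unfold etak; rw [← hy, ht]; field_simp
  have hs0 : 0 < 0.34 * t := by positivity
  have hτ : (k:ℝ) + 1 = y + 1.8378 := by rw [hy]; ring
  have hX : 0 ≤ 0.913476 * y + 0.37 := by positivity
  have h := density (s := 0.34 * t) (τ := k + 1) (η := etak k) (X := 0.913476 * y + 0.37)
    hs0 (by norm_num at *; linarith) (by linarith) S (by
      intro a haS
      obtain ⟨ha, hl1, hl2, he⟩ := hS a haS
      have hexp := Real.exp_log (abs_im_pos ha)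
      obtain ⟨hre0, hre1⟩ := xi_zero_re ha
      have hle : |a.im| ≤ Real.exp (k + 1) := by rw [← hexp]; exact Real.exp_le_exp.2 hl2
      have hge : Real.exp 8 ≤ |a.im| := by rw [← hexp]; exact Real.exp_le_exp.2 (by linarith)
      refine ⟨ha, he, hle, ?_⟩
      have hb := F_zero_bound (s := 0.34 * t) hs0 (by norm_num at *; linarith) (by linarith) ha (by
        rw [hη] at he; norm_num at *; nlinarith) hle hge
      refine hb.trans ?_
      have hp : 0 < 0.84 * t - 0.3 * t ^ 2 := by norm_num at *; nlinarith
      have h3 : 1 / (0.84 * t - 0.3 * t ^ 2) ≤ 1 / (0.34 * t + (1 - a.re)) := by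
        apply one_div_le_one_div_of_le (by linarith)
        rw [hη] at he; norm_num at *; linarith
      have h4 : 1.190476 * y + 0.3951 + 0.34 * t ≤ 1 / (0.84 * t - 0.3 * t ^ 2) := by
        rw [le_div_iff₀ hp]
        have e : (1.190476 * y + 0.3951 + 0.34 * t) * (0.84 * t - 0.3 * t ^ 2) =
          (1.190476 * (t * y) + 0.3951 * t + 0.34 * t ^ 2) * (0.84 - 0.3 * t) := by ring
        rw [e, hty]
        norm_num at *
        nlinarith [mul_nonneg ht0.le (sub_nonneg.2 ht1), _root_.mul_pos ht0 (_root_.mul_pos ht0 ht0)]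
      rw [hτ]
      norm_num at *
      linarith) hX (by rw [hη]; norm_num at *; nlinarith)
  rw [hτ, hη] at h
  have hs1 : 1 / (0.34 * t) = y / 0.34 := by rw [ht]; field_simp
  rw [hs1] at h
  exact density_E_num hy7 hy63 ht0 (Finset.sum_nonneg (fun a _ => Nat.cast_nonneg _)) h

end PsiEps

namespace PsiEps
open Complex Filter Topology
open scoped ComplexConjugate Nat Real


def nk (k : ℕ) : ℕ := (80000000 * (10000 * k - 8378) - 480000000000) / (10000 * k - 8378) ^ 2 + (8 * k - 233)

def gsum (N : ℕ) : ℕ → ℕ → ℕ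
  | 0, _ => 0
  | n + 1, k => 8825 ^ nk k * 10000 ^ (N - nk k) * 22667 * (5000 * k - 5389) + gsum N n (k + 1)

lemma gsum_le : gsum 1100 57 8 * 10 ^ 13 ≤ 42 * 10 ^ 7 * 10000 ^ 1100 := by decide +kernel

lemma nk_le : ∀ i < 57, nk (8 + i) ≤ 1100 := by decide +kernel

lemma gsum_eq (N n k : ℕ) (hk : 2 ≤ k) (h : ∀ i < n, nk (k + i) ≤ N) : (gsum N n k : ℝ) = 10000 ^ N * 10 ^ 8 *
    ∑ i ∈ Finset.range n, (0.8825:ℝ) ^ nk (k + i) * (2.2667 * (((k + i : ℕ):ℝ) / 2 - 0.5389)) := by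
  induction n generalizing k with
  | zero => simp [gsum]
  | succ n ih =>
    have h1 := ih (k + 1) (by omega) (fun i hi => by
      have := h (i + 1) (by omega)
      rwa [show k + (i + 1) = k + 1 + i by ring] at this)
    have h0 := h 0 (by omega)
    rw [add_zero] at h0
    have e0 : ∀ i, k + 1 + i = k + (i + 1) := by intro i; ring
    rw [Finset.sum_congr rfl (fun i _ => by rw [e0 i])] at h1
    rw [Finset.sum_range_succ', gsum, Nat.cast_add, h1, add_zero]
    have e : (10000:ℝ) ^ N = 10000 ^ nk k * 10000 ^ (N - nk k) := by
      rw [← pow_add, Nat.add_sub_cancel' h0]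
    have e2 : (0.8825:ℝ) ^ nk k * 10000 ^ nk k = 8825 ^ nk k := by
      rw [← mul_pow]; norm_num
    have e3 : ((5000 * k - 5389 : ℕ) : ℝ) = 5000 * k - 5389 := by
      rw [Nat.cast_sub (by omega)]; norm_num
    have hk : ((8825 ^ nk k * 10000 ^ (N - nk k) * 22667 * (5000 * k - 5389) : ℕ) : ℝ) =
        10000 ^ N * 10 ^ 8 * ((0.8825:ℝ) ^ nk k * (2.2667 * ((k:ℝ) / 2 - 0.5389))) := by
      rw [Nat.cast_mul, Nat.cast_mul, Nat.cast_mul, Nat.cast_pow, Nat.cast_pow, e3, e]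
      simp only [Nat.cast_ofNat]
      rw [← e2]
      ring
    rw [hk]
    ring

lemma gen_sum : ∑ i ∈ Finset.range 57, (0.8825:ℝ) ^ nk (8 + i) * (2.2667 * (((8 + i : ℕ):ℝ) / 2 - 0.5389)) ≤ 4.2e-13 := by
  have h1 := gsum_eq 1100 57 8 (by norm_num) nk_le
  have h2 : (gsum 1100 57 8 : ℝ) * 10 ^ 13 ≤ 42 * 10 ^ 7 * 10000 ^ 1100 := by exact_mod_cast gsum_le
  rw [h1] at h2
  have hp : (0:ℝ) < 10000 ^ 1100 := by positivity
  generalize (10000:ℝ) ^ 1100 = P at *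
  generalize ∑ i ∈ Finset.range 57, (0.8825:ℝ) ^ nk (8 + i) * (2.2667 * (((8 + i : ℕ):ℝ) / 2 - 0.5389)) = Q at *
  by_contra hc
  push Not at hc
  have := mul_lt_mul_of_pos_left hc hp
  clear h1 hc
  norm_num at h2 this
  linarith

lemma exp_neg_le {n : ℕ} {x : ℝ} (h : (n:ℝ) / 8 ≤ x) : Real.exp (-x) ≤ 0.8825 ^ n := by
  have hq : Real.exp (-(1/8)) ≤ 0.8825 := by
    have e : Real.exp (-(1/8)) ^ 8 * Real.exp 1 = 1 := by
      rw [← Real.exp_nat_mul, ← Real.exp_add]; norm_num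
    have h1 := Real.exp_one_gt_d9
    have hp := Real.exp_pos (-(1/8))
    by_contra hc
    push Not at hc
    have : (0.8825:ℝ) ^ 8 < Real.exp (-(1/8)) ^ 8 := by gcongr
    norm_num at *
    nlinarith
  calc Real.exp (-x) ≤ Real.exp (n * (-(1/8))) := by
        apply Real.exp_le_exp.2; linarith
    _ = Real.exp (-(1/8)) ^ n := by rw [Real.exp_nat_mul]
    _ ≤ _ := by gcongr

/-- the weight attached to a zero -/
noncomputable def W (a : ℂ) : ℝ :=
  Real.exp (-(2000 * (1 - a.re))) * min (1 / |a.im|) (Real.exp (233/8) / a.im ^ 2)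

lemma W_nonneg (a : ℂ) : 0 ≤ W a := by unfold W; positivity

lemma W_le1 {a : ℂ} (ha : xi a = 0) : W a ≤ Real.exp (-(2000 * (1 - a.re) + Real.log |a.im|)) := by
  unfold W
  have hp := abs_im_pos ha
  have : Real.exp (-(2000 * (1 - a.re) + Real.log |a.im|)) =
      Real.exp (-(2000 * (1 - a.re))) * (1 / |a.im|) := by
    rw [neg_add, Real.exp_add, Real.exp_neg (Real.log |a.im|), Real.exp_log hp, one_div]
  rw [this]
  gcongr
  exact min_le_left _ _

lemma W_le2 {a : ℂ} (ha : xi a = 0) : W a ≤ Real.exp (-(2000 * (1 - a.re))) *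
    Real.exp (233/8 - 2 * Real.log |a.im|) := by
  unfold W
  have hp := abs_im_pos ha
  have : Real.exp (233/8 - 2 * Real.log |a.im|) = Real.exp (233/8) / a.im ^ 2 := by
    rw [Real.exp_sub, two_mul, Real.exp_add, Real.exp_log hp, ← sq, sq_abs]
  rw [this]
  gcongr
  exact min_le_right _ _

lemma inv_le_ker {a : ℂ} (ha : xi a = 0) {τ : ℝ} (h : |Real.log |a.im| - τ| ≤ 1/2) :
    Real.exp (-Real.log |a.im|) ≤ 2.2667 * ker (Real.exp τ) a := by
  have hp := abs_im_pos ha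
  have hl := Real.exp_log hp
  set l := Real.log |a.im| with hldef
  have e1 : a.im ^ 2 = Real.exp (2 * l) := by
    rw [← sq_abs, ← hl, ← Real.exp_nat_mul]; norm_num
  have hc : 2 * Real.cosh (l - τ) ≤ 2.2667 := by
    have h1 := Real.cosh_le_exp_half_sq (l - τ)
    have h2 : Real.exp ((l - τ) ^ 2 / 2) ≤ Real.exp (1/8) := by
      apply Real.exp_le_exp.2
      have : (l - τ) ^ 2 ≤ (1/2) ^ 2 := by rw [← sq_abs]; gcongr
      linarith
    have h3 : Real.exp (1/8) ≤ 1.1333 := by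
      have e : Real.exp (1/8) ^ 8 = Real.exp 1 := by
        rw [← Real.exp_nat_mul]; norm_num
      have h1 := Real.exp_one_lt_d9
      by_contra hc
      push Not at hc
      have : (1.1333:ℝ) ^ 8 < Real.exp (1/8) ^ 8 := by gcongr
      norm_num at *
      linarith
    have h4 := h1.trans (h2.trans h3)
    norm_num at h4 ⊢; linarith
  have e2 : Real.exp (-l) * ((Real.exp τ) ^ 2 + a.im ^ 2) = 2 * Real.cosh (l - τ) * Real.exp τ := by
    rw [Real.cosh_eq, e1, ← Real.exp_nat_mul, mul_add, ← Real.exp_add, ← Real.exp_add]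
    have : 2 * ((Real.exp (l - τ) + Real.exp (-(l - τ))) / 2) * Real.exp τ =
      Real.exp (-(l - τ)) * Real.exp τ + Real.exp (l - τ) * Real.exp τ := by ring
    rw [this, ← Real.exp_add, ← Real.exp_add]
    congr 2
    · push_cast; ring
    · ring
  unfold ker
  rw [mul_div_assoc', le_div_iff₀ (by positivity), e2]
  gcongr

lemma nk_le_real {k : ℕ} (h8 : 8 ≤ k) :
    (nk k : ℝ) / 8 ≤ 2000 * etak k + max 0 ((k:ℝ) - 233/8) := by
  have hk8 : (8:ℝ) ≤ k := by exact_mod_cast h8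
  unfold nk
  have h1 : (((80000000 * (10000 * k - 8378) - 480000000000) / (10000 * k - 8378) ^ 2 : ℕ) : ℝ) ≤
      8 * (2000 * etak k) := by
    refine Nat.cast_div_le.trans (le_of_eq ?_)
    have hY : ((10000 * k - 8378 : ℕ) : ℝ) = 10000 * (k - 0.8378) := by
      rw [Nat.cast_sub (by omega), Nat.cast_mul, Nat.cast_ofNat, Nat.cast_ofNat]; ring
    have hge : 480000000000 ≤ 80000000 * (10000 * k - 8378) := by
      clear hY h8
      have : 6000 ≤ 10000 * k - 8378 := by
        have h8 : 8 ≤ k := by exact_mod_cast hk8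
        omega
      calc 480000000000 = 80000000 * 6000 := by norm_num
        _ ≤ _ := Nat.mul_le_mul_left _ this
    rw [Nat.cast_sub hge, Nat.cast_pow, Nat.cast_mul, hY, Nat.cast_ofNat, Nat.cast_ofNat]
    unfold etak
    have : (k:ℝ) - 0.8378 ≠ 0 := by clear hY hge; intro h; norm_num at h; linarith
    generalize (k:ℝ) - 0.8378 = y at *
    field_simp
    ring
  have h2 : ((8 * k - 233 : ℕ) : ℝ) ≤ 8 * max 0 ((k:ℝ) - 233/8) := by
    rcases le_total 233 (8 * k) with h | h
    · rw [Nat.cast_sub h]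
      have := le_max_right 0 ((k:ℝ) - 233/8)
      push_cast
      linarith
    · rw [Nat.sub_eq_zero_of_le h]
      have := le_max_left 0 ((k:ℝ) - 233/8)
      push_cast
      linarith
  rw [Nat.cast_add]
  linarith

def PA (a : ℂ) : Prop := 8 ≤ Real.log |a.im| ∧ 2000 * (1 - a.re) + Real.log |a.im| ≤ 34
def PB (a : ℂ) : Prop := 8 ≤ Real.log |a.im| ∧ 2000 * (1 - a.re) + Real.log |a.im| ≤ 42
def PE (k : ℕ) (a : ℂ) : Prop := (k:ℝ) ≤ Real.log |a.im| ∧ Real.log |a.im| ≤ k + 1 ∧ 1 - a.re ≤ etak k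

open Classical in
noncomputable def mA (a : ℂ) : ℝ := if PA a then 0.8825 ^ 243 else 0
open Classical in
noncomputable def mB (a : ℂ) : ℝ := if PB a then 0.8825 ^ 272 else 0
open Classical in
noncomputable def mE (k : ℕ) (a : ℂ) : ℝ := if PE k a then 0.8825 ^ 336 else 0

lemma mA_nonneg (a : ℂ) : 0 ≤ mA a := by unfold mA; split_ifs <;> [exact pow_nonneg (by norm_num) _; exact le_rfl]
lemma mB_nonneg (a : ℂ) : 0 ≤ mB a := by unfold mB; split_ifs <;> [exact pow_nonneg (by norm_num) _; exact le_rfl]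
lemma mE_nonneg (k : ℕ) (a : ℂ) : 0 ≤ mE k a := by unfold mE; split_ifs <;> [exact pow_nonneg (by norm_num) _; exact le_rfl]

noncomputable def mG (k : ℕ) (a : ℂ) : ℝ := 0.8825 ^ nk k * (2.2667 * ker (Real.exp (k + 1/2)) a)

lemma ker_nonneg' {T : ℝ} (hT : 0 ≤ T) (a : ℂ) : 0 ≤ ker T a := by
  unfold ker; positivity

lemma mG_nonneg (k : ℕ) (a : ℂ) : 0 ≤ mG k a := by
  have := ker_nonneg' (Real.exp_pos (k + 1/2)).le a
  unfold mG
  exact mul_nonneg (pow_nonneg (by norm_num) _) (mul_nonneg (by norm_num) this)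

lemma W_low {a : ℂ} (ha : xi a = 0) (h : Real.log |a.im| ≤ 8) :
    W a ≤ 0.8825 ^ 280 * (50 * ker 60 a) := by
  have hp := abs_im_pos ha
  have hle : |a.im| ≤ Real.exp 8 := by rw [← Real.exp_log hp]; exact Real.exp_le_exp.2 h
  have hz := zero_free_low ha hle
  have h13 := no_low_zero ha
  have h2990 : |a.im| ≤ 2990 := by
    refine hle.trans ?_
    have h : Real.exp 8 = Real.exp 1 ^ 8 := by rw [← Real.exp_nat_mul]; norm_num
    have := Real.exp_one_lt_d9
    rw [h]
    calc Real.exp 1 ^ 8 ≤ 2.719 ^ 8 := by gcongr; norm_num at *; linarith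
      _ ≤ _ := by norm_num
  refine (W_le1 ha).trans ?_
  rw [neg_add, Real.exp_add, Real.exp_neg (Real.log |a.im|), Real.exp_log hp]
  have h1 : Real.exp (-(2000 * (1 - a.re))) ≤ 0.8825 ^ 280 :=
    exp_neg_le (by norm_num at *; linarith)
  have h2 : |a.im|⁻¹ ≤ 50 * ker 60 a := by
    unfold ker
    rw [← sq_abs a.im, mul_div_assoc', inv_eq_one_div, div_le_div_iff₀ hp (by positivity)]
    clear h1 h hz hle
    generalize |a.im| = g at *
    norm_num at *
    nlinarith
  have := Real.exp_pos (-(2000 * (1 - a.re)))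
  gcongr

lemma W_tail {a : ℂ} (ha : xi a = 0) (h : 65 ≤ Real.log |a.im|) :
    W a ≤ 0.8825 ^ 287 * (2 * ker (Real.exp 65) a) := by
  have hp := abs_im_pos ha
  have hre := (xi_zero_re ha).2
  refine (W_le2 ha).trans ?_
  have h1 : Real.exp (-(2000 * (1 - a.re))) ≤ 1 := by
    rw [Real.exp_le_one_iff]; linarith
  have h2 : Real.exp (233/8 - 2 * Real.log |a.im|) = Real.exp (-(287/8)) * (Real.exp 65 / a.im ^ 2) := by
    have : a.im ^ 2 = Real.exp (2 * Real.log |a.im|) := by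
      rw [two_mul, Real.exp_add, Real.exp_log hp, ← sq, sq_abs]
    rw [this, ← Real.exp_sub, ← Real.exp_add]
    congr 1; ring
  have h3 : Real.exp 65 / a.im ^ 2 ≤ 2 * ker (Real.exp 65) a := by
    unfold ker
    have hi : Real.exp 65 ≤ |a.im| := by rw [← Real.exp_log hp]; exact Real.exp_le_exp.2 h
    have hsq : Real.exp 65 ^ 2 ≤ a.im ^ 2 := by rw [← sq_abs a.im]; gcongr
    have hpos : 0 < a.im ^ 2 := by rw [← sq_abs]; positivity
    rw [mul_div_assoc', div_le_div_iff₀ hpos (by positivity)]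
    nlinarith [Real.exp_pos 65]
  have h4 : Real.exp (-(287/8)) ≤ 0.8825 ^ 287 := exp_neg_le (by norm_num)
  rw [h2]
  calc _ ≤ 1 * (Real.exp (-(287/8)) * (Real.exp 65 / a.im ^ 2)) := by gcongr
    _ ≤ _ := by rw [one_mul]; gcongr

lemma W_mid {a : ℂ} (ha : xi a = 0) {k : ℕ} (h8 : 8 ≤ k) (h1 : (k:ℝ) ≤ Real.log |a.im|)
    (h2 : Real.log |a.im| ≤ k + 1) : W a ≤ mA a + mB a + mE k a + mG k a := by
  have hk8 : (8:ℝ) ≤ k := by exact_mod_cast h8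
  have n1 := mA_nonneg a
  have n2 := mB_nonneg a
  have n3 := mE_nonneg k a
  have n4 := mG_nonneg k a
  have hW := W_le1 ha
  rcases le_or_gt (1 - a.re) (etak k) with he | he
  · rcases le_or_gt (2000 * (1 - a.re) + Real.log |a.im|) 34 with hA | hA
    · have : W a ≤ mA a := by
        unfold mA
        rw [if_pos ⟨by linarith, hA⟩]
        refine hW.trans (exp_neg_le ?_)
        have := level_min ha (by linarith)
        norm_num at *; linarith
      linarith
    · rcases le_or_gt (2000 * (1 - a.re) + Real.log |a.im|) 42 with hB | hB
      · have : W a ≤ mB a := by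
          unfold mB
          rw [if_pos ⟨by linarith, hB⟩]
          refine hW.trans (exp_neg_le ?_)
          exact le_trans (by norm_num : ((272:ℕ):ℝ)/8 ≤ 34) hA.le
        linarith
      · have : W a ≤ mE k a := by
          unfold mE
          rw [if_pos ⟨h1, h2, he⟩]
          refine hW.trans (exp_neg_le ?_)
          exact le_trans (by norm_num : ((336:ℕ):ℝ)/8 ≤ 42) hB.le
        linarith
  · have : W a ≤ mG k a := by
      unfold mG
      have hk := inv_le_ker ha (τ := k + 1/2) (by rw [abs_le]; constructor <;> linarith)
      have hn := nk_le_real h8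
      have hm : W a ≤ Real.exp (-(2000 * etak k + max 0 ((k:ℝ) - 233/8))) *
          Real.exp (-Real.log |a.im|) := by
        rw [← Real.exp_add]
        rcases max_choice 0 ((k:ℝ) - 233/8) with hm | hm
        · rw [hm]
          refine hW.trans (Real.exp_le_exp.2 ?_)
          linarith
        · rw [hm]
          refine (W_le2 ha).trans ?_
          rw [← Real.exp_add]
          apply Real.exp_le_exp.2
          linarith
      refine hm.trans ?_
      have := exp_neg_le hn
      gcongr
    linarith

lemma W_le_maj {a : ℂ} (ha : xi a = 0) :
    W a ≤ 0.8825 ^ 280 * (50 * ker 60 a) + 0.8825 ^ 287 * (2 * ker (Real.exp 65) a) + mA a + mB a +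
      ∑ i ∈ Finset.range 57, mE (8 + i) a + ∑ i ∈ Finset.range 57, mG (8 + i) a := by
  have n1 := mA_nonneg a
  have n2 := mB_nonneg a
  have n3 : 0 ≤ ∑ i ∈ Finset.range 57, mE (8 + i) a := Finset.sum_nonneg (fun i _ => mE_nonneg _ a)
  have n4 : 0 ≤ ∑ i ∈ Finset.range 57, mG (8 + i) a := Finset.sum_nonneg (fun i _ => mG_nonneg _ a)
  have n5 : 0 ≤ (0.8825:ℝ) ^ 280 * (50 * ker 60 a) := by
    have := ker_nonneg' (T := 60) (by norm_num) a
    exact mul_nonneg (pow_nonneg (by norm_num) _) (mul_nonneg (by norm_num) this)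
  have n6 : 0 ≤ (0.8825:ℝ) ^ 287 * (2 * ker (Real.exp 65) a) := by
    have := ker_nonneg' (Real.exp_pos 65).le a
    exact mul_nonneg (pow_nonneg (by norm_num) _) (mul_nonneg (by norm_num) this)
  rcases le_or_gt (Real.log |a.im|) 8 with h | h
  · have := W_low ha h
    linarith
  rcases le_or_gt 65 (Real.log |a.im|) with h' | h'
  · have := W_tail ha h'
    linarith
  have hf1 := Nat.floor_le (by linarith : 0 ≤ Real.log |a.im|)
  have hf2 := Nat.lt_floor_add_one (Real.log |a.im|)
  have hf8 : 8 ≤ ⌊Real.log |a.im|⌋₊ := Nat.le_floor (by exact_mod_cast h.le)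
  have hf65 : ⌊Real.log |a.im|⌋₊ < 65 := (Nat.floor_lt (by linarith)).2 (by exact_mod_cast h')
  obtain ⟨i, hi⟩ := Nat.exists_eq_add_of_le hf8
  have hi57 : i ∈ Finset.range 57 := by rw [Finset.mem_range]; omega
  have hW := W_mid ha hf8 hf1 hf2.le
  rw [hi] at hW
  have m1 := Finset.single_le_sum (f := fun i => mE (8 + i) a) (fun i _ => mE_nonneg _ a) hi57
  have m2 := Finset.single_le_sum (f := fun i => mG (8 + i) a) (fun i _ => mG_nonneg _ a) hi57
  beta_reduce at m1 m2
  linarith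

lemma sum_ker_le {T : ℝ} (hT : 60 ≤ T) (S : Finset ℂ) :
    ∑ a ∈ S, (mul a : ℝ) * ker T a ≤ Real.log (T / (2 * π)) / 2 + 0.13 :=
  ((summable_ker (by linarith)).sum_le_tsum S (fun a _ => ker_nonneg (by linarith) a)).trans (count_le hT)

lemma sum_ker_exp {τ : ℝ} (hτ : 8 ≤ τ) (S : Finset ℂ) :
    ∑ a ∈ S, (mul a : ℝ) * ker (Real.exp τ) a ≤ τ / 2 - 0.7889 := by
  have h1 := sum_ker_le (T := Real.exp τ) (by linarith [exp_ge hτ]) S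
  have h2 := log_exp_div τ
  norm_num at *; linarith

lemma sum_ker_60 (S : Finset ℂ) : ∑ a ∈ S, (mul a : ℝ) * ker 60 a ≤ 1.27 := by
  have h1 := sum_ker_le (T := 60) le_rfl S
  have h2 := log_two_pi
  have h3 : Real.log 60 = 2 * Real.log 2 + Real.log 3 + Real.log 5 := by
    rw [show (60:ℝ) = 2 ^ 2 * 3 * 5 by norm_num, Real.log_mul (by norm_num) (by norm_num),
      Real.log_mul (by norm_num) (by norm_num), Real.log_pow]
    norm_num
  rw [Real.log_div (by norm_num) (by positivity), h3] at h1
  have := Real.log_two_lt_d9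
  have := Real.log_three_lt_d9
  have := Real.log_five_lt_d9
  norm_num at *; linarith

open Classical in
lemma sum_ind_le {P : ℂ → Prop} {c B : ℝ} (hc : 0 ≤ c) (S : Finset ℂ)
    (h : ∑ a ∈ S.filter P, (mul a : ℝ) ≤ B) : ∑ a ∈ S, (mul a : ℝ) * (if P a then c else 0) ≤ c * B := by
  have : ∑ a ∈ S, (mul a : ℝ) * (if P a then c else 0) = c * ∑ a ∈ S.filter P, (mul a : ℝ) := by
    rw [Finset.mul_sum, Finset.sum_filter]
    apply Finset.sum_congr rfl
    intro a _
    split_ifs <;> ring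
  rw [this]
  gcongr

lemma final_sum (S : Finset ℂ) (hS : ∀ a ∈ S, xi a = 0) : ∑ a ∈ S, (mul a : ℝ) * W a ≤ 1.2e-12 := by
  classical
  have h0 : ∑ a ∈ S, (mul a : ℝ) * W a ≤ ∑ a ∈ S, (mul a : ℝ) * (0.8825 ^ 280 * (50 * ker 60 a) +
      0.8825 ^ 287 * (2 * ker (Real.exp 65) a) + mA a + mB a +
      ∑ i ∈ Finset.range 57, mE (8 + i) a + ∑ i ∈ Finset.range 57, mG (8 + i) a) := by
    apply Finset.sum_le_sum
    intro a ha
    exact mul_le_mul_of_nonneg_left (W_le_maj (hS a ha)) (Nat.cast_nonneg _)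
  have hA : ∑ a ∈ S, (mul a : ℝ) * mA a ≤ 0.8825 ^ 243 * 9 := by
    unfold mA
    convert sum_ind_le (P := PA) (c := 0.8825 ^ 243) (B := 9) (by positivity) S ?_
    apply density_A
    intro a ha
    rw [Finset.mem_filter] at ha
    exact ⟨hS a ha.1, ha.2⟩
  have hB : ∑ a ∈ S, (mul a : ℝ) * mB a ≤ 0.8825 ^ 272 * 45 := by
    unfold mB
    convert sum_ind_le (P := PB) (c := 0.8825 ^ 272) (B := 45) (by positivity) S ?_
    apply density_B
    intro a ha
    rw [Finset.mem_filter] at ha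
    exact ⟨hS a ha.1, ha.2⟩
  have hE : ∀ i ∈ Finset.range 57, ∑ a ∈ S, (mul a : ℝ) * mE (8 + i) a ≤ 0.8825 ^ 336 * 1100 := by
    intro i hi
    rw [Finset.mem_range] at hi
    unfold mE
    convert sum_ind_le (P := PE (8 + i)) (c := 0.8825 ^ 336) (B := 1100) (by positivity) S ?_
    apply density_E (k := 8 + i) (by omega) (by omega)
    intro a ha
    rw [Finset.mem_filter] at ha
    exact ⟨hS a ha.1, ha.2⟩
  have hG : ∀ i ∈ Finset.range 57, ∑ a ∈ S, (mul a : ℝ) * mG (8 + i) a ≤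
      0.8825 ^ nk (8 + i) * (2.2667 * (((8 + i : ℕ):ℝ) / 2 - 0.5389)) := by
    intro i hi
    have : ∑ a ∈ S, (mul a : ℝ) * mG (8 + i) a = 0.8825 ^ nk (8 + i) *
        (2.2667 * ∑ a ∈ S, (mul a : ℝ) * ker (Real.exp ((8 + i : ℕ) + 1/2)) a) := by
      rw [Finset.mul_sum, Finset.mul_sum]
      apply Finset.sum_congr rfl
      intro a _
      unfold mG; ring
    rw [this]
    have h8 : (8:ℝ) ≤ ((8 + i : ℕ) : ℝ) := by push_cast; linarith [Nat.cast_nonneg (α := ℝ) i]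
    have := sum_ker_exp (τ := ((8 + i : ℕ):ℝ) + 1/2) (by linarith) S
    gcongr
    norm_num at *
    linarith
  have hG' := (Finset.sum_le_sum hG).trans gen_sum
  have hE' := Finset.sum_le_sum hE
  have hL := sum_ker_60 S
  have hT := sum_ker_exp (τ := 65) (by norm_num) S
  rw [Finset.sum_const, Finset.card_range] at hE'
  have e : ∑ a ∈ S, (mul a : ℝ) * (0.8825 ^ 280 * (50 * ker 60 a) +
      0.8825 ^ 287 * (2 * ker (Real.exp 65) a) + mA a + mB a +
      ∑ i ∈ Finset.range 57, mE (8 + i) a + ∑ i ∈ Finset.range 57, mG (8 + i) a) =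
      0.8825 ^ 280 * (50 * ∑ a ∈ S, (mul a : ℝ) * ker 60 a) +
      0.8825 ^ 287 * (2 * ∑ a ∈ S, (mul a : ℝ) * ker (Real.exp 65) a) +
      ∑ a ∈ S, (mul a : ℝ) * mA a + ∑ a ∈ S, (mul a : ℝ) * mB a +
      ∑ i ∈ Finset.range 57, ∑ a ∈ S, (mul a : ℝ) * mE (8 + i) a +
      ∑ i ∈ Finset.range 57, ∑ a ∈ S, (mul a : ℝ) * mG (8 + i) a := by
    rw [Finset.sum_comm (s := Finset.range 57), Finset.sum_comm (s := Finset.range 57)]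
    simp only [Finset.mul_sum, ← Finset.sum_add_distrib]
    apply Finset.sum_congr rfl
    intro a _
    simp only [mul_add, Finset.mul_sum]
    ring
  rw [e] at h0
  have c1 : (0.8825:ℝ) ^ 280 * (50 * ∑ a ∈ S, (mul a : ℝ) * ker 60 a) ≤ 0.8825 ^ 280 * (50 * 1.27) :=
    mul_le_mul_of_nonneg_left (mul_le_mul_of_nonneg_left hL (by norm_num)) (pow_nonneg (by norm_num) _)
  have c2 : (0.8825:ℝ) ^ 287 * (2 * ∑ a ∈ S, (mul a : ℝ) * ker (Real.exp 65) a) ≤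
      0.8825 ^ 287 * (2 * (65 / 2 - 0.7889)) :=
    mul_le_mul_of_nonneg_left (mul_le_mul_of_nonneg_left hT (by norm_num)) (pow_nonneg (by norm_num) _)
  have num : (0.8825:ℝ) ^ 280 * (50 * 1.27) + 0.8825 ^ 287 * (2 * (65 / 2 - 0.7889)) +
      0.8825 ^ 243 * 9 + 0.8825 ^ 272 * 45 + 57 * (0.8825 ^ 336 * 1100) + 4.2e-13 ≤ 1.2e-12 := by
    clear e h0 hA hB hE hG hG' hE' hL hT c1 c2
    have p : (0.8825:ℝ) ^ 243 ≤ 6.45e-14 := by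
      rw [show 243 = 81 * 3 by norm_num, pow_mul]
      calc ((0.8825:ℝ) ^ 81) ^ 3 ≤ (4.01e-5) ^ 3 := by gcongr; norm_num
        _ ≤ _ := by norm_num
    have e1 : (0.8825:ℝ) ^ 280 = 0.8825 ^ 243 * 0.8825 ^ 37 := by rw [← pow_add]
    have e2 : (0.8825:ℝ) ^ 287 = 0.8825 ^ 243 * 0.8825 ^ 44 := by rw [← pow_add]
    have e3 : (0.8825:ℝ) ^ 272 = 0.8825 ^ 243 * 0.8825 ^ 29 := by rw [← pow_add]
    have e4 : (0.8825:ℝ) ^ 336 = 0.8825 ^ 243 * 0.8825 ^ 93 := by rw [← pow_add]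
    rw [e1, e2, e3, e4]
    have p0 : (0:ℝ) ≤ 0.8825 ^ 243 := by positivity
    generalize (0.8825:ℝ) ^ 243 = P at *
    norm_num at *
    linarith
  have hE'' : ∑ i ∈ Finset.range 57, ∑ a ∈ S, (mul a : ℝ) * mE (8 + i) a ≤ 57 * (0.8825 ^ 336 * 1100) := by
    refine hE'.trans (le_of_eq ?_)
    rw [nsmul_eq_mul]; norm_cast
  exact h0.trans ((add_le_add (add_le_add (add_le_add (add_le_add (add_le_add c1 c2) hA) hB) hE'') hG').trans num)

end PsiEps


namespace PsiEps
open Complex Filter Topology MeasureTheory Set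
open scoped ComplexConjugate Nat Real

/-- dominating function for Mellin transforms on the line of real part three -/
lemma dom_integrable (K : ℝ) : IntegrableOn
    (fun t : ℝ => (Ioc (0:ℝ) 1).indicator (fun t => K * t ^ (-(1/2) : ℝ)) t) (Ioi 0) := by
  have h : IntegrableOn (fun t : ℝ => t ^ (-(1/2) : ℝ)) (Ioc 0 1) := by
    have := intervalIntegral.intervalIntegrable_rpow' (a := 0) (b := 1) (r := -(1/2)) (by norm_num)
    rwa [intervalIntegrable_iff_integrableOn_Ioc_of_le (by norm_num)] at this
  have h2 : Integrable ((Ioc (0:ℝ) 1).indicator (fun t : ℝ => K * t ^ (-(1/2) : ℝ))) :=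
    (integrable_indicator_iff measurableSet_Ioc).2 (h.const_mul K)
  exact h2.integrableOn

lemma kernel_bound {c : ℝ} {f : ℝ → ℂ} {s : ℂ} (hs : s.re = 3)
    (hb : ∀ t, 0 < t → t ≤ 1 → ‖f t‖ ≤ c * t ^ (-(5/2) : ℝ))
    (hz : ∀ t, t ∉ Ioc (0:ℝ) 1 → f t = 0) {t : ℝ} (ht : 0 < t) :
    ‖(t : ℂ) ^ (s - 1) • f t‖ ≤ (Ioc (0:ℝ) 1).indicator (fun t => c * t ^ (-(1/2) : ℝ)) t := by
  by_cases h : t ∈ Ioc (0:ℝ) 1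
  · rw [indicator_of_mem h, norm_smul, norm_cpow_eq_rpow_re_of_pos ht]
    have e : t ^ (-(1/2) : ℝ) = t ^ ((s - 1).re) * t ^ (-(5/2) : ℝ) := by
      rw [← Real.rpow_add ht]
      congr 1
      rw [sub_re, hs, one_re]; norm_num
    rw [e]
    have := hb t ht h.2
    have h3 : 0 < t ^ ((s - 1).re) := Real.rpow_pos_of_pos ht _
    calc _ ≤ t ^ ((s - 1).re) * (c * t ^ (-(5/2) : ℝ)) := by gcongr
      _ = _ := by ring
  · rw [indicator_of_notMem h, hz t h]; simp

lemma fam_continuousOn {ι : Type*} {f : ι → ℝ → ℂ} {c : ι → ℝ} (hc : Summable c)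
    (hb : ∀ i t, 0 < t → t ≤ 1 → ‖f i t‖ ≤ c i * t ^ (-(5/2) : ℝ))
    (hcont : ∀ i, ContinuousOn (f i) (Ioo 0 1)) :
    ContinuousOn (fun t => ∑' i, f i t) (Ioo 0 1) := by
  intro t₀ ht₀
  have hc0 : ∀ i, 0 ≤ c i := by
    intro i
    have := (norm_nonneg _).trans (hb i 1 one_pos le_rfl)
    simpa using this
  have h1 : ContinuousOn (fun t => ∑' i, f i t) (Ioo (t₀ / 2) 1) := by
    refine continuousOn_tsum (u := fun i => c i * (t₀ / 2) ^ (-(5/2) : ℝ)) ?_ (hc.mul_right _) ?_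
    · intro i
      exact (hcont i).mono (Ioo_subset_Ioo_left (by linarith [ht₀.1]))
    · intro i t ht
      have h0 : 0 < t₀ / 2 := by linarith [ht₀.1]
      refine (hb i t (by linarith [ht.1]) ht.2.le).trans ?_
      refine mul_le_mul_of_nonneg_left ?_ (hc0 i)
      exact Real.rpow_le_rpow_of_nonpos h0 ht.1.le (by norm_num)
  have h2 : ContinuousAt (fun t => ∑' i, f i t) t₀ :=
    h1.continuousAt (Ioo_mem_nhds (by linarith [ht₀.1]) ht₀.2)
  exact h2.continuousWithinAt

lemma aesm {f : ℝ → ℂ} (s : ℂ) (hcont : ContinuousOn f (Ioo 0 1))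
    (hz : ∀ t, t ∉ Ioc (0:ℝ) 1 → f t = 0) :
    AEStronglyMeasurable (fun t : ℝ => (t : ℂ) ^ (s - 1) • f t) (volume.restrict (Ioi 0)) := by
  have h1 : ContinuousOn (fun t : ℝ => (t : ℂ) ^ (s - 1) • f t) (Ioo 0 1) := by
    simp only [smul_eq_mul]
    refine ContinuousOn.mul ?_ hcont
    intro t ht
    refine ContinuousAt.continuousWithinAt ?_
    refine ContinuousAt.cpow continuous_ofReal.continuousAt continuousAt_const ?_
    exact Or.inl (by simpa using ht.1)
  have h2 := h1.aestronglyMeasurable (μ := volume) measurableSet_Ioo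
  have h3 := (aestronglyMeasurable_indicator_iff (μ := volume) measurableSet_Ioo).2 h2
  refine (h3.mono_measure Measure.restrict_le_self).congr ?_
  have h4 : ∀ᵐ t : ℝ ∂(volume.restrict (Ioi (0:ℝ))), t ≠ 1 :=
    ae_restrict_of_ae (by simp [ae_iff, measure_singleton])
  filter_upwards [h4] with t ht
  by_cases h : t ∈ Ioo (0:ℝ) 1
  · rw [indicator_of_mem h]
  · rw [indicator_of_notMem h, hz t, smul_zero]
    intro h'
    exact h ⟨h'.1, lt_of_le_of_ne h'.2 ht⟩

lemma fam_hasMellin {ι : Type*} [Countable ι] {f : ι → ℝ → ℂ} {c : ι → ℝ} (hc : Summable c)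
    (hb : ∀ i t, 0 < t → t ≤ 1 → ‖f i t‖ ≤ c i * t ^ (-(5/2) : ℝ))
    (hz : ∀ i t, t ∉ Ioc (0:ℝ) 1 → f i t = 0)
    (hcont : ∀ i, ContinuousOn (f i) (Ioo 0 1)) {s : ℂ} (hs : s.re = 3) {m : ι → ℂ}
    (hm : ∀ i, HasMellin (f i) s (m i)) :
    HasMellin (fun t => ∑' i, f i t) s (∑' i, m i) := by
  have hzt : ∀ t, t ∉ Ioc (0:ℝ) 1 → (∑' i, f i t) = 0 := by
    intro t ht
    simp [hz _ t ht]
  have hsum : ∀ t, 0 < t → t ≤ 1 → Summable (fun i => f i t) := by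
    intro t h0 h1
    exact Summable.of_norm_bounded (hc.mul_right _) (fun i => hb i t h0 h1)
  have hbt : ∀ t, 0 < t → t ≤ 1 → ‖∑' i, f i t‖ ≤ (∑' i, c i) * t ^ (-(5/2) : ℝ) := by
    intro t h0 h1
    rw [← tsum_mul_right]
    exact tsum_of_norm_bounded (hc.mul_right _).hasSum (fun i => hb i t h0 h1)
  constructor
  · refine Integrable.mono' (dom_integrable (∑' i, c i)) (aesm s (fam_continuousOn hc hb hcont) hzt) ?_
    filter_upwards [ae_restrict_mem measurableSet_Ioi] with t ht
    exact kernel_bound hs hbt hzt ht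
  · have := hasSum_integral_of_dominated_convergence (μ := volume.restrict (Ioi (0:ℝ)))
      (F := fun i (t:ℝ) => (t : ℂ) ^ (s - 1) • f i t)
      (f := fun t : ℝ => (t : ℂ) ^ (s - 1) • ∑' i, f i t)
      (fun i t => (Ioc (0:ℝ) 1).indicator (fun t => c i * t ^ (-(1/2) : ℝ)) t)
      (fun i => aesm s (hcont i) (hz i))
      (fun i => by
        filter_upwards [ae_restrict_mem measurableSet_Ioi] with t ht
        exact kernel_bound hs (hb i) (hz i) ht)
      (by
        filter_upwards with t
        by_cases h : t ∈ Ioc (0:ℝ) 1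
        · simp only [indicator_of_mem h]; exact hc.mul_right _
        · simp only [indicator_of_notMem h]; exact summable_zero)
      (by
        refine (dom_integrable (∑' i, c i)).congr ?_
        filter_upwards with t
        by_cases h : t ∈ Ioc (0:ℝ) 1
        · simp only [indicator_of_mem h]; exact tsum_mul_right.symm
        · simp only [indicator_of_notMem h]; exact tsum_zero.symm)
      (by
        filter_upwards [ae_restrict_mem measurableSet_Ioi] with t ht
        by_cases h : t ∈ Ioc (0:ℝ) 1
        · simp only [smul_eq_mul]
          exact (hsum t ht h.2).hasSum.mul_left _
        · rw [hzt t h]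
          simp only [hz _ t h, smul_zero]
          exact hasSum_zero)
    have h2 : (fun i => ∫ t : ℝ in Ioi 0, (t : ℂ) ^ (s - 1) • f i t) = m := by
      funext i
      exact (hm i).2
    rw [h2] at this
    exact this.tsum_eq.symm

end PsiEps


namespace PsiEps
open Complex Filter Topology MeasureTheory Set
open scoped ComplexConjugate Nat Real

lemma HM_add {f g : ℝ → ℂ} {s m n : ℂ} (hf : HasMellin f s m) (hg : HasMellin g s n) :
    HasMellin (fun t => f t + g t) s (m + n) := by
  have := hasMellin_add hf.1 hg.1
  rwa [hf.2, hg.2] at this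

lemma HM_sub {f g : ℝ → ℂ} {s m n : ℂ} (hf : HasMellin f s m) (hg : HasMellin g s n) :
    HasMellin (fun t => f t - g t) s (m - n) := by
  have := hasMellin_sub hf.1 hg.1
  rwa [hf.2, hg.2] at this

lemma HM_mul {f : ℝ → ℂ} {s m : ℂ} (hf : HasMellin f s m) (c : ℂ) :
    HasMellin (fun t => c * f t) s (c * m) := by
  have := hasMellin_const_smul hf.1 c
  rwa [hf.2] at this

noncomputable def pw (ω : ℂ) (t : ℝ) : ℂ := (Ioc (0:ℝ) 1).indicator (fun t : ℝ => (t:ℂ) ^ (-ω)) t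

lemma pw_hasMellin {ω s : ℂ} (h : ω.re < s.re) : HasMellin (pw ω) s (1 / (s - ω)) := by
  have := hasMellin_cpow_Ioc (-ω) (s := s) (by rw [neg_re]; linarith)
  rw [← sub_eq_add_neg] at this
  exact this

lemma pw_out {ω : ℂ} {t : ℝ} (h : t ∉ Ioc (0:ℝ) 1) : pw ω t = 0 := indicator_of_notMem h _

lemma pw_in {ω : ℂ} {t : ℝ} (h : t ∈ Ioc (0:ℝ) 1) : pw ω t = (t:ℂ) ^ (-ω) := indicator_of_mem h _

lemma pw_cont (ω : ℂ) : ContinuousOn (pw ω) (Ioo 0 1) := by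
  have : ContinuousOn (fun t : ℝ => (t:ℂ) ^ (-ω)) (Ioo 0 1) := by
    intro t ht
    refine ContinuousAt.continuousWithinAt ?_
    refine ContinuousAt.cpow continuous_ofReal.continuousAt continuousAt_const ?_
    exact Or.inl (by simpa using ht.1)
  exact this.congr (fun t ht => pw_in ⟨ht.1, ht.2.le⟩)

lemma pw_bound {ω : ℂ} (h : ω.re ≤ 5/2) {t : ℝ} (h0 : 0 < t) (h1 : t ≤ 1) :
    ‖pw ω t‖ ≤ t ^ (-(5/2) : ℝ) := by
  rw [pw_in ⟨h0, h1⟩, norm_cpow_eq_rpow_re_of_pos h0, neg_re]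
  exact Real.rpow_le_rpow_of_exponent_ge h0 h1 (by linarith)

/-- the contribution of a (possibly trivial) zero -/
noncomputable def bl (ω : ℂ) (t : ℝ) : ℂ := 1 / (ω * (ω + 1)) * (pw (ω + 1) t - pw 0 t)

lemma bl_hasMellin {ω s : ℂ} (hω : ω.re < 2) (hs : s.re = 3) :
    HasMellin (bl ω) s (1 / (ω * (ω + 1)) * (1 / (s - (ω + 1)) - 1 / (s - 0))) :=
  HM_mul (HM_sub (pw_hasMellin (by rw [add_re, one_re]; linarith))
    (pw_hasMellin (by rw [zero_re]; linarith))) _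

lemma bl_out {ω : ℂ} {t : ℝ} (h : t ∉ Ioc (0:ℝ) 1) : bl ω t = 0 := by
  unfold bl; rw [pw_out h, pw_out h]; ring

lemma bl_cont (ω : ℂ) : ContinuousOn (bl ω) (Ioo 0 1) :=
  continuousOn_const.mul ((pw_cont _).sub (pw_cont _))

lemma bl_bound {ω : ℂ} (h : ω.re ≤ 1) {t : ℝ} (h0 : 0 < t) (h1 : t ≤ 1) :
    ‖bl ω t‖ ≤ 2 / ‖ω * (ω + 1)‖ * t ^ (-(5/2) : ℝ) := by
  have e1 := pw_bound (ω := ω + 1) (by rw [add_re, one_re]; linarith) h0 h1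
  have e2 := pw_bound (ω := 0) (by rw [zero_re]; norm_num) h0 h1
  have e3 := norm_sub_le (pw (ω + 1) t) (pw 0 t)
  unfold bl
  rw [norm_mul, norm_div, norm_one]
  calc _ ≤ 1 / ‖ω * (ω + 1)‖ * (2 * t ^ (-(5/2) : ℝ)) := by gcongr; linarith
    _ = _ := by ring

/-- the contribution of an integer -/
noncomputable def fL (n : ℕ) (t : ℝ) : ℂ :=
  (Ioc (0:ℝ) 1).indicator (fun t : ℝ => ((lam n * max (1 / t - n) 0 : ℝ) : ℂ)) t

lemma fL_out {n : ℕ} {t : ℝ} (h : t ∉ Ioc (0:ℝ) 1) : fL n t = 0 := indicator_of_notMem h _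

lemma fL_in {n : ℕ} {t : ℝ} (h : t ∈ Ioc (0:ℝ) 1) :
    fL n t = ((lam n * max (1 / t - n) 0 : ℝ) : ℂ) := indicator_of_mem h _

lemma lam_zero : lam 0 = 0 := by simp [lam]

lemma fL_cont (n : ℕ) : ContinuousOn (fL n) (Ioo 0 1) := by
  have : ContinuousOn (fun t : ℝ => ((lam n * max (1 / t - n) 0 : ℝ) : ℂ)) (Ioo 0 1) := by
    refine continuous_ofReal.comp_continuousOn (continuousOn_const.mul ?_)
    refine ContinuousOn.sup ?_ continuousOn_const
    refine ContinuousOn.sub ?_ continuousOn_const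
    exact continuousOn_const.div continuousOn_id (fun t ht => ht.1.ne')
  exact this.congr (fun t ht => fL_in ⟨ht.1, ht.2.le⟩)

lemma fL_eq {n : ℕ} (hn : 0 < n) (t : ℝ) :
    fL n t = ((lam n * n : ℝ) : ℂ) * (pw 1 (n * t) - pw 0 (n * t)) := by
  have hn' : (0:ℝ) < n := by exact_mod_cast hn
  have hn1 : (1:ℝ) ≤ n := by exact_mod_cast hn
  by_cases h : t ∈ Ioc (0:ℝ) 1
  · rw [fL_in h]
    by_cases h2 : n * t ≤ 1
    · have h3 : (n:ℝ) * t ∈ Ioc (0:ℝ) 1 := ⟨_root_.mul_pos hn' h.1, h2⟩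
      have h4 : (n:ℝ) ≤ 1 / t := by rw [le_div_iff₀ h.1]; exact h2
      rw [pw_in h3, pw_in h3, max_eq_left (by linarith), neg_zero, cpow_zero, cpow_neg_one]
      have ht : (t:ℂ) ≠ 0 := by exact_mod_cast h.1.ne'
      have hnc : (n:ℂ) ≠ 0 := by exact_mod_cast hn.ne'
      push_cast
      field_simp
    · have h3 : (n:ℝ) * t ∉ Ioc (0:ℝ) 1 := fun h' => h2 h'.2
      have h4 : 1 / t ≤ n := by rw [div_le_iff₀ h.1]; linarith
      rw [pw_out h3, pw_out h3, max_eq_right (by linarith)]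
      simp
  · have h3 : (n:ℝ) * t ∉ Ioc (0:ℝ) 1 := by
      intro h'
      have h0 : 0 < t := (mul_pos_iff_of_pos_left hn').1 h'.1
      exact h ⟨h0, by nlinarith [h'.2]⟩
    rw [fL_out h, pw_out h3, pw_out h3]; simp

lemma HM_comp {f : ℝ → ℂ} {s m : ℂ} (hf : HasMellin f s m) {a : ℝ} (ha : 0 < a) :
    HasMellin (fun t => f (a * t)) s ((a:ℂ) ^ (-s) * m) :=
  ⟨(MellinConvergent.comp_mul_left ha).2 hf.1, by rw [mellin_comp_mul_left f s ha, hf.2]; rfl⟩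

lemma fL_hasMellin (n : ℕ) {s : ℂ} (hs : s.re = 3) :
    HasMellin (fL n) s (LSeries.term (fun n => (ArithmeticFunction.vonMangoldt n : ℂ)) (s - 1) n *
      (1 / ((s - 1) * s))) := by
  have hs0 : s ≠ 0 := by rintro rfl; simp at hs
  have hs1 : s - 1 ≠ 0 := by
    intro h
    have := congrArg re h
    rw [sub_re, hs] at this; norm_num at this
  rcases Nat.eq_zero_or_pos n with rfl | hn
  · have : fL 0 = fun t => 0 * pw 0 t := by
      funext t
      unfold fL
      simp [lam_zero]
    rw [this]
    have h := HM_mul (pw_hasMellin (ω := 0) (s := s) (by rw [zero_re, hs]; norm_num)) 0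
    simpa using h
  · have hn' : (0:ℝ) < n := by exact_mod_cast hn
    have hnc : (n:ℂ) ≠ 0 := by exact_mod_cast hn.ne'
    have h1 := HM_sub (pw_hasMellin (ω := 1) (s := s) (by rw [one_re, hs]; norm_num))
      (pw_hasMellin (ω := 0) (s := s) (by rw [zero_re, hs]; norm_num))
    have h2 := HM_mul (HM_comp h1 hn') ((lam n * n : ℝ) : ℂ)
    have e : fL n = fun t => ((lam n * n : ℝ) : ℂ) * (pw 1 (n * t) - pw 0 (n * t)) := by
      funext t; exact fL_eq hn t
    rw [e]
    convert h2 using 1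
    rw [LSeries.term_of_ne_zero hn.ne', cpow_sub _ _ hnc, cpow_one, cpow_neg]
    unfold lam
    push_cast
    have : (n:ℂ) ^ s ≠ 0 := by simp [cpow_eq_zero_iff, hnc]
    field_simp
    ring

lemma lam_summable : Summable (fun n : ℕ => lam n * (n:ℝ) ^ (-(3/2) : ℝ)) := by
  have h := Zr_hasSum (σ := 3/2) (by norm_num) 0
  have := h.summable
  simpa using this

lemma fL_bound (n : ℕ) {t : ℝ} (h0 : 0 < t) (h1 : t ≤ 1) :
    ‖fL n t‖ ≤ lam n * (n:ℝ) ^ (-(3/2) : ℝ) * t ^ (-(5/2) : ℝ) := by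
  rcases Nat.eq_zero_or_pos n with rfl | hn
  · unfold fL
    simp [lam_zero]
  rw [fL_in ⟨h0, h1⟩, norm_real, Real.norm_of_nonneg
    (mul_nonneg (lam_nonneg n) (le_max_right _ _)), mul_assoc]
  refine mul_le_mul_of_nonneg_left ?_ (lam_nonneg n)
  have hp : 0 ≤ (n:ℝ) ^ (-(3/2) : ℝ) * t ^ (-(5/2) : ℝ) := by positivity
  refine max_le ?_ hp
  rcases le_or_gt (1 / t) n with h | h
  · linarith
  have hn' : (0:ℝ) < n := by exact_mod_cast hn
  have hnt : n * t ≤ 1 := by rw [lt_div_iff₀ h0] at h; exact h.le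
  have e : (n:ℝ) ^ (-(3/2) : ℝ) * t ^ (-(5/2) : ℝ) = (n * t) ^ (-(3/2) : ℝ) * (1 / t) := by
    rw [Real.mul_rpow hn'.le h0.le, mul_assoc, one_div, ← Real.rpow_neg_one t, ← Real.rpow_add h0]
    norm_num
  have h2 : 1 ≤ (n * t) ^ (-(3/2) : ℝ) := 
    Real.one_le_rpow_of_pos_of_le_one_of_nonpos (by positivity) hnt (by norm_num)
  have h3 : 0 < 1 / t := by positivity
  rw [e]
  nlinarith

end PsiEps


namespace PsiEps
open Complex Filter Topology MeasureTheory Set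
open scoped ComplexConjugate Nat Real

def Zs : Set ℂ := {a : ℂ | xi a = 0}

instance : Countable Zs := by
  have : Zs ⊆ ⋃ n : ℕ, (ZR n : Set ℂ) := by
    intro a ha
    obtain ⟨n, hn⟩ := exists_nat_ge ‖a‖
    refine mem_iUnion.2 ⟨n, ?_⟩
    exact mem_ZR.2 ⟨ha, hn⟩
  exact (countable_iUnion (fun n : ℕ => (ZR n).finite_toSet.countable)).mono this

lemma tsum_Zs (g : ℂ → ℂ) : ∑' a : Zs, (mul (a:ℂ) : ℂ) * g a = ∑' a, (mul a : ℂ) * g a := by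
  refine tsum_subtype_eq_of_support_subset (f := fun a : ℂ => (mul a : ℂ) * g a) ?_
  intro a ha
  by_contra h
  apply ha
  have : mul a = 0 := mul_eq_zero h
  simp [this]

lemma norm_prod_ge {a : ℂ} (ha : xi a = 0) : ‖a‖ ^ 2 ≤ ‖a * (a + 1)‖ := by
  have h := (xi_zero_re ha).1
  have : ‖a‖ ≤ ‖a + 1‖ := by
    rw [← sq_le_sq₀ (norm_nonneg _) (norm_nonneg _), ← normSq_eq_norm_sq, ← normSq_eq_norm_sq,
      normSq_apply, normSq_apply, add_re, add_im, one_re, one_im]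
    nlinarith
  rw [norm_mul, sq]
  gcongr

lemma xi_ne0 {a : ℂ} (ha : xi a = 0) : a ≠ 0 := by rintro rfl; exact xi_zero_ne ha

lemma xi_ne1 {a : ℂ} (ha : xi a = 0) : a + 1 ≠ 0 := by
  intro h
  have := congrArg re h
  have h2 := (xi_zero_re ha).1
  rw [add_re, one_re, zero_re] at this
  linarith

lemma summable_cz (K : ℝ) : Summable (fun a : ℂ => (mul a : ℝ) * (K / ‖a * (a + 1)‖)) := by
  refine summable_of_le 0 |K| ?_
  intro a ha _
  have h1 : 0 < ‖a‖ := norm_pos_iff.2 (xi_ne0 ha)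
  rw [abs_div, abs_norm]
  have := norm_prod_ge ha
  gcongr

noncomputable def om (j : ℕ) : ℂ := -(2 * ((j:ℂ) + 1))

lemma om_re (j : ℕ) : (om j).re = -(2 * ((j:ℝ) + 1)) := by simp [om]

lemma om_norm (j : ℕ) : ((j:ℝ) + 1) ^ 2 ≤ ‖om j * (om j + 1)‖ := by
  have : om j * (om j + 1) = ((2 * ((j:ℝ) + 1) * (2 * j + 1) : ℝ) : ℂ) := by
    unfold om; push_cast; ring
  rw [this, norm_real, Real.norm_of_nonneg (by positivity)]
  have : (0:ℝ) ≤ j := Nat.cast_nonneg j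
  nlinarith

lemma summable_om (K : ℝ) (hK : 0 ≤ K) : Summable (fun j : ℕ => K / ‖om j * (om j + 1)‖) := by
  have h : Summable (fun j : ℕ => K * (1 / ((j:ℝ) + 1) ^ 2)) := by
    have := (summable_nat_add_iff (f := fun n : ℕ => 1 / (n:ℝ) ^ 2) 1).2
      (Real.summable_one_div_nat_pow.2 (by norm_num))
    refine Summable.mul_left K (this.congr ?_)
    intro j; push_cast; rfl
  refine Summable.of_nonneg_of_le (fun j => by positivity) (fun j => ?_) h
  have := om_norm j
  rw [mul_one_div]
  have : (0:ℝ) < ((j:ℝ) + 1) ^ 2 := by positivity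
  gcongr

noncomputable def CC : ℂ := -(Real.log π : ℂ) / 2 + digamma 1 / 2 - logDeriv xi 0

noncomputable def fP (t : ℝ) : ℂ := (1/2 * pw 2 t - pw 1 t + 1/2 * pw 0 t) + CC * (pw 1 t - pw 0 t)

noncomputable def DD (t : ℝ) : ℂ := (∑' n, fL n t) - fP t + (∑' a : Zs, (mul (a:ℂ) : ℂ) * bl a t) +
  ∑' j, bl (om j) t

lemma fZ_bound (a : Zs) (t : ℝ) (h0 : 0 < t) (h1 : t ≤ 1) :
    ‖(mul (a:ℂ) : ℂ) * bl a t‖ ≤ (mul (a:ℂ) : ℝ) * (2 / ‖(a:ℂ) * (a + 1)‖) * t ^ (-(5/2) : ℝ) := by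
  rw [norm_mul, norm_natCast, mul_assoc]
  exact mul_le_mul_of_nonneg_left (bl_bound (xi_zero_re a.2).2.le h0 h1) (Nat.cast_nonneg _)

lemma fT_bound (j : ℕ) (t : ℝ) (h0 : 0 < t) (h1 : t ≤ 1) :
    ‖bl (om j) t‖ ≤ 2 / ‖om j * (om j + 1)‖ * t ^ (-(5/2) : ℝ) :=
  bl_bound (by rw [om_re]; linarith [Nat.cast_nonneg (α := ℝ) j]) h0 h1

lemma DD_cont : ContinuousOn DD (Ioo 0 1) := by
  have h1 := fam_continuousOn lam_summable (f := fL) (fun n t h0 h1 => fL_bound n h0 h1) fL_cont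
  have h2 := fam_continuousOn ((summable_cz 2).subtype Zs) (f := fun (a : Zs) t => (mul (a:ℂ) : ℂ) * bl a t)
    fZ_bound (fun a => continuousOn_const.mul (bl_cont _))
  have h3 := fam_continuousOn (summable_om 2 (by norm_num)) (f := fun j t => bl (om j) t) fT_bound
    (fun j => bl_cont _)
  have h4 : ContinuousOn fP (Ioo 0 1) :=
    (((continuousOn_const.mul (pw_cont 2)).sub (pw_cont 1)).add (continuousOn_const.mul (pw_cont 0))).add
      (continuousOn_const.mul ((pw_cont 1).sub (pw_cont 0)))
  exact ((h1.sub h4).add h2).add h3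

lemma digamma_diff {w : ℂ} (hw : 0 < w.re) : digamma (w / 2 + 1) / 2 - digamma 1 / 2 =
    -∑' j, (1 / (w - om j) + 1 / om j) := by
  have hz : 0 < (w / 2 + 1).re := by
    rw [add_re, one_re]
    have : (w / 2).re = w.re / 2 := by simp
    rw [this]; linarith
  have hn : ∀ x : ℝ, 0 ≤ x → w + x ≠ 0 := by
    intro x hx h
    have := congrArg re h
    rw [add_re, ofReal_re, zero_re] at this
    linarith
  have s1 := summable_uu' hz
  have s2 := summable_uu' (z := 1) (by simp)
  have key : ∀ k : ℕ, 1 / (w - om (k + 1)) + 1 / om (k + 1) = -((uu' k (w / 2 + 1) - uu' k 1) / 2) := by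
    intro k
    unfold om uu'
    have e1 := hn (2 * k + 4) (by positivity)
    have e2 : ((k:ℂ) + 2) ≠ 0 := by
      have : (k:ℝ) + 2 ≠ 0 := by positivity
      exact_mod_cast this
    push_cast at e1 ⊢
    have r1 : w - -(2 * ((k:ℂ) + 1 + 1)) = w + (2 * k + 4) := by ring
    have r2 : (k:ℂ) + 1 + (w / 2 + 1) = (w + (2 * k + 4)) / 2 := by ring
    have r3 : (k:ℂ) + 1 + 1 = k + 2 := by ring
    rw [r1, r2, r3]
    field_simp
    ring
  have hs : Summable (fun j => 1 / (w - om j) + 1 / om j) := by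
    rw [← summable_nat_add_iff 1]
    exact (((s1.sub s2).div_const 2).neg).congr (fun k => (key k).symm)
  rw [hs.tsum_eq_zero_add, tsum_congr key, tsum_neg, tsum_div_const, s1.tsum_sub s2,
    digamma_series hz, digamma_series (z := 1) (by simp)]
  unfold om
  have e1 := hn 2 (by norm_num)
  push_cast at e1 ⊢
  have r1 : w - -(2 * (0 + 1)) = w + 2 := by ring
  have r2 : w / 2 + 1 = (w + 2) / 2 := by ring
  rw [r1, r2]
  generalize ∑' k, uu' k ((w + 2) / 2) = A
  generalize ∑' k, uu' k 1 = B
  field_simp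
  ring

lemma pf_id {s ω : ℂ} (h1 : ω ≠ 0) (h2 : ω + 1 ≠ 0) (h3 : s ≠ 0) (h4 : s - 1 ≠ 0)
    (h5 : s - 1 - ω ≠ 0) : 1 / (ω * (ω + 1)) * (1 / (s - (ω + 1)) - 1 / (s - 0)) =
    (1 / (s - 1 - ω) + 1 / ω) * (1 / ((s - 1) * s)) := by
  have e : s - (ω + 1) = s - 1 - ω := by ring
  rw [e, sub_zero]
  field_simp
  ring

lemma DD_mellin {s : ℂ} (hs : s.re = 3) : HasMellin DD s 0 := by
  have hw : (s - 1).re = 2 := by rw [sub_re, hs, one_re]; norm_num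
  have hs0 : s ≠ 0 := by rintro rfl; simp at hs
  have hne : ∀ ω : ℂ, ω.re < 2 → s - 1 - ω ≠ 0 := by
    intro ω h h'
    have := congrArg re h'
    rw [sub_re, hw, zero_re] at this
    linarith
  have hs1 : s - 1 ≠ 0 := by simpa using hne 0 (by simp)
  have hs2 : s - 2 ≠ 0 := by
    have := hne 1 (by simp)
    intro h; apply this; rw [← h]; ring
  have h1 := fam_hasMellin lam_summable (f := fL) (fun n t h0 h1 => fL_bound n h0 h1)
    (fun n t h => fL_out h) fL_cont hs (fun n => fL_hasMellin n hs)
  have h2 := fam_hasMellin ((summable_cz 2).subtype Zs)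
    (f := fun (a : Zs) t => (mul (a:ℂ) : ℂ) * bl a t)
    fZ_bound (fun a t h => by rw [bl_out h, mul_zero]) (fun a => continuousOn_const.mul (bl_cont _)) hs
    (fun a => HM_mul (bl_hasMellin (by linarith [(xi_zero_re a.2).2]) hs) _)
  have h3 := fam_hasMellin (summable_om 2 (by norm_num)) (f := fun j t => bl (om j) t) fT_bound
    (fun j t h => bl_out h) (fun j => bl_cont _) hs
    (fun j => bl_hasMellin (by rw [om_re]; linarith [Nat.cast_nonneg (α := ℝ) j]) hs)
  have p : ∀ ω : ℂ, ω.re < 3 → HasMellin (pw ω) s (1 / (s - ω)) := fun ω h =>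
    pw_hasMellin (by rw [hs]; exact h)
  have p0 := p 0 (by simp)
  have p1 := p 1 (by simp)
  have p2 := p 2 (by norm_num)
  have h4 := HM_add (HM_add (HM_sub (HM_mul p2 (1/2)) p1) (HM_mul p0 (1/2))) (HM_mul (HM_sub p1 p0) CC)
  have h := HM_add (HM_add (HM_sub h1 h4) h2) h3
  have e1 : ∑' n, LSeries.term (fun n => (ArithmeticFunction.vonMangoldt n : ℂ)) (s - 1) n *
      (1 / ((s - 1) * s)) = (1 / (s - 1 - 1) - (Real.log π : ℂ) / 2 +
      digamma ((s - 1) / 2 + 1) / 2 - logDeriv xi (s - 1)) * (1 / ((s - 1) * s)) := by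
    rw [tsum_mul_right, ← neg_logDeriv_zeta (by rw [hw]; norm_num),
      ← ArithmeticFunction.LSeries_vonMangoldt_eq_deriv_riemannZeta_div (by rw [hw]; norm_num)]
    rfl
  have e2 : ∑' a : Zs, (mul (a:ℂ) : ℂ) * (1 / ((a:ℂ) * (a + 1)) * (1 / (s - (a + 1)) - 1 / (s - 0))) =
      (logDeriv xi (s - 1) - logDeriv xi 0) * (1 / ((s - 1) * s)) := by
    rw [logDeriv_xi (z := s - 1) (xi_ne_zero_of_one_le_re (by rw [hw]; norm_num)), add_sub_cancel_left,
      ← tsum_Zs, ← tsum_mul_right]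
    apply tsum_congr
    intro a
    rw [pf_id (xi_ne0 a.2) (xi_ne1 a.2) hs0 hs1 (hne _ (by linarith [(xi_zero_re a.2).2]))]
    ring
  have e3 : ∑' j, (1 / (om j * (om j + 1)) * (1 / (s - (om j + 1)) - 1 / (s - 0))) =
      -(digamma ((s - 1) / 2 + 1) / 2 - digamma 1 / 2) * (1 / ((s - 1) * s)) := by
    rw [digamma_diff (by rw [hw]; norm_num), neg_neg, ← tsum_mul_right]
    apply tsum_congr
    intro j
    have hj : (0:ℝ) ≤ j := Nat.cast_nonneg j
    have n1 : om j ≠ 0 := by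
      intro h; have := congrArg re h; rw [om_re, zero_re] at this; linarith
    have n2 : om j + 1 ≠ 0 := by
      intro h; have := congrArg re h; rw [add_re, one_re, om_re, zero_re] at this; linarith
    exact pf_id n1 n2 hs0 hs1 (hne _ (by rw [om_re]; linarith))
  rw [e1, e2, e3] at h
  convert h using 1
  · rfl
  unfold CC
  rw [show s - 1 - 1 = s - 2 by ring, sub_zero]
  generalize digamma ((s - 1) / 2 + 1) = d1
  generalize digamma 1 = d2
  generalize logDeriv xi (s - 1) = l1
  generalize logDeriv xi 0 = l2
  generalize (Real.log π : ℂ) = l3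
  field_simp
  ring

lemma DD_zero {t : ℝ} (h0 : 0 < t) (h1 : t < 1) : DD t = 0 := by
  have hm : ∀ y : ℝ, mellin DD ((3:ℝ) + y * I) = 0 := by
    intro y
    exact (DD_mellin (by simp)).2
  have h := mellinInv_mellin_eq 3 DD h0 (DD_mellin (by simp)).1
    (by
      unfold VerticalIntegrable
      simp only [hm]
      exact integrable_zero _ _ _)
    (DD_cont.continuousAt (Ioo_mem_nhds h0 h1))
  rw [← h]
  unfold mellinInv
  simp only [hm]
  simp

end PsiEps


namespace PsiEps
open Complex Filter Topology MeasureTheory Set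
open scoped ComplexConjugate Nat Real

noncomputable def psi1 (x : ℝ) : ℝ := ∑' n, lam n * max (x - n) 0

/-- the normalized power attached to a zero -/
noncomputable def qw (ω : ℂ) (x : ℝ) : ℂ := 1 / (ω * (ω + 1)) * (x:ℂ) ^ (ω + 1)

lemma pw_inv (ω : ℂ) {x : ℝ} (hx : 1 < x) : pw ω (1 / x) = (x:ℂ) ^ ω := by
  have h0 : 0 < x := by linarith
  have hm : 1 / x ∈ Ioc (0:ℝ) 1 := ⟨by positivity, by rw [div_le_one h0]; exact hx.le⟩
  rw [pw_in hm, one_div, ofReal_inv, inv_cpow, cpow_neg, inv_inv]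
  rw [arg_ofReal_of_nonneg h0.le]
  exact Real.pi_pos.ne

lemma bl_inv (ω : ℂ) {x : ℝ} (hx : 1 < x) : bl ω (1 / x) = qw ω x - 1 / (ω * (ω + 1)) := by
  unfold bl qw
  rw [pw_inv _ hx, pw_inv _ hx, cpow_zero]; ring

lemma norm_qw_om (j : ℕ) {x : ℝ} (hx : 1 < x) : ‖qw (om j) x‖ ≤ 1 / ‖om j * (om j + 1)‖ := by
  unfold qw
  rw [norm_mul, norm_div, norm_one, norm_cpow_eq_rpow_re_of_pos (by linarith), add_re, om_re, one_re]
  have : x ^ (-(2 * ((j:ℝ) + 1)) + 1) ≤ 1 :=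
    Real.rpow_le_one_of_one_le_of_nonpos hx.le (by linarith [Nat.cast_nonneg (α := ℝ) j])
  exact mul_le_of_le_one_right (by positivity) this

lemma norm_qw_z {a : ℂ} (ha : xi a = 0) {x : ℝ} (hx : 1 < x) :
    ‖qw a x‖ ≤ x ^ 2 / ‖a * (a + 1)‖ := by
  unfold qw
  rw [norm_mul, norm_div, norm_one, norm_cpow_eq_rpow_re_of_pos (by linarith), add_re, one_re]
  have : x ^ (a.re + 1) ≤ x ^ (2:ℝ) :=
    Real.rpow_le_rpow_of_exponent_le hx.le (by linarith [(xi_zero_re ha).2])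
  rw [Real.rpow_two] at this
  rw [one_div_mul_eq_div]
  gcongr

lemma formula {x : ℝ} (hx : 1 < x) : (psi1 x : ℂ) = (1/2 * x ^ 2 - x + 1/2) + CC * (x - 1) -
    (∑' a : Zs, (mul (a:ℂ) : ℂ) * bl a (1 / x)) - ∑' j, bl (om j) (1 / x) := by
  have h0 : 0 < x := by linarith
  have hm : 1 / x ∈ Ioc (0:ℝ) 1 := ⟨by positivity, by rw [div_le_one h0]; exact hx.le⟩
  have h := DD_zero (t := 1 / x) hm.1 (by rw [div_lt_one h0]; exact hx)
  unfold DD fP at h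
  have e : ∑' n, fL n (1 / x) = (psi1 x : ℂ) := by
    unfold psi1
    rw [ofReal_tsum]
    apply tsum_congr
    intro n
    rw [fL_in hm, one_div_one_div]
  rw [e, pw_inv _ hx, pw_inv _ hx, pw_inv _ hx, cpow_zero, cpow_one, cpow_ofNat] at h
  linear_combination h

lemma summable_blz {x : ℝ} (hx : 1 < x) : Summable (fun a : Zs => (mul (a:ℂ) : ℂ) * bl a (1 / x)) := by
  have h0 : 0 < x := by linarith
  exact Summable.of_norm_bounded (((summable_cz 2).subtype Zs).mul_right _)
    (fun a => fZ_bound a (1 / x) (by positivity) (by rw [div_le_one h0]; exact hx.le))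

lemma summable_blt {x : ℝ} (hx : 1 < x) : Summable (fun j => bl (om j) (1 / x)) := by
  have h0 : 0 < x := by linarith
  exact Summable.of_norm_bounded ((summable_om 2 (by norm_num)).mul_right _)
    (fun j => fT_bound j (1 / x) (by positivity) (by rw [div_le_one h0]; exact hx.le))

lemma sum_om : ∑' j, 2 / ‖om j * (om j + 1)‖ ≤ 4 := by
  have h1 : ∑' j, 2 / ‖om j * (om j + 1)‖ ≤ ∑' j : ℕ, 2 * (1 / ((j:ℝ) + 1) ^ 2) := by
    refine (summable_om 2 (by norm_num)).tsum_le_tsum (fun j => ?_) (summable_sq_inv.mul_left 2)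
    have := om_norm j
    rw [mul_one_div]
    gcongr
  refine h1.trans ?_
  rw [tsum_mul_left]
  have h2 := hasSum_zeta_two
  have h3 := h2.summable.tsum_eq_zero_add
  rw [h2.tsum_eq] at h3
  have h4 : ∑' j : ℕ, 1 / ((j:ℝ) + 1) ^ 2 = π ^ 2 / 6 := by
    rw [h3]; simp
  rw [h4]
  have := Real.pi_lt_d2
  have := Real.pi_pos
  nlinarith

lemma sum_S0 : ∑' a : Zs, (mul (a:ℂ) : ℝ) * (1 / ‖(a:ℂ) * (a + 1)‖) ≤ 46 := by
  refine Real.tsum_le_of_sum_le (fun a => by positivity) ?_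
  intro S
  have h1 : ∀ a ∈ S, (mul (a:ℂ) : ℝ) * (1 / ‖(a:ℂ) * (a + 1)‖) ≤ 36 * ((mul (a:ℂ) : ℝ) * ker 60 a) := by
    intro a _
    have ha : xi (a:ℂ) = 0 := a.2
    have h13 := no_low_zero ha
    have hn := norm_prod_ge ha
    have him : (a:ℂ).im ^ 2 ≤ ‖(a:ℂ)‖ ^ 2 := by
      rw [← sq_abs (a:ℂ).im]
      have := abs_im_le_norm (a:ℂ)
      gcongr
    have hg : (1.69:ℝ) ≤ (a:ℂ).im ^ 2 := by
      rw [← sq_abs (a:ℂ).im]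
      generalize |(a:ℂ).im| = g at *
      norm_num at *
      nlinarith
    have : 1 / ‖(a:ℂ) * (a + 1)‖ ≤ 36 * ker 60 a := by
      have hle : (a:ℂ).im ^ 2 ≤ ‖(a:ℂ) * (a + 1)‖ := him.trans hn
      unfold ker
      generalize (a:ℂ).im ^ 2 = g at *
      have hg0 : 0 < g := lt_of_lt_of_le (by norm_num) hg
      calc _ ≤ 1 / g := by gcongr
        _ ≤ _ := by
          rw [mul_div_assoc', div_le_div_iff₀ hg0 (by positivity)]
          norm_num at *
          linarith
    calc _ ≤ (mul (a:ℂ) : ℝ) * (36 * ker 60 a) := by gcongr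
      _ = _ := by ring
  refine (Finset.sum_le_sum h1).trans ?_
  rw [← Finset.mul_sum]
  have h2 := sum_ker_60 (S.map (Function.Embedding.subtype _))
  rw [Finset.sum_map] at h2
  simp only [Function.Embedding.subtype_apply] at h2
  norm_num at *
  linarith

lemma psi1_eq {x : ℝ} {N : ℕ} (hN : x ≤ N) : psi1 x = ∑ n ∈ Finset.range N, lam n * max (x - n) 0 := by
  unfold psi1
  apply tsum_eq_sum
  intro n hn
  rw [Finset.mem_range, not_lt] at hn
  have : (N:ℝ) ≤ n := by exact_mod_cast hn
  rw [max_eq_right (by linarith), mul_zero]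

lemma psi1_two : psi1 2 = 0 := by
  rw [psi1_eq (N := 2) (by norm_num)]
  simp [Finset.sum_range_succ, lam]

lemma CC_bound : ‖CC‖ ≤ 300 := by
  have h := formula (x := 2) (by norm_num)
  rw [psi1_two] at h
  have e : CC = (∑' a : Zs, (mul (a:ℂ) : ℂ) * bl a (1 / 2)) + (∑' j, bl (om j) (1 / 2)) - 1 / 2 := by
    push_cast at h
    linear_combination -h
  have hz : ‖∑' a : Zs, (mul (a:ℂ) : ℂ) * bl a (1 / 2)‖ ≤ 5 * 46 := by
    have hs : Summable (fun a : Zs => 5 * ((mul (a:ℂ) : ℝ) * (1 / ‖(a:ℂ) * (a + 1)‖))) :=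
      ((summable_cz 1).subtype Zs).mul_left 5
    refine (tsum_of_norm_bounded hs.hasSum ?_).trans ?_
    · intro a
      have h1 := norm_qw_z a.2 (x := 2) (by norm_num)
      rw [bl_inv _ (by norm_num), norm_mul, Complex.norm_natCast]
      have h2 := norm_sub_le (qw a 2) (1 / ((a:ℂ) * (a + 1)))
      rw [norm_div, norm_one] at h2
      have h3 : (2:ℝ) ^ 2 / ‖(a:ℂ) * (a + 1)‖ = 4 * (1 / ‖(a:ℂ) * (a + 1)‖) := by ring
      calc _ ≤ (mul (a:ℂ) : ℝ) * (5 * (1 / ‖(a:ℂ) * (a + 1)‖)) := by gcongr; linarith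
        _ = _ := by ring
    · rw [tsum_mul_left]
      linarith [sum_S0]
  have ht : ‖∑' j, bl (om j) (1 / 2)‖ ≤ 4 := by
    refine (tsum_of_norm_bounded (summable_om 2 (by norm_num)).hasSum ?_).trans sum_om
    intro j
    have h1 := norm_qw_om j (x := 2) (by norm_num)
    rw [bl_inv _ (by norm_num)]
    have h2 := norm_sub_le (qw (om j) 2) (1 / (om j * (om j + 1)))
    rw [norm_div, norm_one] at h2
    have h3 : 2 / ‖om j * (om j + 1)‖ = 1 / ‖om j * (om j + 1)‖ + 1 / ‖om j * (om j + 1)‖ := by ring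
    linarith
  rw [e]
  have h1 := norm_sub_le ((∑' a : Zs, (mul (a:ℂ) : ℂ) * bl a (1 / 2)) + (∑' j, bl (om j) (1 / 2))) (1/2)
  have h2 := norm_add_le (∑' a : Zs, (mul (a:ℂ) : ℂ) * bl a (1 / 2)) (∑' j, bl (om j) (1 / 2))
  have h3 : ‖(1/2 : ℂ)‖ = 1/2 := by simp
  linarith

lemma diff_bound {x y B : ℝ} (hx : 1 < x) (hxy : x ≤ y)
    (hB : ∀ S : Finset Zs, ∑ a ∈ S, (mul (a:ℂ) : ℝ) * ‖qw a y - qw a x‖ ≤ B) :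
    |psi1 y - psi1 x - (y ^ 2 - x ^ 2) / 2| ≤ 301 * (y - x) + B + 4 := by
  have hy : 1 < y := by linarith
  have fx := formula hx
  have fy := formula hy
  have hz : ‖(∑' a : Zs, (mul (a:ℂ) : ℂ) * bl a (1 / y)) - ∑' a : Zs, (mul (a:ℂ) : ℂ) * bl a (1 / x)‖
      ≤ B := by
    rw [← (summable_blz hy).tsum_sub (summable_blz hx)]
    have e : ∀ a : Zs, (mul (a:ℂ) : ℂ) * bl a (1 / y) - (mul (a:ℂ) : ℂ) * bl a (1 / x) =
        (mul (a:ℂ) : ℂ) * (qw a y - qw a x) := by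
      intro a
      rw [bl_inv _ hx, bl_inv _ hy]; ring
    simp only [e]
    have en : ∀ a : Zs, ‖(mul (a:ℂ) : ℂ) * (qw a y - qw a x)‖ = (mul (a:ℂ) : ℝ) * ‖qw a y - qw a x‖ := by
      intro a
      rw [norm_mul, Complex.norm_natCast]
    have hs : Summable (fun a : Zs => (mul (a:ℂ) : ℝ) * ‖qw a y - qw a x‖) :=
      summable_of_sum_le (fun a => by positivity) hB
    refine (tsum_of_norm_bounded hs.hasSum (fun a => (en a).le)).trans ?_
    exact Real.tsum_le_of_sum_le (fun a => by positivity) hB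
  have ht : ‖(∑' j, bl (om j) (1 / y)) - ∑' j, bl (om j) (1 / x)‖ ≤ 4 := by
    rw [← (summable_blt hy).tsum_sub (summable_blt hx)]
    refine (tsum_of_norm_bounded (summable_om 2 (by norm_num)).hasSum ?_).trans sum_om
    intro j
    have h1 := norm_qw_om j hx
    have h1' := norm_qw_om j hy
    rw [bl_inv _ hx, bl_inv _ hy, sub_sub_sub_cancel_right]
    have h2 := norm_sub_le (qw (om j) y) (qw (om j) x)
    have h3 : 2 / ‖om j * (om j + 1)‖ = 1 / ‖om j * (om j + 1)‖ + 1 / ‖om j * (om j + 1)‖ := by ring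
    linarith
  have hc : ‖CC - 1‖ ≤ 301 := by
    have := norm_sub_le CC 1
    have := CC_bound
    rw [norm_one] at *
    linarith
  set A := ∑' a : Zs, (mul (a:ℂ) : ℂ) * bl a (1 / y)
  set A' := ∑' a : Zs, (mul (a:ℂ) : ℂ) * bl a (1 / x)
  set T := ∑' j, bl (om j) (1 / y)
  set T' := ∑' j, bl (om j) (1 / x)
  have e : ((psi1 y - psi1 x - (y ^ 2 - x ^ 2) / 2 : ℝ) : ℂ) =
      (CC - 1) * ((y - x : ℝ) : ℂ) - (A - A') - (T - T') := by
    push_cast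
    linear_combination fy - fx
  rw [← Real.norm_eq_abs, ← norm_real, e]
  have h1 := norm_sub_le ((CC - 1) * ((y - x : ℝ) : ℂ) - (A - A')) (T - T')
  have h2 := norm_sub_le ((CC - 1) * ((y - x : ℝ) : ℂ)) (A - A')
  have h3 : ‖(CC - 1) * ((y - x : ℝ) : ℂ)‖ ≤ 301 * (y - x) := by
    rw [norm_mul, norm_real, Real.norm_of_nonneg (by linarith)]
    exact mul_le_mul_of_nonneg_right hc (by linarith)
  linarith

end PsiEps


namespace PsiEps
open Complex Filter Topology MeasureTheory Set
open scoped ComplexConjugate Nat Real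

lemma exp233 : (4.1e12:ℝ) ≤ Real.exp (233/8) := by
  have h1 : Real.exp (233/8) = Real.exp 1 ^ 29 * Real.exp (1/8) := by
    rw [← Real.exp_nat_mul, ← Real.exp_add]; norm_num
  have h2 := Real.exp_one_gt_d9
  have h3 := Real.add_one_le_exp (1/8 : ℝ)
  rw [h1]
  calc (4.1e12:ℝ) ≤ 2.718 ^ 29 * (1/8 + 1) := by norm_num
    _ ≤ _ := by gcongr; norm_num at *; linarith

lemma qw_b1 {a : ℂ} (ha : xi a = 0) {x y : ℝ} (hx : 1 < x) (hxy : x ≤ y) :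
    ‖qw a y - qw a x‖ ≤ y ^ a.re / ‖a‖ * (y - x) := by
  have hre := xi_zero_re ha
  have hd : ∀ u ∈ Icc x y, HasDerivWithinAt (qw a) ((u:ℂ) ^ a / a) (Icc x y) u := by
    intro u hu
    have h1 := hasDerivAt_ofReal_cpow_const' (x := u) (by linarith [hu.1]) (r := a)
      (by intro h; rw [h] at hre; norm_num at hre)
    have h2 := h1.div_const a
    have e : qw a = fun u : ℝ => (u:ℂ) ^ (a + 1) / (a + 1) / a := by
      funext v
      unfold qw
      rw [div_div, mul_comm a]; ring
    rw [e]
    exact h2.hasDerivWithinAt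
  have := Convex.norm_image_sub_le_of_norm_hasDerivWithin_le (C := y ^ a.re / ‖a‖) hd (by
    intro u hu
    rw [norm_div, norm_cpow_eq_rpow_re_of_pos (by linarith [hu.1])]
    have := Real.rpow_le_rpow (by linarith [hu.1]) hu.2 hre.1.le
    gcongr) (convex_Icc x y) (left_mem_Icc.2 hxy) (right_mem_Icc.2 hxy)
  rwa [Real.norm_of_nonneg (by linarith)] at this

lemma norm_qw_eq (a : ℂ) {x : ℝ} (hx : 0 < x) : ‖qw a x‖ = x * x ^ a.re / ‖a * (a + 1)‖ := by
  unfold qw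
  rw [norm_mul, norm_div, norm_one, norm_cpow_eq_rpow_re_of_pos hx, add_re, one_re,
    Real.rpow_add hx, Real.rpow_one]
  ring

lemma qw_b2 {a : ℂ} (ha : xi a = 0) {x y : ℝ} (hx : 1 < x) (hxy : x ≤ y) :
    ‖qw a y - qw a x‖ ≤ 2 * (y * y ^ a.re) / ‖a * (a + 1)‖ := by
  have hre := xi_zero_re ha
  have h := norm_sub_le (qw a y) (qw a x)
  rw [norm_qw_eq a (by linarith : 0 < x), norm_qw_eq a (by linarith : 0 < y)] at h
  have h1 : x * x ^ a.re ≤ y * y ^ a.re :=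
    mul_le_mul hxy (Real.rpow_le_rpow (by linarith) hxy hre.1.le) (by positivity) (by linarith)
  have h2 : x * x ^ a.re / ‖a * (a + 1)‖ ≤ y * y ^ a.re / ‖a * (a + 1)‖ := by gcongr
  calc _ ≤ _ := h
    _ ≤ y * y ^ a.re / ‖a * (a + 1)‖ + y * y ^ a.re / ‖a * (a + 1)‖ := by linarith
    _ = _ := by ring

lemma pow_le {b X y d : ℝ} (hb0 : 0 < b) (hb1 : b < 1) (hX : Real.exp 2000 ≤ X) (hy0 : 0 < y)
    (hd : 0 ≤ d) (hy : y ≤ (1 + d) * X) :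
    y ^ b ≤ (1 + d) * X * Real.exp (-(2000 * (1 - b))) := by
  have hX0 : 0 < X := lt_of_lt_of_le (Real.exp_pos _) hX
  have hl : 2000 ≤ Real.log X := by
    rw [Real.le_log_iff_exp_le hX0]; exact hX
  have h1 : y ^ b ≤ ((1 + d) * X) ^ b := Real.rpow_le_rpow hy0.le hy hb0.le
  rw [Real.mul_rpow (by linarith) hX0.le] at h1
  have h2 : (1 + d) ^ b ≤ 1 + d := by
    have := Real.rpow_le_rpow_of_exponent_le (by linarith : 1 ≤ 1 + d) hb1.le
    rwa [Real.rpow_one] at this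
  have h3 : X ^ b ≤ X * Real.exp (-(2000 * (1 - b))) := by
    have e : X ^ b = X * Real.exp (-(Real.log X * (1 - b))) := by
      rw [Real.rpow_def_of_pos hX0]
      nth_rewrite 2 [← Real.exp_log hX0]
      rw [← Real.exp_add]
      congr 1; ring
    rw [e]
    have : 0 < 1 - b := by linarith
    gcongr
  calc _ ≤ _ := h1
    _ ≤ (1 + d) * (X * Real.exp (-(2000 * (1 - b)))) := by gcongr
    _ = _ := by ring

lemma qw_W {a : ℂ} (ha : xi a = 0) {X x y : ℝ} (hX : Real.exp 2000 ≤ X) (hx : 1 < x)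
    (hxy : y - x = 5e-13 * X) (hy : y ≤ (1 + 5e-13) * X) :
    ‖qw a y - qw a x‖ ≤ (y - x) * X * (1 + 5e-13) * W a := by
  have hX0 : 0 < X := lt_of_lt_of_le (Real.exp_pos _) hX
  have hre := xi_zero_re ha
  have hp := abs_im_pos ha
  have hh : 0 < y - x := by rw [hxy]; positivity
  have hxy' : x ≤ y := by linarith
  have hpw := pow_le hre.1 hre.2 hX (by linarith : 0 < y) (by norm_num) hy
  have b1 := qw_b1 ha hx hxy'
  have b2 := qw_b2 ha hx hxy'
  have hn1 : |a.im| ≤ ‖a‖ := abs_im_le_norm a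
  have hn2 : a.im ^ 2 ≤ ‖a * (a + 1)‖ := by
    refine le_trans ?_ (norm_prod_ge ha)
    rw [← sq_abs a.im]; gcongr
  have hi2 : 0 < a.im ^ 2 := by rw [← sq_abs a.im]; positivity
  unfold W
  set E := Real.exp (-(2000 * (1 - a.re))) with hE
  have hE0 : 0 < E := Real.exp_pos _
  rcases min_choice (1 / |a.im|) (Real.exp (233/8) / a.im ^ 2) with hm | hm
  · rw [hm]
    refine b1.trans ?_
    calc y ^ a.re / ‖a‖ * (y - x) ≤ (1 + 5e-13) * X * E / |a.im| * (y - x) := by gcongr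
      _ = _ := by ring
  · rw [hm]
    refine b2.trans ?_
    have hy0 : 0 < y := by linarith
    calc 2 * (y * y ^ a.re) / ‖a * (a + 1)‖
        ≤ 2 * (((1 + 5e-13) * X) * ((1 + 5e-13) * X * E)) / a.im ^ 2 := by gcongr
      _ = (5e-13 * X) * X * (1 + 5e-13) * (E * ((2 * (1 + 5e-13) / 5e-13) / a.im ^ 2)) := by
          field_simp
      _ ≤ (5e-13 * X) * X * (1 + 5e-13) * (E * (Real.exp (233/8) / a.im ^ 2)) := by
          have : (2 * (1 + 5e-13) / 5e-13 : ℝ) ≤ Real.exp (233/8) := le_trans (by norm_num) exp233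
          gcongr
      _ = _ := by rw [hxy]

lemma main_diff {X x y : ℝ} (hX : Real.exp 2000 ≤ X) (hx : 1 < x)
    (hxy : y - x = 5e-13 * X) (hy : y ≤ (1 + 5e-13) * X) :
    |psi1 y - psi1 x - (y ^ 2 - x ^ 2) / 2| ≤ 301 * (y - x) +
      (y - x) * X * (1 + 5e-13) * 1.2e-12 + 4 := by
  have hX0 : 0 < X := lt_of_lt_of_le (Real.exp_pos _) hX
  have hh : 0 < y - x := by rw [hxy]; positivity
  refine diff_bound hx (by linarith) ?_
  intro S
  have h1 : ∀ a ∈ S, (mul (a:ℂ) : ℝ) * ‖qw a y - qw a x‖ ≤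
      (y - x) * X * (1 + 5e-13) * ((mul (a:ℂ) : ℝ) * W a) := by
    intro a _
    calc _ ≤ (mul (a:ℂ) : ℝ) * ((y - x) * X * (1 + 5e-13) * W a) :=
          mul_le_mul_of_nonneg_left (qw_W a.2 hX hx hxy hy) (Nat.cast_nonneg _)
      _ = _ := by ring
  refine (Finset.sum_le_sum h1).trans ?_
  rw [← Finset.mul_sum]
  have h2 := final_sum (S.map (Function.Embedding.subtype _)) (by
    intro a ha
    rw [Finset.mem_map] at ha
    obtain ⟨b, _, rfl⟩ := ha
    exact b.2)
  rw [Finset.sum_map] at h2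
  simp only [Function.Embedding.subtype_apply] at h2
  have h3 : 0 ≤ (y - x) * X * (1 + 5e-13) := by positivity
  exact mul_le_mul_of_nonneg_left h2 h3

noncomputable def psi' (x : ℝ) : ℝ := ∑ n ∈ Finset.Icc 1 ⌊x⌋₊, ArithmeticFunction.vonMangoldt n

lemma psi_eq {x : ℝ} (hx : 0 ≤ x) {N : ℕ} (hN : x < N) :
    psi' x = ∑ n ∈ Finset.range N, lam n * (if (n:ℝ) ≤ x then 1 else 0) := by
  unfold psi'
  have hs : Finset.Icc 1 ⌊x⌋₊ ⊆ Finset.range N := by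
    intro n hn
    rw [Finset.mem_Icc] at hn
    rw [Finset.mem_range]
    exact lt_of_le_of_lt hn.2 ((Nat.floor_lt hx).2 hN)
  rw [← Finset.sum_subset hs]
  · apply Finset.sum_congr rfl
    intro n hn
    rw [Finset.mem_Icc] at hn
    rw [if_pos ((Nat.le_floor_iff hx).1 hn.2), mul_one]
    rfl
  · intro n _ hn
    rw [Finset.mem_Icc] at hn
    rcases Nat.eq_zero_or_pos n with rfl | h0
    · rw [lam_zero, zero_mul]
    · rw [if_neg, mul_zero]
      intro h
      exact hn ⟨h0, (Nat.le_floor_iff hx).2 h⟩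

lemma psi_upper {x h : ℝ} (hx : 0 ≤ x) (hh : 0 ≤ h) : h * psi' x ≤ psi1 (x + h) - psi1 x := by
  obtain ⟨N, hN⟩ := exists_nat_gt (x + h)
  rw [psi_eq hx (lt_of_le_of_lt (by linarith) hN), psi1_eq hN.le, psi1_eq (x := x) (N := N) (by linarith),
    ← Finset.sum_sub_distrib, Finset.mul_sum]
  apply Finset.sum_le_sum
  intro n _
  have hl := lam_nonneg n
  have : h * (if (n:ℝ) ≤ x then 1 else 0) ≤ max (x + h - n) 0 - max (x - n) 0 := by
    split_ifs with hc
    · rw [max_eq_left (by linarith), max_eq_left (by linarith)]; linarith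
    · rw [max_eq_right (a := x - n) (by linarith)]
      linarith [le_max_right (x + h - n) 0]
  calc _ = lam n * (h * (if (n:ℝ) ≤ x then 1 else 0)) := by ring
    _ ≤ lam n * (max (x + h - n) 0 - max (x - n) 0) := by gcongr
    _ = _ := by ring

lemma psi_lower {x h : ℝ} (hx : 0 ≤ x) (hh : 0 ≤ h) : psi1 x - psi1 (x - h) ≤ h * psi' x := by
  obtain ⟨N, hN⟩ := exists_nat_gt x
  rw [psi_eq hx hN, psi1_eq hN.le, psi1_eq (x := x - h) (N := N) (by linarith),
    ← Finset.sum_sub_distrib, Finset.mul_sum]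
  apply Finset.sum_le_sum
  intro n _
  have hl := lam_nonneg n
  have : max (x - n) 0 - max (x - h - n) 0 ≤ h * (if (n:ℝ) ≤ x then 1 else 0) := by
    split_ifs with hc
    · rw [max_eq_left (by linarith)]; linarith [le_max_left (x - h - n) 0]
    · rw [max_eq_right (by linarith)]
      linarith [le_max_right (x - h - n) 0]
  calc _ = lam n * (max (x - n) 0 - max (x - h - n) 0) := by ring
    _ ≤ lam n * (h * (if (n:ℝ) ≤ x then 1 else 0)) := by gcongr
    _ = _ := by ring

lemma psi_main {X : ℝ} (hX : Real.exp 2000 ≤ X) : |psi' X - X| ≤ 1.57e-12 * X := by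
  have hbig : (1e20:ℝ) ≤ X := by
    refine le_trans ?_ hX
    have h1 : Real.exp (233/8) ^ 2 ≤ Real.exp 2000 := by
      rw [← Real.exp_nat_mul]; apply Real.exp_le_exp.2; norm_num
    have h2 : (4.1e12:ℝ) ^ 2 ≤ Real.exp (233/8) ^ 2 := by
      have := exp233
      gcongr
    exact le_trans (by norm_num) (h2.trans h1)
  have hX0 : 0 < X := lt_of_lt_of_le (by norm_num) hbig
  have hh : 0 < 5e-13 * X := by positivity
  have u1 := psi_upper hX0.le hh.le
  have l1 := psi_lower hX0.le hh.le
  have u2 := main_diff (X := X) (x := X) (y := X + 5e-13 * X) hX (lt_of_lt_of_le (by norm_num) hbig)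
    (by ring) (le_of_eq (by ring))
  have l2 := main_diff (X := X) (x := X - 5e-13 * X) (y := X) hX
    (lt_of_lt_of_le (by norm_num) (by linarith : (1e20:ℝ) * (1 - 5e-13) ≤ X - 5e-13 * X))
    (by ring) (by linarith)
  have u3 := (abs_le.1 u2).2
  have l3 := (abs_le.1 l2).1
  have hsq : (1e20:ℝ) * X ≤ X ^ 2 := by nlinarith
  have c4 : (4:ℝ) ≤ 1e-20 * X ^ 2 := by nlinarith
  generalize psi1 (X + 5e-13 * X) = q1 at *
  generalize psi1 (X - 5e-13 * X) = q2 at *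
  generalize psi1 X = q0 at *
  generalize psi' X = p at *
  rw [abs_le]
  have key : 0 < 5e-13 * X := hh
  constructor
  · refine le_of_mul_le_mul_left ?_ key
    norm_num at *
    nlinarith
  · refine le_of_mul_le_mul_left ?_ key
    norm_num at *
    nlinarith

end PsiEps

theorem psi_eps_2000 (x : ℝ) (hx : Real.exp 2000 ≤ x) :
    |psi x - x| / x ≤ 1.570e-12 := by
  have h : |psi x - x| ≤ 1.57e-12 * x := PsiEps.psi_main hx
  have hx0 : 0 < x := lt_of_lt_of_le (Real.exp_pos _) hx
  rw [div_le_iff₀ hx0]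
  have e : (1.570e-12 : ℝ) = 1.57e-12 := by norm_num
  rw [e]
  exact h
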